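/- arXiv:2412.01686 — 2 statements merged into one kernel-verified Lean document; each statement's English description precedes it below -/
import Mathlib

section
/- Theorem 1 (direct linearisation of the non-commutative KP equation). Let p be a scattering function satisfying the linearised KP constraints ∂_y p = ∂_z²p − ∂_ζ²p and ∂_t p = 4(∂_z³p + ∂_ζ³p). Suppose g = g(z,ζ;x,y,t) is a smooth ℂ^{m×m}-valued function, with all partial derivatives bounded, absolutely integrable over (-∞,0] in z and in ζ, and tending to 0 as z → −∞ or ζ → −∞, which solves the Gelfand–Levitan–Marchenko equation and its mirror version for all z, ζ ∈ (-∞,0] and x, y, t ∈ ℝ: p(z+x, ζ+x; y,t) = g(z,ζ;x,y,t) − ∫_{-∞}^0 g(z,ξ;x,y,t)·p(ξ+x, ζ+x; y,t) dξ, and p(z+x, ζ+x; y,t) = g(z,ζ;x,y,t) − ∫_{-∞}^0 p(z+x, ξ+x; y,t)·g(ξ,ζ;x,y,t) dξ. Assume also that u(x,y,t) := g(0,0;x,y,t) and all its partial derivatives tend to 0 as x → −∞ and are absolutely integrable in x over half-lines. Then u satisfies the non-commutative potential Kadomtsev–Petviashvili equation: for all x, y, t ∈ ℝ, ∫_{-∞}^x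 ∂_y²u(x̃,y,t) dx̃ = (1/3)(∂_t u − ∂_x³ u)(x,y,t) + 2(∂_x u(x,y,t))² + 2∫_{-∞}^x ((∂_y u)(∂_x u) − (∂_x u)(∂_y u))(x̃,y,t) dx̃, i.e. D u_y = (1/3)(u_t − u_{xxx}) + 2u_x² + 2∂_x^{-1}[u_y, u_x] with D = ∂_x^{-1}∂_y. -/
open MeasureTheory Filter

namespace NCKP

/-- `m × m` complex matrices. -/
abbrev Mat (m : ℕ) := Matrix (Fin m) (Fin m) ℂ

/-- Matrix-valued kernels on `ℝ²`. -/
abbrev Ker (m : ℕ) := ℝ → ℝ → Mat m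

/-- Kernel product `(k₁∗k₂)(z,ζ) := ∫_{-∞}^0 k₁(z,ξ)·k₂(ξ,ζ) dξ`, entrywise Bochner integral. -/
noncomputable def conv {m : ℕ} (k₁ k₂ : Ker m) : Ker m :=
  fun z ζ => Matrix.of fun i j => ∫ ξ in Set.Iic (0:ℝ), (k₁ z ξ * k₂ ξ ζ) i j

/-- `∂_z^a ∂_ζ^b` of a kernel, entrywise. -/
noncomputable def pder {m : ℕ} (a b : ℕ) (p : Ker m) : Ker m :=
  fun z ζ => Matrix.of fun i j =>
    iteratedDeriv a (fun z' => iteratedDeriv b (fun ζ' => p z' ζ' i j) ζ) z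

/-- `p^x_{a,b}(z,ζ) := (∂_z^a ∂_ζ^b p)(z+x, ζ+x)`. -/
noncomputable def pSh {m : ℕ} (p : Ker m) (x : ℝ) (a b : ℕ) : Ker m :=
  fun z ζ => pder a b p (z + x) (ζ + x)

/-- `P̂₁ := p^x_{1,0} + p^x_{0,1}`. -/
noncomputable def pHat1 {m : ℕ} (p : Ker m) (x : ℝ) : Ker m := pSh p x 1 0 + pSh p x 0 1

/-- `P_{[a,b]} := p^x_{a,b} − p^x_{b,a}`. -/
noncomputable def pBr {m : ℕ} (p : Ker m) (x : ℝ) (a b : ℕ) : Ker m := pSh p x a b - pSh p x b a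

/-- Bounded, absolutely integrable over `(-∞,0]` in each argument, and tending to `0`
as either argument tends to `−∞` (entrywise). -/
def KernelDecay {m : ℕ} (k : Ker m) : Prop :=
  (∃ C, ∀ (z ζ : ℝ) (i j : Fin m), ‖k z ζ i j‖ ≤ C) ∧
  (∀ (ζ : ℝ) (i j : Fin m), IntegrableOn (fun z => k z ζ i j) (Set.Iic (0:ℝ))) ∧
  (∀ (z : ℝ) (i j : Fin m), IntegrableOn (fun ζ => k z ζ i j) (Set.Iic (0:ℝ))) ∧
  (∀ (ζ : ℝ) (i j : Fin m), Tendsto (fun z => k z ζ i j) atBot (nhds 0)) ∧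
  (∀ (z : ℝ) (i j : Fin m), Tendsto (fun ζ => k z ζ i j) atBot (nhds 0))

/-- A scattering function (with the `y`,`t` dependence suppressed): smooth, with all
partial derivatives bounded, integrable over `(-∞,0]` in each argument and decaying at `−∞`. -/
def IsScattering {m : ℕ} (p : Ker m) : Prop :=
  (∀ i j : Fin m, ContDiff ℝ (⊤ : ℕ∞) (fun v : ℝ × ℝ => p v.1 v.2 i j)) ∧
  (∀ a b : ℕ, KernelDecay (pder a b p))

/-- Continuous on `(-∞,0]²`, bounded, and absolutely integrable in each argument. -/
def KernelNice {m : ℕ} (k : Ker m) : Prop :=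
  (∀ i j : Fin m, ContinuousOn (fun v : ℝ × ℝ => k v.1 v.2 i j)
    (Set.Iic (0:ℝ) ×ˢ Set.Iic (0:ℝ))) ∧
  (∃ C, ∀ (z ζ : ℝ) (i j : Fin m), ‖k z ζ i j‖ ≤ C) ∧
  (∀ (ζ : ℝ) (i j : Fin m), IntegrableOn (fun z => k z ζ i j) (Set.Iic (0:ℝ))) ∧
  (∀ (z : ℝ) (i j : Fin m), IntegrableOn (fun ζ => k z ζ i j) (Set.Iic (0:ℝ)))

/-- Entrywise iterated derivative in the parameter `x` of an `x`-family of kernels. -/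
noncomputable def xder {m : ℕ} (n : ℕ) (w : ℝ → Ker m) : ℝ → Ker m :=
  fun x z ζ => Matrix.of fun i j => iteratedDeriv n (fun x' => w x' z ζ i j) x

/-- `w x` is the kernel of `V − id`, `V := (id − P)⁻¹`, with parameter `x`:
a smooth family of kernels, whose partial derivatives are all bounded, integrable
and decaying, solving the resolvent equations `w = p^x + p^x∗w = p^x + w∗p^x`. -/
def IsResolventPlus {m : ℕ} (p : Ker m) (w : ℝ → Ker m) : Prop :=
  (∀ i j : Fin m, ContDiff ℝ (⊤ : ℕ∞) (fun v : ℝ × ℝ × ℝ => w v.1 v.2.1 v.2.2 i j)) ∧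
  (∀ (n a b : ℕ) (x : ℝ), KernelDecay (pder a b (xder n w x))) ∧
  (∀ x, w x = pSh p x 0 0 + conv (pSh p x 0 0) (w x)) ∧
  (∀ x, w x = pSh p x 0 0 + conv (w x) (pSh p x 0 0))

/-- `w x` is the kernel of `V† − id`, `V† := (id + P)⁻¹`, with parameter `x`:
it solves `w = −p^x − p^x∗w = −p^x − w∗p^x`. -/
def IsResolventMinus {m : ℕ} (p : Ker m) (w : ℝ → Ker m) : Prop :=
  (∀ i j : Fin m, ContDiff ℝ (⊤ : ℕ∞) (fun v : ℝ × ℝ × ℝ => w v.1 v.2.1 v.2.2 i j)) ∧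
  (∀ (n a b : ℕ) (x : ℝ), KernelDecay (pder a b (xder n w x))) ∧
  (∀ x, w x = -(pSh p x 0 0) - conv (pSh p x 0 0) (w x)) ∧
  (∀ x, w x = -(pSh p x 0 0) - conv (w x) (pSh p x 0 0))

/-- Kernel of the word `A·V'` where `V' = δ + v`. -/
noncomputable def aV {m : ℕ} (A v : Ker m) : Ker m := A + conv A v

/-- Kernel of the word `V·A` where `V = δ + u`. -/
noncomputable def vA {m : ℕ} (u A : Ker m) : Ker m := A + conv u A

/-- Kernel of the word `V A V'` where `V = δ+u`, `V' = δ+v`. -/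
noncomputable def vAv {m : ℕ} (u A v : Ker m) : Ker m := vA u (aV A v)

/-- Kernel of the word `V A V' B V''` where `V = δ+u`, `V' = δ+v`, `V'' = δ+w'`. -/
noncomputable def vAvBv {m : ℕ} (u A v B w' : Ker m) : Ker m := vAv u (conv (aV A v) B) w'

/-- Entrywise `∂_x` of an `x`-family of kernels. -/
noncomputable def dxK {m : ℕ} (E : ℝ → Ker m) (x : ℝ) : Ker m :=
  fun z ζ => Matrix.of fun i j => deriv (fun x' => E x' z ζ i j) x

end NCKP

namespace NCKP

/-- Matrix-valued functions `p = p(z,ζ;y,t)` on ℝ⁴. -/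
abbrev Ker4 (m : ℕ) := ℝ → ℝ → ℝ → ℝ → Mat m

/-- `∂_z^a ∂_ζ^b` of a four-variable kernel, entrywise. -/
noncomputable def pder4 {m : ℕ} (a b : ℕ) (p : Ker4 m) : Ker4 m :=
  fun z ζ y t => Matrix.of fun i j =>
    iteratedDeriv a (fun z' => iteratedDeriv b (fun ζ' => p z' ζ' y t i j) ζ) z

/-- A scattering function `p = p(z,ζ;y,t)`: smooth, with all its partial derivatives
bounded, absolutely integrable over `(-∞,0]` in each of the first two arguments, and
tending to `0` as either of the first two arguments tends to `−∞`. -/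
def IsScattering4 {m : ℕ} (p : Ker4 m) : Prop :=
  (∀ i j : Fin m, ContDiff ℝ (⊤ : ℕ∞)
    (fun v : ℝ × ℝ × ℝ × ℝ => p v.1 v.2.1 v.2.2.1 v.2.2.2 i j)) ∧
  (∀ (a b : ℕ) (y t : ℝ), KernelDecay (fun z ζ => pder4 a b p z ζ y t))

/-- The linearised KP constraints `∂_y p = ∂_z²p − ∂_ζ²p` and
`∂_t p = 4(∂_z³p + ∂_ζ³p)`, entrywise. -/
def LinearisedKP {m : ℕ} (p : Ker4 m) : Prop :=
  (∀ (z ζ y t : ℝ) (i j : Fin m),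
    deriv (fun y' => p z ζ y' t i j) y
      = (pder4 2 0 p z ζ y t - pder4 0 2 p z ζ y t) i j) ∧
  (∀ (z ζ y t : ℝ) (i j : Fin m),
    deriv (fun t' => p z ζ y t' i j) t
      = (4:ℂ) * ((pder4 3 0 p z ζ y t + pder4 0 3 p z ζ y t) i j))

/-- `∂_x^c ∂_y^d ∂_t^e` of a matrix-valued function of `(x,y,t)`, entrywise. -/
noncomputable def D3 {m : ℕ} (c d e : ℕ) (u : ℝ → ℝ → ℝ → Mat m) : ℝ → ℝ → ℝ → Mat m :=
  fun x y t => Matrix.of fun i j =>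
    iteratedDeriv c (fun x' =>
      iteratedDeriv d (fun y' =>
        iteratedDeriv e (fun t' => u x' y' t' i j) t) y) x

/-- `∂_z^a ∂_ζ^b ∂_x^c ∂_y^d ∂_t^e` of a matrix function of `(z,ζ,x,y,t)`, entrywise. -/
noncomputable def D5 {m : ℕ} (a b c d e : ℕ)
    (g : ℝ → ℝ → ℝ → ℝ → ℝ → Mat m) : ℝ → ℝ → ℝ → ℝ → ℝ → Mat m :=
  fun z ζ x y t => Matrix.of fun i j =>
    iteratedDeriv a (fun z' =>
      iteratedDeriv b (fun ζ' =>
        iteratedDeriv c (fun x' =>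
          iteratedDeriv d (fun y' =>
            iteratedDeriv e (fun t' => g z' ζ' x' y' t' i j) t) y) x) ζ) z

/-- The kernel `p^x_{0,0}(z,ζ) = p(z+x,ζ+x;y,t)` at fixed parameters `x,y,t`. -/
noncomputable def pXK {m : ℕ} (p : Ker4 m) (x y t : ℝ) : Ker m :=
  fun z ζ => p (z + x) (ζ + x) y t

/-- `w = w(z,ζ;x,y,t)` is the kernel of `V − id`, `V := (id − P)⁻¹`: a smooth family
of kernels, all of whose partial derivatives are bounded, integrable and decaying at
`−∞` in `z` and `ζ`, solving `w = p^x + p^x∗w = p^x + w∗p^x`. -/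
def IsResolvent4Plus {m : ℕ} (p : Ker4 m) (w : ℝ → ℝ → ℝ → ℝ → ℝ → Mat m) : Prop :=
  (∀ i j : Fin m, ContDiff ℝ (⊤ : ℕ∞)
    (fun v : ℝ × ℝ × ℝ × ℝ × ℝ => w v.1 v.2.1 v.2.2.1 v.2.2.2.1 v.2.2.2.2 i j)) ∧
  (∀ (a b c d e : ℕ) (x y t : ℝ), KernelDecay (fun z ζ => D5 a b c d e w z ζ x y t)) ∧
  (∀ x y t : ℝ, (fun z ζ => w z ζ x y t)
      = pXK p x y t + conv (pXK p x y t) (fun z ζ => w z ζ x y t)) ∧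
  (∀ x y t : ℝ, (fun z ζ => w z ζ x y t)
      = pXK p x y t + conv (fun z ζ => w z ζ x y t) (pXK p x y t))

/-- `w = w(z,ζ;x,y,t)` is the kernel of `V† − id`, `V† := (id + P)⁻¹`:
it solves `w = −p^x − p^x∗w = −p^x − w∗p^x`. -/
def IsResolvent4Minus {m : ℕ} (p : Ker4 m) (w : ℝ → ℝ → ℝ → ℝ → ℝ → Mat m) : Prop :=
  (∀ i j : Fin m, ContDiff ℝ (⊤ : ℕ∞)
    (fun v : ℝ × ℝ × ℝ × ℝ × ℝ => w v.1 v.2.1 v.2.2.1 v.2.2.2.1 v.2.2.2.2 i j)) ∧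
  (∀ (a b c d e : ℕ) (x y t : ℝ), KernelDecay (fun z ζ => D5 a b c d e w z ζ x y t)) ∧
  (∀ x y t : ℝ, (fun z ζ => w z ζ x y t)
      = -(pXK p x y t) - conv (pXK p x y t) (fun z ζ => w z ζ x y t)) ∧
  (∀ x y t : ℝ, (fun z ζ => w z ζ x y t)
      = -(pXK p x y t) - conv (fun z ζ => w z ζ x y t) (pXK p x y t))

/-- The kernel `q^x := p^x_{1,0} − p^x_{0,1}` at fixed parameters `x,y,t`. -/
noncomputable def qXK {m : ℕ} (p : Ker4 m) (x y t : ℝ) : Ker m :=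
  fun z ζ => pder4 1 0 p (z + x) (ζ + x) y t - pder4 0 1 p (z + x) (ζ + x) y t

/-- `K₊ := q^x + w₊∗q^x + q^x∗w₋ + w₊∗q^x∗w₋`, the kernel of `V P_{[1,0]} V†`. -/
noncomputable def Kplus {m : ℕ} (p : Ker4 m) (wp wm : ℝ → ℝ → ℝ → ℝ → ℝ → Mat m)
    (x y t : ℝ) : Ker m :=
  qXK p x y t + conv (fun z ζ => wp z ζ x y t) (qXK p x y t)
    + conv (qXK p x y t) (fun z ζ => wm z ζ x y t)
    + conv (fun z ζ => wp z ζ x y t) (conv (qXK p x y t) (fun z ζ => wm z ζ x y t))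

/-- `K₋ := q^x + w₋∗q^x + q^x∗w₊ + w₋∗q^x∗w₊`, the kernel of `V† P_{[1,0]} V`. -/
noncomputable def Kminus {m : ℕ} (p : Ker4 m) (wp wm : ℝ → ℝ → ℝ → ℝ → ℝ → Mat m)
    (x y t : ℝ) : Ker m :=
  qXK p x y t + conv (fun z ζ => wm z ζ x y t) (qXK p x y t)
    + conv (qXK p x y t) (fun z ζ => wp z ζ x y t)
    + conv (fun z ζ => wm z ζ x y t) (conv (qXK p x y t) (fun z ζ => wp z ζ x y t))

end NCKP

namespace NCKP
open Set Topology
open scoped ContDiff ENNReal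

/-- The four-dimensional parameter space. -/
abbrev V4 := ℝ × ℝ × ℝ × ℝ

/-- Directional derivative. -/
noncomputable def dd {E : Type*} [NormedAddCommGroup E] [NormedSpace ℝ E]
    (v : V4) (f : V4 → E) : V4 → E := fun w => fderiv ℝ f w v

section basic
variable {E : Type*} [NormedAddCommGroup E] [NormedSpace ℝ E]

theorem dd_smooth {f : V4 → E} (hf : ContDiff ℝ ∞ f) (v : V4) : ContDiff ℝ ∞ (dd v f) :=
  (hf.fderiv_right (m := ∞) (by simp)).clm_apply contDiff_const

theorem smooth_hasFDerivAt {f : V4 → E} (hf : ContDiff ℝ ∞ f) (w : V4) :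
    HasFDerivAt f (fderiv ℝ f w) w :=
  (hf.differentiable (by simp) w).hasFDerivAt

theorem dd_line {f : V4 → E} (hf : ContDiff ℝ ∞ f) (w v : V4) (s : ℝ) :
    HasDerivAt (fun s : ℝ => f (w + s • v)) (dd v f (w + s • v)) s := by
  have h1 : HasDerivAt (fun s : ℝ => w + s • v) v s := by
    simpa using ((hasDerivAt_id s).smul_const v).const_add w
  exact (smooth_hasFDerivAt hf (w + s • v)).comp_hasDerivAt s h1

theorem dd_hasLine {f : V4 → E} (hf : ContDiff ℝ ∞ f) (w v : V4) :
    HasLineDerivAt ℝ f (dd v f w) w v :=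
  (smooth_hasFDerivAt hf w).hasLineDerivAt v

theorem dd_comm {f : V4 → E} (hf : ContDiff ℝ ∞ f) (v v' : V4) :
    dd v (dd v' f) = dd v' (dd v f) := by
  have key : ∀ a b : V4, ∀ w, dd a (dd b f) w = fderiv ℝ (fderiv ℝ f) w a b := by
    intro a b w
    have h1 : HasFDerivAt (fderiv ℝ f) (fderiv ℝ (fderiv ℝ f) w) w :=
      ((hf.fderiv_right (m := ∞) (by simp)).differentiable (by simp) w).hasFDerivAt
    have h2 := h1.clm_apply (hasFDerivAt_const b w)
    unfold dd
    rw [h2.fderiv]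
    simp
  funext w
  rw [key, key]
  have := ((contDiff_infty.1 hf 2).contDiffAt (x := w)).isSymmSndFDerivAt (by
    rw [minSmoothness_of_isRCLikeNormedField]; simp)
  exact this v v'

theorem dd_add_fun {f g : V4 → E} (hf : ContDiff ℝ ∞ f) (hg : ContDiff ℝ ∞ g) (v : V4) :
    dd v (f + g) = dd v f + dd v g := by
  funext w
  simp only [dd, Pi.add_apply]
  rw [((smooth_hasFDerivAt hf w).add (smooth_hasFDerivAt hg w)).fderiv]
  rfl

theorem dd_smul_fun {f : V4 → E} (hf : ContDiff ℝ ∞ f) (c : ℝ) (v : V4) :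
    dd v (c • f) = c • dd v f := by
  funext w
  simp only [dd, Pi.smul_apply]
  rw [((smooth_hasFDerivAt hf w).const_smul c).fderiv]
  rfl

theorem dd_zero_fun (v : V4) : dd v (0 : V4 → E) = 0 := by
  funext w
  simp [dd]

theorem dd_sub_fun {f g : V4 → E} (hf : ContDiff ℝ ∞ f) (hg : ContDiff ℝ ∞ g) (v : V4) :
    dd v (f - g) = dd v f - dd v g := by
  funext w
  simp only [dd, Pi.sub_apply]
  rw [((smooth_hasFDerivAt hf w).sub (smooth_hasFDerivAt hg w)).fderiv]
  rfl

theorem dd_add (f : V4 → E) (v v' : V4) : dd (v + v') f = dd v f + dd v' f := by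
  funext w; simp [dd]

theorem dd_sub (f : V4 → E) (v v' : V4) : dd (v - v') f = dd v f - dd v' f := by
  funext w; simp [dd]

theorem dd_smul (f : V4 → E) (c : ℝ) (v : V4) : dd (c • v) f = c • dd v f := by
  funext w; simp [dd]

theorem dd_zero (f : V4 → E) : dd 0 f = 0 := by
  funext w; simp [dd]

theorem dd_comp {f : V4 → E} (hf : ContDiff ℝ ∞ f) (L : V4 →L[ℝ] V4) (v : V4) :
    dd v (fun w => f (L w)) = fun w => dd (L v) f (L w) := by
  funext w
  have := (smooth_hasFDerivAt hf (L w)).comp w L.hasFDerivAt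
  change fderiv ℝ (f ∘ L) w v = _
  rw [this.fderiv]; rfl

/-- Iterated derivatives along a line. -/
theorem dd_iterate_smooth {f : V4 → E} (hf : ContDiff ℝ ∞ f) (v : V4) (n : ℕ) :
    ContDiff ℝ ∞ ((dd v)^[n] f) := by
  induction n with
  | zero => exact hf
  | succ n ih => rw [Function.iterate_succ_apply']; exact dd_smooth ih v

theorem iteratedDeriv_line {f : V4 → E} (hf : ContDiff ℝ ∞ f) (w v : V4) (n : ℕ) :
    iteratedDeriv n (fun s : ℝ => f (w + s • v)) = fun s => (dd v)^[n] f (w + s • v) := by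
  induction n with
  | zero => simp
  | succ n ih =>
    rw [iteratedDeriv_succ, ih]
    funext s
    rw [Function.iterate_succ_apply']
    exact (dd_line (dd_iterate_smooth hf v n) w v s).deriv

theorem iteratedDeriv_coord1 {f : V4 → E} (hf : ContDiff ℝ ∞ f) (n : ℕ) (a b c d : ℝ) :
    iteratedDeriv n (fun s : ℝ => f (s, b, c, d)) a = (dd (1, 0, 0, 0))^[n] f (a, b, c, d) := by
  have := congrFun (iteratedDeriv_line hf (0, b, c, d) (1, 0, 0, 0) n) a
  simpa using this

theorem iteratedDeriv_coord2 {f : V4 → E} (hf : ContDiff ℝ ∞ f) (n : ℕ) (a b c d : ℝ) :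
    iteratedDeriv n (fun s : ℝ => f (a, s, c, d)) b = (dd (0, 1, 0, 0))^[n] f (a, b, c, d) := by
  have := congrFun (iteratedDeriv_line hf (a, 0, c, d) (0, 1, 0, 0) n) b
  simpa using this

theorem iteratedDeriv_coord3 {f : V4 → E} (hf : ContDiff ℝ ∞ f) (n : ℕ) (a b c d : ℝ) :
    iteratedDeriv n (fun s : ℝ => f (a, b, s, d)) c = (dd (0, 0, 1, 0))^[n] f (a, b, c, d) := by
  have := congrFun (iteratedDeriv_line hf (a, b, 0, d) (0, 0, 1, 0) n) c
  simpa using this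

theorem iteratedDeriv_coord4 {f : V4 → E} (hf : ContDiff ℝ ∞ f) (n : ℕ) (a b c d : ℝ) :
    iteratedDeriv n (fun s : ℝ => f (a, b, c, s)) d = (dd (0, 0, 0, 1))^[n] f (a, b, c, d) := by
  have := congrFun (iteratedDeriv_line hf (a, b, c, 0) (0, 0, 0, 1) n) d
  simpa using this

end basic

set_option linter.unusedSectionVars false
section reg
variable {A : Type*} [NormedRing A] [NormedAlgebra ℝ A] [CompleteSpace A]

/-- Locally bounded `L¹` norm near `w`. -/
def RegF (f : V4 → A) (w : ℝ × ℝ × ℝ) : Prop :=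
  ∃ C : ℝ≥0∞, C ≠ ⊤ ∧ ∀ᶠ w' in 𝓝 w, ∫⁻ ξ in Iic (0:ℝ), ‖f (ξ, w')‖ₑ ≤ C

/-- Locally bounded sup norm near `w`. -/
def RegK (k : V4 → A) (w : ℝ × ℝ × ℝ) : Prop :=
  ∃ C : ℝ≥0∞, C ≠ ⊤ ∧ ∀ᶠ w' in 𝓝 w, (⨆ z : ℝ, ⨆ ζ : ℝ, ‖k (z, ζ, w'.2)‖ₑ) ≤ C

theorem lsc_dense_open (Φ : ℝ × ℝ × ℝ → ℝ≥0∞) (hΦ : LowerSemicontinuous Φ)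
    (hfin : ∀ w, Φ w ≠ ⊤) :
    Dense {w | ∃ C : ℝ≥0∞, C ≠ ⊤ ∧ ∀ᶠ w' in 𝓝 w, Φ w' ≤ C} ∧
    IsOpen {w | ∃ C : ℝ≥0∞, C ≠ ⊤ ∧ ∀ᶠ w' in 𝓝 w, Φ w' ≤ C} := by
  constructor
  · have h := dense_iUnion_interior_of_closed (X := ℝ × ℝ × ℝ)
      (f := fun n : ℕ => Φ ⁻¹' Iic (n : ℝ≥0∞))
      (fun n => hΦ.isClosed_preimage _) (by
        ext w
        simp only [mem_iUnion, mem_preimage, mem_Iic, mem_univ, iff_true]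
        obtain ⟨n, hn⟩ := ENNReal.exists_nat_gt (hfin w)
        exact ⟨n, hn.le⟩)
    refine h.mono ?_
    intro w hw
    obtain ⟨n, hn⟩ := mem_iUnion.1 hw
    refine ⟨n, by simp, ?_⟩
    exact mem_interior_iff_mem_nhds.1 hn
  · rw [isOpen_iff_mem_nhds]
    rintro w ⟨C, hC, h⟩
    filter_upwards [eventually_eventually_nhds.2 h] with w' hw'
    exact ⟨C, hC, hw'⟩

theorem lsc_lintegral {f : V4 → A} (hf : Continuous f) :
    LowerSemicontinuous (fun w : ℝ × ℝ × ℝ => ∫⁻ ξ in Iic (0:ℝ), ‖f (ξ, w)‖ₑ) := by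
  rw [lowerSemicontinuous_iff_isClosed_preimage]
  intro y
  apply IsSeqClosed.isClosed
  intro u w hu hw
  simp only [mem_preimage, mem_Iic] at hu ⊢
  calc ∫⁻ ξ in Iic (0:ℝ), ‖f (ξ, w)‖ₑ
      = ∫⁻ ξ in Iic (0:ℝ), liminf (fun n => ‖f (ξ, u n)‖ₑ) atTop := by
        congr 1; funext ξ
        have : Tendsto (fun n => ‖f (ξ, u n)‖ₑ) atTop (𝓝 ‖f (ξ, w)‖ₑ) := by
          have hc : Continuous (fun w => ‖f (ξ, w)‖ₑ) := by fun_prop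
          exact (hc.tendsto w).comp hw
        exact this.liminf_eq.symm
    _ ≤ liminf (fun n => ∫⁻ ξ in Iic (0:ℝ), ‖f (ξ, u n)‖ₑ) atTop := by
        apply lintegral_liminf_le
        intro n
        have : Continuous (fun ξ => ‖f (ξ, u n)‖ₑ) := by fun_prop
        exact this.measurable
    _ ≤ y := by
        apply liminf_le_of_le
        · isBoundedDefault
        · intro b hb
          obtain ⟨n, hn⟩ := hb.exists
          exact hn.trans (hu n)

end reg
end NCKP

namespace NCKP
open Set Topology
open scoped ContDiff ENNReal
set_option linter.unusedSectionVars false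
section conv
variable {A : Type*} [NormedRing A] [NormedAlgebra ℝ A] [CompleteSpace A]

theorem slice_cont {f : V4 → A} (hf : ContDiff ℝ ∞ f) (w : ℝ × ℝ × ℝ) :
    Continuous (fun ξ : ℝ => f (ξ, w)) := by
  have := hf.continuous
  fun_prop

theorem dom_of_reg {f : V4 → A} (hf : ContDiff ℝ ∞ f) (w v' : ℝ × ℝ × ℝ)
    (hint : IntegrableOn (fun ξ => f (ξ, w)) (Iic (0:ℝ)))
    (hreg : RegF (dd (0, v') f) w) :
    ∃ ε > 0, ∃ B : ℝ → ℝ, IntegrableOn B (Iic (0:ℝ)) ∧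
      ∀ s : ℝ, |s| < ε → ∀ ξ, ‖f (ξ, w + s • v')‖ ≤ B ξ := by
  obtain ⟨C, hC, hev⟩ := hreg
  have hcont : Tendsto (fun s : ℝ => w + s • v') (𝓝 0) (𝓝 w) := by
    have : Continuous (fun s : ℝ => w + s • v') := by fun_prop
    simpa using this.tendsto 0
  obtain ⟨ε, hε, hball⟩ := Metric.eventually_nhds_iff.1 (hcont.eventually hev)
  have hsm := dd_smooth hf (0, v')
  have hdc : Continuous (fun q : ℝ × ℝ => dd (0, v') f (q.1, w + q.2 • v')) := by
    have := hsm.continuous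
    fun_prop
  have hI : Integrable (fun q : ℝ × ℝ => dd (0, v') f (q.1, w + q.2 • v'))
      ((volume.restrict (Iic (0:ℝ))).prod (volume.restrict (Ioo (-ε) ε))) := by
    refine ⟨hdc.aestronglyMeasurable, ?_⟩
    have hm : Measurable (fun q : ℝ × ℝ => ‖dd (0, v') f (q.1, w + q.2 • v')‖ₑ) :=
      hdc.enorm.measurable
    rw [HasFiniteIntegral, lintegral_prod_symm _ hm.aemeasurable]
    calc ∫⁻ s in Ioo (-ε) ε, ∫⁻ ξ in Iic (0:ℝ), ‖dd (0, v') f (ξ, w + s • v')‖ₑ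
        ≤ ∫⁻ s in Ioo (-ε) ε, C := by
          apply setLIntegral_mono' measurableSet_Ioo
          intro s hs
          apply hball
          simpa [abs_lt] using hs
      _ < ⊤ := by
          simp only [lintegral_const, Measure.restrict_apply_univ, Real.volume_Ioo]
          exact ENNReal.mul_lt_top hC.lt_top ENNReal.ofReal_lt_top
  have hI2 := hI.norm.integral_prod_left
  refine ⟨ε, hε, fun ξ => ‖f (ξ, w)‖ + ∫ s in Ioo (-ε) ε, ‖dd (0, v') f (ξ, w + s • v')‖,
    hint.norm.add hI2, ?_⟩
  intro s hs ξ
  have hline : ∀ s : ℝ, HasDerivAt (fun s : ℝ => f (ξ, w + s • v'))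
      (dd (0, v') f (ξ, w + s • v')) s := by
    intro s
    have := dd_line hf (ξ, w) (0, v') s
    simpa using this
  have hc1 : Continuous (fun s : ℝ => dd (0, v') f (ξ, w + s • v')) := by
    have := hsm.continuous
    fun_prop
  have hftc := intervalIntegral.integral_eq_sub_of_hasDerivAt (a := 0) (b := s)
    (fun x _ => hline x) (hc1.intervalIntegrable _ _)
  have h2 : f (ξ, w + s • v') = f (ξ, w) + ∫ s in (0:ℝ)..s, dd (0, v') f (ξ, w + s • v') := by
    rw [hftc]; simp
  rw [h2]
  refine (norm_add_le _ _).trans (add_le_add le_rfl ?_)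
  refine (intervalIntegral.norm_integral_le_integral_norm_uIoc).trans ?_
  apply setIntegral_mono_set
  · exact (hc1.norm.integrableOn_Icc (a := -ε) (b := ε)).mono_set Ioo_subset_Icc_self
  · exact ae_of_all _ (fun _ => norm_nonneg _)
  · apply LE.le.eventuallyLE
    intro r hr
    rw [abs_lt] at hs
    rw [uIoc, mem_Ioc] at hr
    constructor
    · exact lt_of_lt_of_le (by simpa [hε] using hs.1 : -ε < min 0 s) hr.1.le
    · exact lt_of_le_of_lt hr.2 (by simpa [hε] using hs.2)

/-- The convolution operator. -/
noncomputable def CC (f k : V4 → A) : V4 → A := fun w =>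
  ∫ ξ in Iic (0:ℝ), f (ξ, w.2) * k (ξ + w.2.1, w.1 + w.2.1, w.2.2)

theorem regK_bound {k : V4 → A} {w : ℝ × ℝ × ℝ} (h : RegK k w) :
    ∃ C : ℝ, 0 ≤ C ∧ ∀ᶠ w' in 𝓝 w, ∀ z ζ, ‖k (z, ζ, w'.2)‖ ≤ C := by
  obtain ⟨C, hC, h⟩ := h
  refine ⟨C.toReal, ENNReal.toReal_nonneg, ?_⟩
  filter_upwards [h] with w' hw' z ζ
  have h1 : ‖k (z, ζ, w'.2)‖ₑ ≤ C :=
    (le_iSup₂ (f := fun z ζ : ℝ => ‖k (z, ζ, w'.2)‖ₑ) z ζ).trans hw'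
  have := ENNReal.toReal_mono hC h1
  simpa using this

theorem CC_hasLine {f k : V4 → A} (hf : ContDiff ℝ ∞ f) (hk : ContDiff ℝ ∞ k)
    (a b c d : ℝ) (w : V4)
    (hint : IntegrableOn (fun ξ => f (ξ, w.2)) (Iic (0:ℝ)))
    (hint' : IntegrableOn (fun ξ => dd (0, b, c, d) f (ξ, w.2)) (Iic (0:ℝ)))
    (hr1 : RegF (dd (0, b, c, d) f) w.2)
    (hr2 : RegF (dd (0, b, c, d) (dd (0, b, c, d) f)) w.2)
    (hk0 : RegK k w.2) (hk1 : RegK (dd (b, a + b, c, d) k) w.2) :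
    HasLineDerivAt ℝ (CC f k)
      (CC (dd (0, b, c, d) f) k w + CC f (dd (b, a + b, c, d) k) w) w (a, b, c, d) := by
  obtain ⟨ε0, hε0, B0, hB0, hb0⟩ := dom_of_reg hf w.2 (b, c, d) hint hr1
  obtain ⟨ε1, hε1, B1, hB1, hb1⟩ := dom_of_reg (dd_smooth hf _) w.2 (b, c, d) hint' hr2
  obtain ⟨K0, hK0n, hK0⟩ := regK_bound hk0
  obtain ⟨K1, hK1n, hK1⟩ := regK_bound hk1
  have hcont : Tendsto (fun s : ℝ => w.2 + s • (b, c, d)) (𝓝 0) (𝓝 w.2) := by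
    have : Continuous (fun s : ℝ => w.2 + s • (b, c, d)) := by fun_prop
    simpa using this.tendsto 0
  have hK0' := hcont.eventually hK0
  have hK1' := hcont.eventually hK1
  have hfc := hf.continuous
  have hkc := hk.continuous
  have hfc1 := (dd_smooth hf (0, b, c, d)).continuous
  have hkc1 := (dd_smooth hk (b, a + b, c, d)).continuous
  obtain ⟨ζ, x, y, t⟩ := w
  set F : ℝ → ℝ → A := fun s ξ =>
    f ((ξ, x, y, t) + s • ((0, b, c, d) : V4)) *
      k ((ξ + x, ζ + x, y, t) + s • ((b, a + b, c, d) : V4)) with hF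
  set F' : ℝ → ℝ → A := fun s ξ =>
    dd (0, b, c, d) f ((ξ, x, y, t) + s • ((0, b, c, d) : V4)) *
      k ((ξ + x, ζ + x, y, t) + s • ((b, a + b, c, d) : V4)) +
    f ((ξ, x, y, t) + s • ((0, b, c, d) : V4)) *
      dd (b, a + b, c, d) k ((ξ + x, ζ + x, y, t) + s • ((b, a + b, c, d) : V4)) with hF'
  have hs : {s : ℝ | |s| < ε0 ∧ |s| < ε1 ∧
      (∀ z ζ, ‖k (z, ζ, ((x, y, t) + s • ((b, c, d) : ℝ × ℝ × ℝ)).2)‖ ≤ K0) ∧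
      (∀ z ζ, ‖dd (b, a + b, c, d) k
        (z, ζ, ((x, y, t) + s • ((b, c, d) : ℝ × ℝ × ℝ)).2)‖ ≤ K1)} ∈ 𝓝 (0:ℝ) := by
    have e0 : ∀ᶠ s : ℝ in 𝓝 0, |s| < ε0 := by
      have := (continuous_abs (G := ℝ)).tendsto 0
      rw [abs_zero] at this
      exact this.eventually (gt_mem_nhds hε0)
    have e1 : ∀ᶠ s : ℝ in 𝓝 0, |s| < ε1 := by
      have := (continuous_abs (G := ℝ)).tendsto 0
      rw [abs_zero] at this
      exact this.eventually (gt_mem_nhds hε1)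
    filter_upwards [e0, e1, hK0', hK1'] with s h1 h2 h3 h4
    exact ⟨h1, h2, h3, h4⟩
  have hFc : ∀ s, Continuous (F s) := by
    intro s; rw [hF]; fun_prop
  have hFc' : ∀ s, Continuous (F' s) := by
    intro s; rw [hF']; fun_prop
  have hmain := hasDerivAt_integral_of_dominated_loc_of_deriv_le (𝕜 := ℝ) (F := F) (F' := F')
    (x₀ := 0) (μ := volume.restrict (Iic (0:ℝ)))
    (bound := fun ξ => B1 ξ * K0 + B0 ξ * K1) hs
    (Eventually.of_forall fun s => (hFc s).aestronglyMeasurable)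
    (by
      have h00 := mem_of_mem_nhds hs
      refine Integrable.mono' (hB0.mul_const K0) (hFc 0).aestronglyMeasurable ?_
      refine ae_of_all _ fun ξ => ?_
      rw [hF]
      refine (norm_mul_le _ _).trans ?_
      have q1 := hb0 0 h00.1 ξ
      have q2 := h00.2.2.1 (ξ + x) (ζ + x)
      simp only [zero_smul, add_zero] at q1 q2 ⊢
      exact mul_le_mul q1 q2 (norm_nonneg _) ((norm_nonneg _).trans q1))
    (hFc' 0).aestronglyMeasurable
    (by
      refine ae_of_all _ fun ξ => ?_
      intro s hs
      rw [hF']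
      have q0 := hb0 s hs.1 ξ
      have q1 := hb1 s hs.2.1 ξ
      have q2 := hs.2.2.1 ((ξ + x) + s * b) ((ζ + x) + s * (a + b))
      have q3 := hs.2.2.2 ((ξ + x) + s * b) ((ζ + x) + s * (a + b))
      simp only [Prod.smul_mk, Prod.mk_add_mk, smul_eq_mul, mul_zero, add_zero] at q0 q1 q2 q3 ⊢
      refine (norm_add_le _ _).trans (add_le_add ?_ ?_)
      · exact (norm_mul_le _ _).trans
          (mul_le_mul q1 q2 (norm_nonneg _) ((norm_nonneg _).trans q1))
      · exact (norm_mul_le _ _).trans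
          (mul_le_mul q0 q3 (norm_nonneg _) ((norm_nonneg _).trans q0)))
    ((hB1.mul_const K0).add (hB0.mul_const K1))
    (by
      refine ae_of_all _ fun ξ => ?_
      intro s hs
      exact (dd_line hf _ _ s).mul (dd_line hk _ _ s))
  have h2 := hmain.2
  have h00 := mem_of_mem_nhds hs
  have hsplit : ∫ ξ in Iic (0:ℝ), F' 0 ξ = CC (dd (0, b, c, d) f) k (ζ, x, y, t)
      + CC f (dd (b, a + b, c, d) k) (ζ, x, y, t) := by
    rw [CC, CC, ← integral_add]
    · simp [hF']
    · refine Integrable.mono' (hint'.norm.mul_const K0) ?_ ?_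
      · apply Continuous.aestronglyMeasurable; fun_prop
      · refine ae_of_all _ fun ξ => ?_
        refine (norm_mul_le _ _).trans ?_
        have q2 := h00.2.2.1 (ξ + x) (ζ + x)
        simp only [zero_smul, add_zero] at q2
        exact mul_le_mul_of_nonneg_left q2 (norm_nonneg _)
    · refine Integrable.mono' (hint.norm.mul_const K1) ?_ ?_
      · apply Continuous.aestronglyMeasurable; fun_prop
      · refine ae_of_all _ fun ξ => ?_
        refine (norm_mul_le _ _).trans ?_
        have q2 := h00.2.2.2 (ξ + x) (ζ + x)
        simp only [zero_smul, add_zero] at q2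
        exact mul_le_mul_of_nonneg_left q2 (norm_nonneg _)
  rw [hsplit] at h2
  unfold HasLineDerivAt
  convert h2 using 1
  funext s
  simp only [CC, hF, Prod.smul_mk, Prod.mk_add_mk, smul_eq_mul, mul_zero, add_zero]
  congr 1
  funext ξ
  congr 2
  simp only [Prod.mk.injEq, and_true]
  constructor <;> ring

end conv
end NCKP

namespace NCKP
open Set Topology
open scoped ContDiff ENNReal
set_option linter.unusedSectionVars false
section cls
variable {A : Type*} [NormedRing A] [NormedAlgebra ℝ A] [CompleteSpace A]

/-- Class of row functions closed under differentiation. -/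
structure RowClass (S : Submodule ℝ (V4 → A)) : Prop where
  smooth : ∀ f ∈ S, ContDiff ℝ ∞ f
  closed : ∀ f ∈ S, ∀ v, dd v f ∈ S
  int : ∀ f ∈ S, ∀ w : ℝ × ℝ × ℝ, IntegrableOn (fun ξ => f (ξ, w)) (Iic (0:ℝ))
  lim : ∀ f ∈ S, ∀ w : ℝ × ℝ × ℝ, Tendsto (fun ξ => f (ξ, w)) atBot (𝓝 0)

/-- Class of kernels closed under differentiation. -/
structure KerClass (S : Submodule ℝ (V4 → A)) : Prop where
  smooth : ∀ f ∈ S, ContDiff ℝ ∞ f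
  closed : ∀ f ∈ S, ∀ v, dd v f ∈ S
  bdd : ∀ f ∈ S, ∀ w : ℝ × ℝ, ∃ C : ℝ, ∀ z ζ : ℝ, ‖f (z, ζ, w)‖ ≤ C

theorem my_integral_const_mul {μ : Measure ℝ} (a : A) {f : ℝ → A} (hf : Integrable f μ) :
    ∫ x, a * f x ∂μ = a * ∫ x, f x ∂μ :=
  (ContinuousLinearMap.mul ℝ A a).integral_comp_comm hf

theorem my_integral_mul_const {μ : Measure ℝ} (a : A) {f : ℝ → A} (hf : Integrable f μ) :
    ∫ x, f x * a ∂μ = (∫ x, f x ∂μ) * a :=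
  ((ContinuousLinearMap.mul ℝ A).flip a).integral_comp_comm hf

variable {Sr Sp : Submodule ℝ (V4 → A)}

theorem regF_dense_open (hS : RowClass Sr) {f : V4 → A} (hf : f ∈ Sr) :
    Dense {w | RegF f w} ∧ IsOpen {w | RegF f w} := by
  apply lsc_dense_open _ (lsc_lintegral (hS.smooth f hf).continuous)
  intro w
  exact (hS.int f hf w).2.ne

theorem regK_dense_open (hS : KerClass Sp) {f : V4 → A} (hf : f ∈ Sp) :
    Dense {w | RegK f w} ∧ IsOpen {w | RegK f w} := by
  apply lsc_dense_open (fun w' => ⨆ z : ℝ, ⨆ ζ : ℝ, ‖f (z, ζ, w'.2)‖ₑ)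
  · apply lowerSemicontinuous_iSup; intro z
    apply lowerSemicontinuous_iSup; intro ζ
    apply Continuous.lowerSemicontinuous
    have := (hS.smooth f hf).continuous
    fun_prop
  · intro w
    obtain ⟨C, hC⟩ := hS.bdd f hf w.2
    have : (⨆ z : ℝ, ⨆ ζ : ℝ, ‖f (z, ζ, w.2)‖ₑ) ≤ ENNReal.ofReal C := by
      apply iSup₂_le
      intro z ζ
      rw [← ofReal_norm]
      exact ENNReal.ofReal_le_ofReal (hC z ζ)
    exact (this.trans_lt ENNReal.ofReal_lt_top).ne

theorem exists_good (hS : RowClass Sr) (hP : KerClass Sp) {n m : ℕ} (F : Fin n → V4 → A)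
    (hF : ∀ i, F i ∈ Sr) (K : Fin m → V4 → A) (hK : ∀ i, K i ∈ Sp) :
    ∃ U : Set (ℝ × ℝ × ℝ), IsOpen U ∧ Dense U ∧
      (∀ w ∈ U, ∀ i, RegF (F i) w) ∧ (∀ w ∈ U, ∀ i, RegK (K i) w) := by
  have h1 : IsOpen (⋂ i, {w | RegF (F i) w}) :=
    isOpen_iInter_of_finite fun i => (regF_dense_open hS (hF i)).2
  have h2 : IsOpen (⋂ i, {w | RegK (K i) w}) :=
    isOpen_iInter_of_finite fun i => (regK_dense_open hP (hK i)).2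
  refine ⟨(⋂ i, {w | RegF (F i) w}) ∩ (⋂ i, {w | RegK (K i) w}), h1.inter h2, ?_, ?_, ?_⟩
  · apply Dense.inter_of_isOpen_left _ _ h1
    · exact dense_iInter_of_isOpen (fun i => (regF_dense_open hS (hF i)).2)
        (fun i => (regF_dense_open hS (hF i)).1)
    · exact dense_iInter_of_isOpen (fun i => (regK_dense_open hP (hK i)).2)
        (fun i => (regK_dense_open hP (hK i)).1)
  · intro w hw i
    exact mem_iInter.1 hw.1 i
  · intro w hw i
    exact mem_iInter.1 hw.2 i

theorem CC_integrable (hS : RowClass Sr) (hP : KerClass Sp) {f k : V4 → A}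
    (hf : f ∈ Sr) (hk : k ∈ Sp) (w : V4) :
    IntegrableOn (fun ξ => f (ξ, w.2) * k (ξ + w.2.1, w.1 + w.2.1, w.2.2)) (Iic (0:ℝ)) := by
  obtain ⟨C, hC⟩ := hP.bdd k hk w.2.2
  have h1 := (hS.smooth f hf).continuous
  have h2 := (hP.smooth k hk).continuous
  refine Integrable.mono' ((hS.int f hf w.2).norm.mul_const C) ?_ ?_
  · apply Continuous.aestronglyMeasurable; fun_prop
  · refine ae_of_all _ fun ξ => ?_
    exact (norm_mul_le _ _).trans (mul_le_mul_of_nonneg_left (hC _ _) (norm_nonneg _))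

/-- Boundary value. -/
def bb (f : V4 → A) : V4 → A := fun w => f (0, w.2)

/-- Shifted kernel with first argument at the boundary. -/
def qq (k : V4 → A) : V4 → A := fun w => k (w.2.1, w.1 + w.2.1, w.2.2)

theorem CC_sub_left (hS : RowClass Sr) (hP : KerClass Sp) {f g k : V4 → A}
    (hf : f ∈ Sr) (hg : g ∈ Sr) (hk : k ∈ Sp) (w : V4) :
    CC (f - g) k w = CC f k w - CC g k w := by
  unfold CC
  rw [← integral_sub (CC_integrable hS hP hf hk w) (CC_integrable hS hP hg hk w)]
  simp [sub_mul]

theorem CC_sub_right (hS : RowClass Sr) (hP : KerClass Sp) {f k l : V4 → A}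
    (hf : f ∈ Sr) (hk : k ∈ Sp) (hl : l ∈ Sp) (w : V4) :
    CC f (k - l) w = CC f k w - CC f l w := by
  unfold CC
  rw [← integral_sub (CC_integrable hS hP hf hk w) (CC_integrable hS hP hf hl w)]
  simp [mul_sub]

theorem CC_add_right (hS : RowClass Sr) (hP : KerClass Sp) {f k l : V4 → A}
    (hf : f ∈ Sr) (hk : k ∈ Sp) (hl : l ∈ Sp) (w : V4) :
    CC f (k + l) w = CC f k w + CC f l w := by
  unfold CC
  rw [← integral_add (CC_integrable hS hP hf hk w) (CC_integrable hS hP hf hl w)]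
  simp [mul_add]

theorem CC_smul_right {f k : V4 → A} (c : ℝ) (w : V4) :
    CC f (c • k) w = c • CC f k w := by
  unfold CC
  rw [← integral_smul]
  simp

theorem CC_ibp (hS : RowClass Sr) (hP : KerClass Sp) {f k : V4 → A}
    (hf : f ∈ Sr) (hk : k ∈ Sp) (w : V4) :
    CC f (dd (1, 0, 0, 0) k) w = bb f w * qq k w - CC (dd (1, 0, 0, 0) f) k w := by
  have h1 : ∀ ξ : ℝ, HasDerivAt
      (fun ξ => f (ξ, w.2) * k (ξ + w.2.1, w.1 + w.2.1, w.2.2))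
      (dd (1, 0, 0, 0) f (ξ, w.2) * k (ξ + w.2.1, w.1 + w.2.1, w.2.2)
        + f (ξ, w.2) * dd (1, 0, 0, 0) k (ξ + w.2.1, w.1 + w.2.1, w.2.2)) ξ := by
    intro ξ
    have a1 := dd_line (hS.smooth f hf) (0, w.2) (1, 0, 0, 0) ξ
    have a2 := dd_line (hP.smooth k hk) (w.2.1, w.1 + w.2.1, w.2.2) (1, 0, 0, 0) ξ
    have a3 := a1.mul a2
    obtain ⟨ζ, x, y, t⟩ := w
    simp only [Prod.smul_mk, Prod.mk_add_mk, smul_eq_mul, mul_zero, add_zero, mul_one,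
      zero_add, add_comm x] at a3
    exact a3
  have i1 := CC_integrable hS hP (hS.closed f hf (1, 0, 0, 0)) hk w
  have i2 := CC_integrable hS hP hf (hP.closed k hk (1, 0, 0, 0)) w
  have hlim : Tendsto (fun ξ => f (ξ, w.2) * k (ξ + w.2.1, w.1 + w.2.1, w.2.2)) atBot (𝓝 0) := by
    obtain ⟨C, hC⟩ := hP.bdd k hk w.2.2
    refine squeeze_zero_norm (a := fun ξ => ‖f (ξ, w.2)‖ * C) ?_ ?_
    · intro ξ
      exact (norm_mul_le _ _).trans (mul_le_mul_of_nonneg_left (hC _ _) (norm_nonneg _))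
    · simpa using (hS.lim f hf w.2).norm.mul_const C
  have h2 := integral_Iic_of_hasDerivAt_of_tendsto' (a := (0:ℝ)) (fun ξ _ => h1 ξ) (i1.add i2) hlim
  have h3 := integral_add i1 i2
  rw [h3] at h2
  simp only [zero_add, sub_zero] at h2
  unfold bb qq CC
  rw [← h2]
  abel

theorem uniq (w : ℝ × ℝ × ℝ) {k : V4 → A} (hkc : Continuous k)
    (hkb : ∃ C : ℝ, ∀ z ζ : ℝ, ‖k (z, ζ, w.2)‖ ≤ C)
    (G : ℝ → ℝ → A) (hG : ∀ ζ, IntegrableOn (fun z => G z ζ) (Iic (0:ℝ)))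
    (hmir : ∀ z ≤ (0:ℝ), ∀ ζ ≤ (0:ℝ), k (z + w.1, ζ + w.1, w.2) = G z ζ -
      ∫ ξ in Iic (0:ℝ), k (z + w.1, ξ + w.1, w.2) * G ξ ζ)
    (h : ℝ → A) (hi : IntegrableOn h (Iic (0:ℝ)))
    (heq : ∀ ζ < (0:ℝ), h ζ = ∫ ξ in Iic (0:ℝ), h ξ * k (ξ + w.1, ζ + w.1, w.2)) :
    ∀ ζ < (0:ℝ), h ζ = 0 := by
  obtain ⟨C, hC⟩ := hkb
  intro ζ hζ
  have hki : ∀ ζ, IntegrableOn (fun ξ => h ξ * k (ξ + w.1, ζ + w.1, w.2)) (Iic (0:ℝ)) := by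
    intro ζ
    refine Integrable.mono' (hi.norm.mul_const C) ?_ ?_
    · apply hi.aestronglyMeasurable.mul
      apply Continuous.aestronglyMeasurable; fun_prop
    · refine ae_of_all _ fun ξ => ?_
      exact (norm_mul_le _ _).trans (mul_le_mul_of_nonneg_left (hC _ _) (norm_nonneg _))
  have hkG : ∀ z, IntegrableOn (fun ξ => k (z + w.1, ξ + w.1, w.2) * G ξ ζ) (Iic (0:ℝ)) := by
    intro z
    refine Integrable.mono' ((hG ζ).norm.const_mul C) ?_ ?_
    · refine AEStronglyMeasurable.mul ?_ (hG ζ).aestronglyMeasurable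
      apply Continuous.aestronglyMeasurable; fun_prop
    · refine ae_of_all _ fun ξ => ?_
      exact (norm_mul_le _ _).trans (mul_le_mul_of_nonneg_right (hC _ _) (norm_nonneg _))
  have hprod : Integrable (fun q : ℝ × ℝ => h q.1 * (k (q.1 + w.1, q.2 + w.1, w.2) * G q.2 ζ))
      ((volume.restrict (Iic (0:ℝ))).prod (volume.restrict (Iic (0:ℝ)))) := by
    refine Integrable.mono' (g := fun q : ℝ × ℝ => ‖h q.1‖ * (C * ‖G q.2 ζ‖)) ?_ ?_ ?_
    · exact hi.norm.mul_prod ((hG ζ).norm.const_mul C)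
    · refine AEStronglyMeasurable.mul hi.aestronglyMeasurable.comp_fst ?_
      refine AEStronglyMeasurable.mul ?_ (hG ζ).aestronglyMeasurable.comp_snd
      apply Continuous.aestronglyMeasurable; fun_prop
    · refine ae_of_all _ fun q => ?_
      refine (norm_mul_le _ _).trans (mul_le_mul_of_nonneg_left ?_ (norm_nonneg _))
      exact (norm_mul_le _ _).trans (mul_le_mul_of_nonneg_right (hC _ _) (norm_nonneg _))
  have hswap := integral_integral_swap (f := fun ξ η =>
    h ξ * (k (ξ + w.1, η + w.1, w.2) * G η ζ)) hprod
  have hL : ∀ ξ, ∫ η in Iic (0:ℝ), h ξ * (k (ξ + w.1, η + w.1, w.2) * G η ζ)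
      = h ξ * ∫ η in Iic (0:ℝ), k (ξ + w.1, η + w.1, w.2) * G η ζ :=
    fun ξ => my_integral_const_mul _ (hkG ξ)
  have hR : ∀ η < (0:ℝ), ∫ ξ in Iic (0:ℝ), h ξ * (k (ξ + w.1, η + w.1, w.2) * G η ζ)
      = h η * G η ζ := by
    intro η hη
    rw [heq η hη, ← my_integral_mul_const _ (hki η)]
    simp only [mul_assoc]
  have hR2 : ∫ η in Iic (0:ℝ), ∫ ξ in Iic (0:ℝ), h ξ * (k (ξ + w.1, η + w.1, w.2) * G η ζ)
      = ∫ η in Iic (0:ℝ), h η * G η ζ := by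
    rw [integral_Iic_eq_integral_Iio, integral_Iic_eq_integral_Iio]
    exact setIntegral_congr_fun measurableSet_Iio fun η hη => hR η hη
  have hi3 := hprod.integral_prod_left
  simp only [hL] at hswap hi3
  rw [hR2] at hswap
  have hfin : ∫ η in Iic (0:ℝ), h η * G η ζ = h ζ + ∫ η in Iic (0:ℝ), h η * G η ζ := by
    conv_rhs => rw [← hswap, heq ζ hζ]
    rw [← integral_add (hki ζ) hi3]
    apply setIntegral_congr_fun measurableSet_Iic
    intro η hη
    simp only
    rw [hmir η hη ζ hζ.le]
    noncomm_ring
  simpa using hfin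

theorem uniq_lin (hS : RowClass Sr) (hP : KerClass Sp) {n : ℕ} (F : Fin n → V4 → A)
    (hF : ∀ i, F i ∈ Sr) {k : V4 → A} (hk : k ∈ Sp) (w : ℝ × ℝ × ℝ)
    (G : ℝ → ℝ → A) (hG : ∀ ζ, IntegrableOn (fun z => G z ζ) (Iic (0:ℝ)))
    (hmir : ∀ z ≤ (0:ℝ), ∀ ζ ≤ (0:ℝ), k (z + w.1, ζ + w.1, w.2) = G z ζ -
      ∫ ξ in Iic (0:ℝ), k (z + w.1, ξ + w.1, w.2) * G ξ ζ)
    (a : Fin n → A)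
    (heq : ∀ ζ < (0:ℝ), ∑ i, a i * F i (ζ, w) = ∑ i, a i * CC (F i) k (ζ, w)) :
    ∀ ζ < (0:ℝ), ∑ i, a i * F i (ζ, w) = 0 := by
  refine uniq w (hP.smooth k hk).continuous (hP.bdd k hk w.2) G hG hmir
    (fun ζ => ∑ i, a i * F i (ζ, w)) ?_ ?_
  · apply integrable_finsetSum
    intro i _
    exact (hS.int (F i) (hF i) w).const_mul (a i)
  · intro ζ hζ
    rw [heq ζ hζ]
    simp only [Finset.sum_mul]
    rw [integral_finsetSum]
    · apply Finset.sum_congr rfl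
      intro i _
      have := my_integral_const_mul (a i) (CC_integrable hS hP (hF i) hk (ζ, w))
      simp only [CC, ← this, mul_assoc]
    · intro i _
      have := (CC_integrable hS hP (hF i) hk (ζ, w)).const_mul (a i)
      simpa only [mul_assoc] using this

end cls
end NCKP

namespace NCKP
open Set Topology
open scoped ContDiff ENNReal
set_option linter.unusedSectionVars false
section lines
variable {A : Type*} [NormedRing A] [NormedAlgebra ℝ A] [CompleteSpace A]

/-- standard basis vectors and the diagonal direction -/
abbrev e1 : V4 := (1, 0, 0, 0)
abbrev e2 : V4 := (0, 1, 0, 0)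
abbrev e3 : V4 := (0, 0, 1, 0)
abbrev e4 : V4 := (0, 0, 0, 1)
abbrev dl : V4 := (-1, 1, 0, 0)

theorem dl_eq : dl = e2 - e1 := by simp [dl, e2, e1]

theorem dd_dl (f : V4 → A) : dd dl f = dd e2 f - dd e1 f := by
  rw [dl_eq]; exact dd_sub _ _ _

theorem line_add {f g : V4 → A} {f' g' : A} {w v : V4} (hf : HasLineDerivAt ℝ f f' w v)
    (hg : HasLineDerivAt ℝ g g' w v) : HasLineDerivAt ℝ (fun w => f w + g w) (f' + g') w v :=
  HasDerivAt.add hf hg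

theorem line_sub {f g : V4 → A} {f' g' : A} {w v : V4} (hf : HasLineDerivAt ℝ f f' w v)
    (hg : HasLineDerivAt ℝ g g' w v) : HasLineDerivAt ℝ (fun w => f w - g w) (f' - g') w v :=
  HasDerivAt.sub hf hg

theorem line_mul {f g : V4 → A} {f' g' : A} {w v : V4} (hf : HasLineDerivAt ℝ f f' w v)
    (hg : HasLineDerivAt ℝ g g' w v) :
    HasLineDerivAt ℝ (fun w => f w * g w) (f' * g w + f w * g') w v := by
  have := HasDerivAt.mul hf hg
  simp only [zero_smul, add_zero] at this
  exact this

theorem line_eq {W : Set V4} (hW : IsOpen W) {f g : V4 → A} {f' g' : A} {w v : V4} (hw : w ∈ W)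
    (h : ∀ w ∈ W, f w = g w) (hf : HasLineDerivAt ℝ f f' w v)
    (hg : HasLineDerivAt ℝ g g' w v) : f' = g' := by
  refine hf.unique (hg.congr_of_eventuallyEq ?_)
  filter_upwards [hW.mem_nhds hw] with x hx using h x hx

theorem bb_line {f : V4 → A} (hf : ContDiff ℝ ∞ f) (a b c d : ℝ) (w : V4) :
    HasLineDerivAt ℝ (bb f) (bb (dd (0, b, c, d) f) w) w (a, b, c, d) := by
  have := dd_hasLine hf (0, w.2) (0, b, c, d)
  obtain ⟨ζ, x, y, t⟩ := w
  unfold HasLineDerivAt bb at *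
  simpa using this

theorem qq_line {k : V4 → A} (hf : ContDiff ℝ ∞ k) (a b c d : ℝ) (w : V4) :
    HasLineDerivAt ℝ (qq k) (qq (dd (b, a + b, c, d) k) w) w (a, b, c, d) := by
  have := dd_hasLine hf (w.2.1, w.1 + w.2.1, w.2.2) (b, a + b, c, d)
  obtain ⟨ζ, x, y, t⟩ := w
  unfold HasLineDerivAt qq at *
  simp only [Prod.smul_mk, Prod.mk_add_mk, smul_eq_mul] at *
  convert this using 5
  ring

variable {Sr Sp : Submodule ℝ (V4 → A)}

theorem qq_dl {k : V4 → A} (hf : ContDiff ℝ ∞ k) (w : V4) :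
    HasLineDerivAt ℝ (qq k) (qq (dd e1 k) w) w dl := by
  have := qq_line hf (-1) 1 0 0 w
  norm_num at this
  exact this

theorem qq_e1 {k : V4 → A} (hf : ContDiff ℝ ∞ k) (w : V4) :
    HasLineDerivAt ℝ (qq k) (qq (dd e2 k) w) w e1 := by
  have := qq_line hf 1 0 0 0 w
  norm_num at this
  exact this

theorem CC_dl (hS : RowClass Sr) (hP : KerClass Sp) {f k : V4 → A} (hf : f ∈ Sr) (hk : k ∈ Sp)
    (w : V4) (hr1 : RegF (dd e2 f) w.2) (hr2 : RegF (dd e2 (dd e2 f)) w.2)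
    (hk0 : RegK k w.2) (hk1 : RegK (dd e1 k) w.2) :
    HasLineDerivAt ℝ (CC f k) (CC (dd dl f) k w + bb f w * qq k w) w dl := by
  have hz : (-1 : ℝ) + 1 = 0 := by norm_num
  have := CC_hasLine (hS.smooth f hf) (hP.smooth k hk) (-1) 1 0 0 w (hS.int f hf w.2)
    (hS.int _ (hS.closed f hf _) w.2) hr1 hr2 hk0 (by rw [hz]; exact hk1)
  rw [hz, CC_ibp hS hP hf hk w] at this
  rw [dd_dl, CC_sub_left hS hP (hS.closed f hf _) (hS.closed f hf _) hk]
  convert this using 1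
  abel

theorem regF_zero (w : ℝ × ℝ × ℝ) : RegF (0 : V4 → A) w :=
  ⟨0, by simp, by simp⟩

theorem CC_e1 (hS : RowClass Sr) (hP : KerClass Sp) {f k : V4 → A} (hf : f ∈ Sr) (hk : k ∈ Sp)
    (w : V4) (hk0 : RegK k w.2) (hk1 : RegK (dd e2 k) w.2) :
    HasLineDerivAt ℝ (CC f k) (CC f (dd e2 k) w) w e1 := by
  have hz : (1 : ℝ) + 0 = 1 := by norm_num
  have h0 : dd ((0:ℝ), (0:ℝ), (0:ℝ), (0:ℝ)) f = 0 := dd_zero _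
  have h00 : dd ((0:ℝ), (0:ℝ), (0:ℝ), (0:ℝ)) (0 : V4 → A) = 0 := dd_zero _
  have := CC_hasLine (hS.smooth f hf) (hP.smooth k hk) 1 0 0 0 w (hS.int f hf w.2)
    (hS.int _ (hS.closed f hf _) w.2) (by rw [h0]; exact regF_zero _)
    (by rw [h0, h00]; exact regF_zero _) hk0 (by rw [hz]; exact hk1)
  rw [hz, h0] at this
  convert this using 1
  simp [CC]

theorem CC_e3 (hS : RowClass Sr) (hP : KerClass Sp) {f k : V4 → A} (hf : f ∈ Sr) (hk : k ∈ Sp)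
    (w : V4) (hr1 : RegF (dd e3 f) w.2) (hr2 : RegF (dd e3 (dd e3 f)) w.2)
    (hk0 : RegK k w.2) (hk1 : RegK (dd e3 k) w.2) :
    HasLineDerivAt ℝ (CC f k) (CC (dd e3 f) k w + CC f (dd e3 k) w) w e3 := by
  have hz : (0 : ℝ) + 0 = 0 := by norm_num
  have := CC_hasLine (hS.smooth f hf) (hP.smooth k hk) 0 0 1 0 w (hS.int f hf w.2)
    (hS.int _ (hS.closed f hf _) w.2) hr1 hr2 hk0 (by rw [hz]; exact hk1)
  rw [hz] at this
  exact this

theorem CC_e4 (hS : RowClass Sr) (hP : KerClass Sp) {f k : V4 → A} (hf : f ∈ Sr) (hk : k ∈ Sp)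
    (w : V4) (hr1 : RegF (dd e4 f) w.2) (hr2 : RegF (dd e4 (dd e4 f)) w.2)
    (hk0 : RegK k w.2) (hk1 : RegK (dd e4 k) w.2) :
    HasLineDerivAt ℝ (CC f k) (CC (dd e4 f) k w + CC f (dd e4 k) w) w e4 := by
  have hz : (0 : ℝ) + 0 = 0 := by norm_num
  have := CC_hasLine (hS.smooth f hf) (hP.smooth k hk) 0 0 0 1 w (hS.int f hf w.2)
    (hS.int _ (hS.closed f hf _) w.2) hr1 hr2 hk0 (by rw [hz]; exact hk1)
  rw [hz] at this
  exact this

theorem qq_e3 {k : V4 → A} (hf : ContDiff ℝ ∞ k) (w : V4) :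
    HasLineDerivAt ℝ (qq k) (qq (dd e3 k) w) w e3 := by
  have := qq_line hf 0 0 1 0 w
  norm_num at this
  exact this

theorem qq_e4 {k : V4 → A} (hf : ContDiff ℝ ∞ k) (w : V4) :
    HasLineDerivAt ℝ (qq k) (qq (dd e4 k) w) w e4 := by
  have := qq_line hf 0 0 0 1 w
  norm_num at this
  exact this

theorem bb_dl {f : V4 → A} (hf : ContDiff ℝ ∞ f) (w : V4) :
    HasLineDerivAt ℝ (bb f) (bb (dd e2 f) w) w dl := bb_line hf (-1) 1 0 0 w

end lines
end NCKP

namespace NCKP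
open Set Topology
open scoped ContDiff ENNReal
set_option linter.unusedSectionVars false
section mainid
variable {A : Type*} [NormedRing A] [NormedAlgebra ℝ A] [CompleteSpace A]
variable {Sr Sp : Submodule ℝ (V4 → A)}

theorem ext_cont {H : V4 → A} (hH : Continuous H) {U : Set (ℝ × ℝ × ℝ)} (hU : Dense U)
    (h : ∀ ζ < (0:ℝ), ∀ w ∈ U, H (ζ, w) = 0) : ∀ w : V4, w.1 ≤ 0 → H w = 0 := by
  have h1 : ∀ ζ < (0:ℝ), ∀ w, H (ζ, w) = 0 := by
    intro ζ hζ w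
    have hc : IsClosed {w | H (ζ, w) = 0} := isClosed_eq (by fun_prop) continuous_const
    exact (hc.closure_subset_iff.2 (fun w hw => h ζ hζ w hw)) (hU w)
  rintro ⟨ζ, w⟩ hw
  have hc : IsClosed {ζ | H (ζ, w) = 0} := isClosed_eq (by fun_prop) continuous_const
  have := hc.closure_subset_iff.2 (fun ζ (hζ : ζ ∈ Iio (0:ℝ)) => h1 ζ hζ w)
  rw [closure_Iio] at this
  exact this hw

theorem key (hS : RowClass Sr) (hP : KerClass Sp) {r p : V4 → A} (hr : r ∈ Sr) (hp : p ∈ Sp)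
    (hy : dd e3 p = dd e1 (dd e1 p) - dd e2 (dd e2 p))
    (ht : dd e4 p = (4:ℝ) • (dd e1 (dd e1 (dd e1 p)) + dd e2 (dd e2 (dd e2 p))))
    (hglm : ∀ w : V4, w.1 ≤ 0 → r w = qq p w + CC r p w)
    (G : ℝ → ℝ → (ℝ × ℝ × ℝ) → A) (hG : ∀ ζ w, IntegrableOn (fun z => G z ζ w) (Iic (0:ℝ)))
    (hmir : ∀ w : ℝ × ℝ × ℝ, ∀ z ≤ (0:ℝ), ∀ ζ ≤ (0:ℝ), p (z + w.1, ζ + w.1, w.2) = G z ζ w -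
      ∫ ξ in Iic (0:ℝ), p (z + w.1, ξ + w.1, w.2) * G ξ ζ w) :
    (∀ w : V4, w.1 ≤ 0 → dd e3 r w + dd e1 (dd e1 r) w - dd dl (dd dl r) w
        + 2 * bb (dd e2 r) w * r w = 0) ∧
    (∀ w : V4, w.1 ≤ 0 → dd e4 r w - 4 * dd e1 (dd e1 (dd e1 r)) w
        - 4 * dd dl (dd dl (dd dl r)) w + 12 * bb (dd e2 r) w * dd dl r w
        + (12 * bb (dd e2 (dd dl r)) w - 12 * bb (dd e2 r) w * bb r w) * r w = 0) := by
  have four : ∀ x : A, (4:ℝ) • x = 4 * x := by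
    intro x; rw [Algebra.smul_def, map_ofNat]
  have R : ∀ {f}, f ∈ Sr → ∀ v, dd v f ∈ Sr := fun h v => hS.closed _ h v
  have K : ∀ {f}, f ∈ Sp → ∀ v, dd v f ∈ Sp := fun h v => hP.closed _ h v
  obtain ⟨U, hUo, hUd, hUF, hUK⟩ := exists_good hS hP
    (![dd e2 r, dd e2 (dd e2 r), dd e3 r, dd e3 (dd e3 r), dd e4 r, dd e4 (dd e4 r),
      dd e2 (dd dl r), dd e2 (dd e2 (dd dl r)),
      dd e2 (dd dl (dd dl r)), dd e2 (dd e2 (dd dl (dd dl r)))])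
    (by
      intro i
      fin_cases i
      exacts [R hr _, R (R hr _) _, R hr _, R (R hr _) _, R hr _, R (R hr _) _,
        R (R hr _) _, R (R (R hr _) _) _, R (R (R hr _) _) _, R (R (R (R hr _) _) _) _])
    (![p, dd e1 p, dd e2 p, dd e2 (dd e2 p), dd e2 (dd e2 (dd e2 p)), dd e3 p, dd e4 p])
    (by
      intro i
      fin_cases i
      exacts [hp, K hp _, K hp _, K (K hp _) _, K (K (K hp _) _) _, K hp _, K hp _])
  have S : ∀ {f}, f ∈ Sr → ContDiff ℝ ∞ f := fun h => hS.smooth _ h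
  have SK : ∀ {f}, f ∈ Sp → ContDiff ℝ ∞ f := fun h => hP.smooth _ h
  set W : Set V4 := {w | w.1 < 0 ∧ w.2 ∈ U} with hWdef
  have hWo : IsOpen W :=
    (isOpen_lt continuous_fst continuous_const).inter (hUo.preimage continuous_snd)
  have hr1 := R hr dl
  have hr2 := R hr1 dl
  have H0 : ∀ w ∈ W, r w = qq p w + CC r p w := fun w hw => hglm w hw.1.le
  have H1 : ∀ w ∈ W, dd dl r w = qq (dd e1 p) w + (CC (dd dl r) p w + bb r w * qq p w) := by
    intro w hw
    exact line_eq hWo hw H0 (dd_hasLine (S hr) w dl)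
      (line_add (qq_dl (SK hp) w) (CC_dl hS hP hr hp w (hUF _ hw.2 0) (hUF _ hw.2 1)
        (hUK _ hw.2 0) (hUK _ hw.2 1)))
  have H2 : ∀ w ∈ W, dd dl (dd dl r) w = qq (dd e1 (dd e1 p)) w +
      ((CC (dd dl (dd dl r)) p w + bb (dd dl r) w * qq p w)
        + (bb (dd e2 r) w * qq p w + bb r w * qq (dd e1 p) w)) := by
    intro w hw
    exact line_eq hWo hw H1 (dd_hasLine (S hr1) w dl)
      (line_add (qq_dl (SK (K hp _)) w) (line_add (CC_dl hS hP hr1 hp w (hUF _ hw.2 6)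
        (hUF _ hw.2 7) (hUK _ hw.2 0) (hUK _ hw.2 1))
        (line_mul (bb_dl (S hr) w) (qq_dl (SK hp) w))))
  have H3 := fun w (hw : w ∈ W) =>
    line_eq hWo hw H2 (dd_hasLine (S hr2) w dl)
      (line_add (qq_dl (SK (K (K hp _) _)) w) (line_add (line_add (CC_dl hS hP hr2 hp w
        (hUF _ hw.2 8) (hUF _ hw.2 9) (hUK _ hw.2 0) (hUK _ hw.2 1))
        (line_mul (bb_dl (S hr1) w) (qq_dl (SK hp) w)))
        (line_add (line_mul (bb_dl (S (R hr _)) w) (qq_dl (SK hp) w))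
          (line_mul (bb_dl (S hr) w) (qq_dl (SK (K hp _)) w)))))
  have T1 : ∀ w ∈ W, dd e1 r w = qq (dd e2 p) w + CC r (dd e2 p) w := fun w hw =>
    line_eq hWo hw H0 (dd_hasLine (S hr) w e1)
      (line_add (qq_e1 (SK hp) w) (CC_e1 hS hP hr hp w (hUK _ hw.2 0) (hUK _ hw.2 2)))
  have T2 : ∀ w ∈ W, dd e1 (dd e1 r) w = qq (dd e2 (dd e2 p)) w + CC r (dd e2 (dd e2 p)) w :=
    fun w hw =>
    line_eq hWo hw T1 (dd_hasLine (S (R hr _)) w e1)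
      (line_add (qq_e1 (SK (K hp _)) w) (CC_e1 hS hP hr (K hp _) w (hUK _ hw.2 2) (hUK _ hw.2 3)))
  have T3 : ∀ w ∈ W, dd e1 (dd e1 (dd e1 r)) w
      = qq (dd e2 (dd e2 (dd e2 p))) w + CC r (dd e2 (dd e2 (dd e2 p))) w :=
    fun w hw =>
    line_eq hWo hw T2 (dd_hasLine (S (R (R hr _) _)) w e1)
      (line_add (qq_e1 (SK (K (K hp _) _)) w)
        (CC_e1 hS hP hr (K (K hp _) _) w (hUK _ hw.2 3) (hUK _ hw.2 4)))
  have Y := fun w (hw : w ∈ W) =>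
    line_eq hWo hw H0 (dd_hasLine (S hr) w e3)
      (line_add (qq_e3 (SK hp) w) (CC_e3 hS hP hr hp w (hUF _ hw.2 2) (hUF _ hw.2 3)
        (hUK _ hw.2 0) (hUK _ hw.2 5)))
  have Z := fun w (hw : w ∈ W) =>
    line_eq hWo hw H0 (dd_hasLine (S hr) w e4)
      (line_add (qq_e4 (SK hp) w) (CC_e4 hS hP hr hp w (hUF _ hw.2 4) (hUF _ hw.2 5)
        (hUK _ hw.2 0) (hUK _ hw.2 6)))
  have P2 : ∀ w, CC r (dd e1 (dd e1 p)) w = bb r w * qq (dd e1 p) w - (bb (dd e1 r) w * qq p w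
      - CC (dd e1 (dd e1 r)) p w) := by
    intro w
    rw [CC_ibp hS hP hr (K hp _), CC_ibp hS hP (R hr _) hp]
  have P3 : ∀ w, CC r (dd e1 (dd e1 (dd e1 p))) w = bb r w * qq (dd e1 (dd e1 p)) w
      - (bb (dd e1 r) w * qq (dd e1 p) w
      - (bb (dd e1 (dd e1 r)) w * qq p w - CC (dd e1 (dd e1 (dd e1 r))) p w)) := by
    intro w
    rw [CC_ibp hS hP hr (K (K hp _) _), CC_ibp hS hP (R hr _) (K hp _),
      CC_ibp hS hP (R (R hr _) _) hp]
  have qsub : ∀ (f g : V4 → A) w, qq (f - g) w = qq f w - qq g w := fun f g w => rfl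
  have qadd : ∀ (f g : V4 → A) w, qq (f + g) w = qq f w + qq g w := fun f g w => rfl
  have qsmul : ∀ (f : V4 → A) w, qq ((4:ℝ) • f) w = 4 * qq f w := fun f w => four _
  have b1 : ∀ w, bb (dd dl r) w = bb (dd e2 r) w - bb (dd e1 r) w := by
    intro w; simp only [bb, dd_dl]; rfl
  have b2 : ∀ w, bb (dd e1 (dd e1 r)) w = bb (dd dl (dd dl r)) w - 2 * bb (dd e2 (dd dl r)) w
      + bb (dd e2 (dd e2 r)) w := by
    intro w
    have i1 : dd dl (dd dl r) = dd e2 (dd e2 r) - dd e2 (dd e1 r) - (dd e2 (dd e1 r)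
        - dd e1 (dd e1 r)) := by
      rw [dd_dl (dd dl r), dd_dl r, dd_sub_fun (S (R hr _)) (S (R hr _)),
        dd_sub_fun (S (R hr _)) (S (R hr _)), dd_comm (S hr) e1 e2]
    have i2 : dd e2 (dd dl r) = dd e2 (dd e2 r) - dd e2 (dd e1 r) := by
      rw [dd_dl r, dd_sub_fun (S (R hr _)) (S (R hr _))]
    rw [i1, i2]
    simp only [bb, Pi.sub_apply]
    noncomm_ring
  have bcont : ∀ {f : V4 → A}, f ∈ Sr → Continuous (bb f) := by
    intro f hf
    have := (S hf).continuous
    unfold bb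
    fun_prop
  have cont : ∀ {f : V4 → A}, f ∈ Sr → Continuous f := fun hf => (S hf).continuous
  constructor
  · have c1 := cont (R hr e3)
    have c2 := cont (R (R hr e1) e1)
    have c3 := cont hr2
    have c4 := cont hr
    have c5 := bcont (R hr e2)
    refine ext_cont (by fun_prop) hUd ?_
    intro ζ hζ w hw
    have := uniq_lin hS hP ![dd e3 r, dd e1 (dd e1 r), dd dl (dd dl r), r]
      (by intro i; fin_cases i; exacts [R hr _, R (R hr _) _, hr2, hr]) hp w (fun z ζ => G z ζ w)
      (fun ζ => hG ζ w) (hmir w) ![1, 1, -1, 2 * dd e2 r (0, w)] ?_ ζ hζ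
    · simp [Fin.sum_univ_four] at this
      simp only [bb]
      rw [← this]
      noncomm_ring
    · intro ζ hζ
      have hwW : (ζ, w) ∈ W := ⟨hζ, hw⟩
      have hb : dd e2 r (0, w) = bb (dd e2 r) (ζ, w) := rfl
      have y := Y _ hwW
      rw [hy, qsub, CC_sub_right hS hP hr (K (K hp _) _) (K (K hp _) _), P2,
        ← sub_eq_of_eq_add' (T2 _ hwW)] at y
      simp [Fin.sum_univ_four, hb]
      rw [y, H2 _ hwW, H0 _ hwW, b1]
      noncomm_ring
  · have c1 := cont (R hr e4)
    have c2 := cont (R (R (R hr e1) e1) e1)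
    have c3 := cont (R hr2 dl)
    have c4 := cont hr
    have c5 := bcont (R hr e2)
    have c6 := cont hr1
    have c7 := bcont (R hr1 e2)
    have c8 := bcont hr
    refine ext_cont (by fun_prop) hUd ?_
    intro ζ hζ w hw
    have := uniq_lin hS hP ![dd e4 r, dd e1 (dd e1 (dd e1 r)), dd dl (dd dl (dd dl r)), dd dl r, r]
      (by intro i; fin_cases i; exacts [R hr _, R (R (R hr _) _) _, R hr2 _, hr1, hr])
      hp w (fun z ζ => G z ζ w)
      (fun ζ => hG ζ w) (hmir w) ![1, -4, -4, 12 * dd e2 r (0, w),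
        12 * dd e2 (dd dl r) (0, w) - 12 * dd e2 r (0, w) * r (0, w)] ?_ ζ hζ
    · simp [Fin.sum_univ_five] at this
      simp only [bb]
      rw [← this]
      noncomm_ring
    · intro ζ hζ
      have hwW : (ζ, w) ∈ W := ⟨hζ, hw⟩
      have hb : dd e2 r (0, w) = bb (dd e2 r) (ζ, w) := rfl
      have hb' : dd e2 (dd dl r) (0, w) = bb (dd e2 (dd dl r)) (ζ, w) := rfl
      have hb'' : r (0, w) = bb r (ζ, w) := rfl
      have z := Z _ hwW
      have b2' := b2 (ζ, w)
      rw [ht, qsmul, qadd, CC_smul_right, four,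
        CC_add_right hS hP hr (K (K (K hp _) _) _) (K (K (K hp _) _) _), P3, b2',
        ← sub_eq_of_eq_add' (T3 _ hwW)] at z
      simp [Fin.sum_univ_five, hb, hb', hb'']
      rw [z, H3 _ hwW, H1 _ hwW, H0 _ hwW, b1]
      noncomm_ring
end mainid
end NCKP

namespace NCKP
open Set Topology
open scoped ContDiff ENNReal
set_option linter.unusedSectionVars false
section fin
variable {A : Type*} [NormedRing A] [NormedAlgebra ℝ A] [CompleteSpace A]
variable {Sr Sp : Submodule ℝ (V4 → A)}

theorem line_const_mul (c : A) {f : V4 → A} {f' : A} {w v : V4} (hf : HasLineDerivAt ℝ f f' w v) :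
    HasLineDerivAt ℝ (fun w => c * f w) (c * f') w v :=
  HasDerivAt.const_mul c hf

theorem line_zero {h : V4 → A} {h' : A} {w v : V4} (hz : ∀ w : V4, w.1 ≤ 0 → h w = 0)
    (hl : HasLineDerivAt ℝ h h' w v) (hw : w.1 ≤ 0) (hv : v.1 ≤ 0) : h' = 0 := by
  have h1 : HasDerivWithinAt (fun s : ℝ => h (w + s • v)) h' (Ici 0) 0 :=
    HasDerivAt.hasDerivWithinAt hl
  have hz' : ∀ s ∈ Ici (0:ℝ), h (w + s • v) = 0 := by
    intro s hs
    apply hz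
    have : s * v.1 ≤ 0 := mul_nonpos_of_nonneg_of_nonpos hs hv
    simp only [Prod.fst_add, Prod.smul_fst, smul_eq_mul]
    linarith
  have h2 : HasDerivWithinAt (fun s : ℝ => h (w + s • v)) 0 (Ici 0) 0 :=
    (hasDerivWithinAt_const (0:ℝ) (Ici 0) (0:A)).congr hz' (hz' 0 (by simp))
  exact (uniqueDiffWithinAt_Ici (0:ℝ)).eq_deriv _ h1 h2

theorem line_zero' {h : V4 → A} {h' : A} {w v : V4} (hz : ∀ w : V4, w.1 = 0 → h w = 0)
    (hl : HasLineDerivAt ℝ h h' w v) (hw : w.1 = 0) (hv : v.1 = 0) : h' = 0 := by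
  have hz' : (fun s : ℝ => h (w + s • v)) = fun _ => 0 := by
    funext s
    apply hz
    simp [hw, hv]
  unfold HasLineDerivAt at hl
  rw [hz'] at hl
  exact hl.unique (hasDerivAt_const _ _)

abbrev vv : V4 := (-2, 1, 0, 0)

theorem dd_vv (f : V4 → A) : dd vv f = dd e2 f - (2:ℝ) • dd e1 f := by
  have : vv = e2 - (2:ℝ) • e1 := by simp [vv, e2, e1]
  rw [this, dd_sub, dd_smul]

theorem final_id (hS : RowClass Sr) (hP : KerClass Sp) {r p : V4 → A} (hr : r ∈ Sr) (hp : p ∈ Sp)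
    (hy : dd e3 p = dd e1 (dd e1 p) - dd e2 (dd e2 p))
    (ht : dd e4 p = (4:ℝ) • (dd e1 (dd e1 (dd e1 p)) + dd e2 (dd e2 (dd e2 p))))
    (hglm : ∀ w : V4, w.1 ≤ 0 → r w = qq p w + CC r p w)
    (G : ℝ → ℝ → (ℝ × ℝ × ℝ) → A) (hG : ∀ ζ w, IntegrableOn (fun z => G z ζ w) (Iic (0:ℝ)))
    (hmir : ∀ w : ℝ × ℝ × ℝ, ∀ z ≤ (0:ℝ), ∀ ζ ≤ (0:ℝ), p (z + w.1, ζ + w.1, w.2) = G z ζ w -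
      ∫ ξ in Iic (0:ℝ), p (z + w.1, ξ + w.1, w.2) * G ξ ζ w) :
    ∀ w : V4, w.1 = 0 → 3 * dd e3 (dd e3 r) w = dd e2 (dd e4 r) w
      - dd e2 (dd e2 (dd e2 (dd e2 r))) w
      + 6 * (dd e2 (dd e2 r) w * dd e2 r w + dd e2 r w * dd e2 (dd e2 r) w)
      + 6 * (dd e3 r w * dd e2 r w - dd e2 r w * dd e3 r w) := by
  obtain ⟨hE, hF⟩ := key hS hP hr hp hy ht hglm G hG hmir
  have R : ∀ {f}, f ∈ Sr → ∀ v, dd v f ∈ Sr := fun h v => hS.closed _ h v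
  have S : ∀ {f}, f ∈ Sr → ContDiff ℝ ∞ f := fun h => hS.smooth _ h
  have two : ∀ x : A, (2:ℝ) • x = 2 * x := by
    intro x; rw [Algebra.smul_def, map_ofNat]
  have E1 := fun (w : V4) (hw : w.1 ≤ 0) => line_zero (v := vv) hE
    (line_add (line_sub (line_add (dd_hasLine (S (R hr _)) w vv)
      (dd_hasLine (S (R (R hr _) _)) w vv)) (dd_hasLine (S (R (R hr _) _)) w vv))
      (line_mul (line_const_mul 2 (bb_line (S (R hr _)) (-2) 1 0 0 w)) (dd_hasLine (S hr) w vv)))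
      hw (by simp)
  have bbw : ∀ (f : V4 → A) (w : V4), w.1 = 0 → bb f w = f w := by
    rintro f ⟨ζ, w⟩ h
    simp only at h
    simp [bb, h]
  -- normal form of derivatives
  have c12 : ∀ {f : V4 → A}, f ∈ Sr → dd e1 (dd e2 f) = dd e2 (dd e1 f) :=
    fun hf => dd_comm (S hf) _ _
  have c13 : ∀ {f : V4 → A}, f ∈ Sr → dd e1 (dd e3 f) = dd e3 (dd e1 f) :=
    fun hf => dd_comm (S hf) _ _
  have c23 : ∀ {f : V4 → A}, f ∈ Sr → dd e2 (dd e3 f) = dd e3 (dd e2 f) :=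
    fun hf => dd_comm (S hf) _ _
  have ds : ∀ {f g : V4 → A}, f ∈ Sr → g ∈ Sr → ∀ v, dd v (f - g) = dd v f - dd v g :=
    fun hf hg v => dd_sub_fun (S hf) (S hg) v
  have dsm : ∀ {f : V4 → A}, f ∈ Sr → ∀ v, dd v ((2:ℝ) • f) = (2:ℝ) • dd v f :=
    fun hf v => dd_smul_fun (S hf) 2 v
  have n1 : dd dl r = dd e2 r - dd e1 r := dd_dl r
  have n2 : dd dl (dd dl r) = dd e2 (dd e2 r) - dd e2 (dd e1 r) - (dd e2 (dd e1 r)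
      - dd e1 (dd e1 r)) := by
    rw [dd_dl (dd dl r), n1, ds (R hr _) (R hr _), ds (R hr _) (R hr _), c12 hr]
  have n2' : dd e2 (dd dl r) = dd e2 (dd e2 r) - dd e2 (dd e1 r) := by
    rw [n1, ds (R hr _) (R hr _)]
  have M : ∀ {f g : V4 → A}, f ∈ Sr → g ∈ Sr → f - g ∈ Sr := fun hf hg => Sr.sub_mem hf hg
  have r11 := R (R hr e1) e1
  have r21 := R (R hr e1) e2
  have r22 := R (R hr e2) e2
  have n3 : ∀ v, dd v (dd dl (dd dl r)) = dd v (dd e2 (dd e2 r)) - dd v (dd e2 (dd e1 r))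
      - (dd v (dd e2 (dd e1 r)) - dd v (dd e1 (dd e1 r))) := by
    intro v
    rw [n2, ds (M r22 r21) (M r21 r11), ds r22 r21, ds r21 r11]
  have c211 : dd e1 (dd e2 (dd e1 r)) = dd e2 (dd e1 (dd e1 r)) := c12 (R hr _)
  have c122 : dd e1 (dd e2 (dd e2 r)) = dd e2 (dd e2 (dd e1 r)) := by
    rw [c12 (R hr _), c12 hr]
  have J : ∀ w : V4, w.1 = 0 → 3 * (dd e3 (dd e2 r) w - 2 * dd e3 (dd e1 r) w) - dd e4 r w
      + dd e2 (dd e2 (dd e2 r)) w - 6 * (dd e2 r w * dd e2 r w) - 6 * (dd e3 r w * r w) = 0 := by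
    intro w hw
    have a1 := hE w hw.le
    have a2 := E1 w hw.le
    have a3 := hF w hw.le
    change dd vv (dd e3 r) w + dd vv (dd e1 (dd e1 r)) w - dd vv (dd dl (dd dl r)) w
      + (2 * bb (dd e2 (dd e2 r)) w * r w + 2 * bb (dd e2 r) w * dd vv r w) = 0 at a2
    rw [n2] at a1
    rw [n3, dd_vv, dd_vv, dd_vv, dd_vv, dd_vv, c211, c122, c13 hr, c23 hr] at a2
    rw [dd_dl (dd dl (dd dl r)), n3, n3, n2', n1, c211, c122] at a3
    simp only [bbw _ w hw, Pi.sub_apply, Pi.smul_apply, two] at a1 a2 a3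
    have b1 : dd e3 r w = dd e2 (dd e2 r) w - 2 * dd e2 (dd e1 r) w - 2 * (dd e2 r w * r w) := by
      rw [← sub_eq_zero, ← a1]; noncomm_ring
    have b2 : dd e3 (dd e2 r) w - 2 * dd e3 (dd e1 r) w =
        dd e2 (dd e2 (dd e2 r)) w - 4 * dd e2 (dd e2 (dd e1 r)) w + 4 * dd e2 (dd e1 (dd e1 r)) w
        - 2 * (dd e2 (dd e2 r) w * r w + dd e2 r w * (dd e2 r w - 2 * dd e1 r w)) := by
      rw [← sub_eq_zero, ← a2]; noncomm_ring
    have b3 : dd e4 r w = 4 * dd e2 (dd e2 (dd e2 r)) w - 12 * dd e2 (dd e2 (dd e1 r)) w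
        + 12 * dd e2 (dd e1 (dd e1 r)) w - 12 * (dd e2 r w * (dd e2 r w - dd e1 r w))
        - 12 * ((dd e2 (dd e2 r) w - dd e2 (dd e1 r) w) * r w)
        + 12 * (dd e2 r w * r w * r w) := by
      rw [← sub_eq_zero, ← a3]; noncomm_ring
    rw [b2, b3, b1]
    noncomm_ring
  have I : ∀ w : V4, w.1 = 0 → dd e3 r w - dd e2 (dd e2 r) w + 2 * dd e2 (dd e1 r) w
      + 2 * (dd e2 r w * r w) = 0 := by
    intro w hw
    have a1 := hE w hw.le
    rw [n2] at a1
    simp only [bbw _ w hw, Pi.sub_apply] at a1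
    rw [← a1]; noncomm_ring
  intro w hw
  have J' := line_zero' (v := e2) J
    (line_sub (line_sub (line_add (line_sub (line_const_mul 3 (line_sub
      (dd_hasLine (S (R (R hr _) _)) w e2)
      (line_const_mul 2 (dd_hasLine (S (R (R hr _) _)) w e2)))) (dd_hasLine (S (R hr _)) w e2))
      (dd_hasLine (S (R (R (R hr _) _) _)) w e2))
      (line_const_mul 6 (line_mul (dd_hasLine (S (R hr _)) w e2) (dd_hasLine (S (R hr _)) w e2))))
      (line_const_mul 6 (line_mul (dd_hasLine (S (R hr _)) w e2) (dd_hasLine (S hr) w e2))))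
    hw (by simp)
  have I' := line_zero' (v := e3) I
    (line_add (line_add (line_sub (dd_hasLine (S (R hr _)) w e3)
      (dd_hasLine (S (R (R hr _) _)) w e3))
      (line_const_mul 2 (dd_hasLine (S (R (R hr _) _)) w e3)))
      (line_const_mul 2 (line_mul (dd_hasLine (S (R hr _)) w e3) (dd_hasLine (S hr) w e3))))
    hw (by simp)
  rw [c23 (R hr _), c23 (R hr _), c23 hr] at J'
  have b1 : dd e3 (dd e3 r) w = dd e3 (dd e2 (dd e2 r)) w - 2 * dd e3 (dd e2 (dd e1 r)) w
      - 2 * (dd e3 (dd e2 r) w * r w + dd e2 r w * dd e3 r w) := by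
    rw [← sub_eq_zero, ← I']; noncomm_ring
  have b2 : dd e2 (dd e4 r) w = 3 * (dd e3 (dd e2 (dd e2 r)) w - 2 * dd e3 (dd e2 (dd e1 r)) w)
      + dd e2 (dd e2 (dd e2 (dd e2 r))) w
      - 6 * (dd e2 (dd e2 r) w * dd e2 r w + dd e2 r w * dd e2 (dd e2 r) w)
      - 6 * (dd e3 (dd e2 r) w * r w + dd e3 r w * dd e2 r w) := by
    rw [← sub_eq_zero, ← neg_eq_zero, ← J']; noncomm_ring
  rw [b1, b2]
  noncomm_ring
end fin
end NCKP

namespace NCKP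
open Set Topology
open scoped ContDiff ENNReal
set_option linter.unusedSectionVars false
section spans
variable {A : Type*} [NormedRing A] [NormedAlgebra ℝ A] [CompleteSpace A]

theorem dd_decomp (f : V4 → A) (v : V4) : dd v f =
    v.1 • dd e1 f + (v.2.1 • dd e2 f + (v.2.2.1 • dd e3 f + v.2.2.2 • dd e4 f)) := by
  have : v = v.1 • e1 + (v.2.1 • e2 + (v.2.2.1 • e3 + v.2.2.2 • e4)) := by
    obtain ⟨a, b, c, d⟩ := v
    simp [e1, e2, e3, e4]
  conv_lhs => rw [this]
  simp only [dd_add, dd_smul]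

theorem span_closed {s : Set (V4 → A)} (hs : ∀ f ∈ s, ContDiff ℝ ∞ f)
    (h1 : ∀ f ∈ s, dd e1 f ∈ Submodule.span ℝ s) (h2 : ∀ f ∈ s, dd e2 f ∈ Submodule.span ℝ s)
    (h3 : ∀ f ∈ s, dd e3 f ∈ Submodule.span ℝ s) (h4 : ∀ f ∈ s, dd e4 f ∈ Submodule.span ℝ s) :
    ∀ f ∈ Submodule.span ℝ s, ContDiff ℝ ∞ f ∧ ∀ v, dd v f ∈ Submodule.span ℝ s := by
  intro f hf
  induction hf using Submodule.span_induction with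
  | mem f hf =>
    refine ⟨hs f hf, fun v => ?_⟩
    rw [dd_decomp]
    refine Submodule.add_mem _ (Submodule.smul_mem _ _ (h1 f hf)) (Submodule.add_mem _
      (Submodule.smul_mem _ _ (h2 f hf)) (Submodule.add_mem _ (Submodule.smul_mem _ _ (h3 f hf))
        (Submodule.smul_mem _ _ (h4 f hf))))
  | zero => exact ⟨contDiff_const, fun v => by rw [dd_zero_fun]; exact Submodule.zero_mem _⟩
  | add f g _ _ hf hg =>
    refine ⟨hf.1.add hg.1, fun v => ?_⟩
    rw [dd_add_fun hf.1 hg.1]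
    exact Submodule.add_mem _ (hf.2 v) (hg.2 v)
  | smul c f _ hf =>
    refine ⟨contDiff_const.smul hf.1, fun v => ?_⟩
    rw [dd_smul_fun hf.1]
    exact Submodule.smul_mem _ _ (hf.2 v)

theorem rowClass_span {s : Set (V4 → A)} (hs : ∀ f ∈ s, ContDiff ℝ ∞ f)
    (h1 : ∀ f ∈ s, dd e1 f ∈ Submodule.span ℝ s) (h2 : ∀ f ∈ s, dd e2 f ∈ Submodule.span ℝ s)
    (h3 : ∀ f ∈ s, dd e3 f ∈ Submodule.span ℝ s) (h4 : ∀ f ∈ s, dd e4 f ∈ Submodule.span ℝ s)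
    (hi : ∀ f ∈ s, ∀ w : ℝ × ℝ × ℝ, IntegrableOn (fun ξ => f (ξ, w)) (Iic (0:ℝ)))
    (hl : ∀ f ∈ s, ∀ w : ℝ × ℝ × ℝ, Tendsto (fun ξ => f (ξ, w)) atBot (𝓝 0)) :
    RowClass (Submodule.span ℝ s) where
  smooth f hf := (span_closed hs h1 h2 h3 h4 f hf).1
  closed f hf := (span_closed hs h1 h2 h3 h4 f hf).2
  int f hf w := by
    induction hf using Submodule.span_induction with
    | mem f hf => exact hi f hf w
    | zero => exact integrable_zero _ _ _
    | add f g _ _ hf hg => exact Integrable.add hf hg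
    | smul c f _ hf => exact Integrable.smul c hf
  lim f hf w := by
    induction hf using Submodule.span_induction with
    | mem f hf => exact hl f hf w
    | zero => exact tendsto_const_nhds
    | add f g _ _ hf hg => simpa using Tendsto.add hf hg
    | smul c f _ hf => simpa using Tendsto.const_smul hf c

theorem kerClass_span {s : Set (V4 → A)} (hs : ∀ f ∈ s, ContDiff ℝ ∞ f)
    (h1 : ∀ f ∈ s, dd e1 f ∈ Submodule.span ℝ s) (h2 : ∀ f ∈ s, dd e2 f ∈ Submodule.span ℝ s)
    (h3 : ∀ f ∈ s, dd e3 f ∈ Submodule.span ℝ s) (h4 : ∀ f ∈ s, dd e4 f ∈ Submodule.span ℝ s)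
    (hb : ∀ f ∈ s, ∀ w : ℝ × ℝ, ∃ C : ℝ, ∀ z ζ : ℝ, ‖f (z, ζ, w)‖ ≤ C) :
    KerClass (Submodule.span ℝ s) where
  smooth f hf := (span_closed hs h1 h2 h3 h4 f hf).1
  closed f hf := (span_closed hs h1 h2 h3 h4 f hf).2
  bdd f hf w := by
    induction hf using Submodule.span_induction with
    | mem f hf => exact hb f hf w
    | zero => exact ⟨0, by simp⟩
    | add f g _ _ hf hg =>
      obtain ⟨C, hC⟩ := hf
      obtain ⟨D, hD⟩ := hg
      exact ⟨C + D, fun z ζ => (norm_add_le _ _).trans (add_le_add (hC z ζ) (hD z ζ))⟩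
    | smul c f _ hf =>
      obtain ⟨C, hC⟩ := hf
      refine ⟨‖c‖ * C, fun z ζ => ?_⟩
      simp only [Pi.smul_apply]
      rw [norm_smul]
      exact mul_le_mul_of_nonneg_left (hC z ζ) (norm_nonneg _)

/-- normal form of iterated derivatives -/
noncomputable def NN {E : Type*} [NormedAddCommGroup E] [NormedSpace ℝ E]
    (f : V4 → E) (b c d e : ℕ) : V4 → E :=
  (dd e1)^[b] ((dd e2)^[c] ((dd e3)^[d] ((dd e4)^[e] f)))

theorem dd_iterate_comm {f : V4 → A} (hf : ContDiff ℝ ∞ f) (v v' : V4) (n : ℕ) :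
    dd v ((dd v')^[n] f) = (dd v')^[n] (dd v f) := by
  induction n with
  | zero => rfl
  | succ n ih =>
    rw [Function.iterate_succ_apply', Function.iterate_succ_apply', ← ih]
    exact dd_comm (dd_iterate_smooth hf _ _) _ _

theorem NN_smooth {f : V4 → A} (hf : ContDiff ℝ ∞ f) (b c d e : ℕ) : ContDiff ℝ ∞ (NN f b c d e) :=
  dd_iterate_smooth (dd_iterate_smooth (dd_iterate_smooth (dd_iterate_smooth hf _ _) _ _) _ _) _ _

theorem dd1_NN (f : V4 → A) (b c d e : ℕ) : dd e1 (NN f b c d e) = NN f (b+1) c d e := by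
  unfold NN
  rw [Function.iterate_succ_apply']

theorem dd2_NN {f : V4 → A} (hf : ContDiff ℝ ∞ f) (b c d e : ℕ) :
    dd e2 (NN f b c d e) = NN f b (c+1) d e := by
  unfold NN
  rw [dd_iterate_comm (dd_iterate_smooth (dd_iterate_smooth (dd_iterate_smooth hf _ _) _ _) _ _),
    Function.iterate_succ_apply']

theorem dd3_NN {f : V4 → A} (hf : ContDiff ℝ ∞ f) (b c d e : ℕ) :
    dd e3 (NN f b c d e) = NN f b c (d+1) e := by
  unfold NN
  rw [dd_iterate_comm (dd_iterate_smooth (dd_iterate_smooth (dd_iterate_smooth hf _ _) _ _) _ _),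
    dd_iterate_comm ((dd_iterate_smooth (dd_iterate_smooth hf _ _) _ _)),
    Function.iterate_succ_apply']

theorem dd4_NN {f : V4 → A} (hf : ContDiff ℝ ∞ f) (b c d e : ℕ) :
    dd e4 (NN f b c d e) = NN f b c d (e+1) := by
  unfold NN
  rw [dd_iterate_comm (dd_iterate_smooth (dd_iterate_smooth (dd_iterate_smooth hf _ _) _ _) _ _),
    dd_iterate_comm ((dd_iterate_smooth (dd_iterate_smooth hf _ _) _ _)),
    dd_iterate_comm (dd_iterate_smooth hf _ _),
    Function.iterate_succ_apply']

theorem rowClass_NN {f : V4 → A} (hf : ContDiff ℝ ∞ f)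
    (hi : ∀ b c d e, ∀ w : ℝ × ℝ × ℝ, IntegrableOn (fun ξ => NN f b c d e (ξ, w)) (Iic (0:ℝ)))
    (hl : ∀ b c d e, ∀ w : ℝ × ℝ × ℝ, Tendsto (fun ξ => NN f b c d e (ξ, w)) atBot (𝓝 0)) :
    RowClass (Submodule.span ℝ {h | ∃ b c d e, h = NN f b c d e}) := by
  apply rowClass_span
  · rintro _ ⟨b, c, d, e, rfl⟩; exact NN_smooth hf _ _ _ _
  · rintro _ ⟨b, c, d, e, rfl⟩; rw [dd1_NN]; exact Submodule.subset_span ⟨_, _, _, _, rfl⟩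
  · rintro _ ⟨b, c, d, e, rfl⟩; rw [dd2_NN hf]; exact Submodule.subset_span ⟨_, _, _, _, rfl⟩
  · rintro _ ⟨b, c, d, e, rfl⟩; rw [dd3_NN hf]; exact Submodule.subset_span ⟨_, _, _, _, rfl⟩
  · rintro _ ⟨b, c, d, e, rfl⟩; rw [dd4_NN hf]; exact Submodule.subset_span ⟨_, _, _, _, rfl⟩
  · rintro _ ⟨b, c, d, e, rfl⟩; exact hi _ _ _ _
  · rintro _ ⟨b, c, d, e, rfl⟩; exact hl _ _ _ _

theorem iter_sub {f g : V4 → A} (hf : ContDiff ℝ ∞ f) (hg : ContDiff ℝ ∞ g) (v : V4) (n : ℕ) :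
    (dd v)^[n] (f - g) = (dd v)^[n] f - (dd v)^[n] g := by
  induction n with
  | zero => rfl
  | succ n ih =>
    simp only [Function.iterate_succ_apply', ih]
    exact dd_sub_fun (dd_iterate_smooth hf _ _) (dd_iterate_smooth hg _ _) v

theorem iter_add {f g : V4 → A} (hf : ContDiff ℝ ∞ f) (hg : ContDiff ℝ ∞ g) (v : V4) (n : ℕ) :
    (dd v)^[n] (f + g) = (dd v)^[n] f + (dd v)^[n] g := by
  induction n with
  | zero => rfl
  | succ n ih =>
    simp only [Function.iterate_succ_apply', ih]
    exact dd_add_fun (dd_iterate_smooth hf _ _) (dd_iterate_smooth hg _ _) v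

theorem iter_smul {f : V4 → A} (hf : ContDiff ℝ ∞ f) (k : ℝ) (v : V4) (n : ℕ) :
    (dd v)^[n] (k • f) = k • (dd v)^[n] f := by
  induction n with
  | zero => rfl
  | succ n ih =>
    simp only [Function.iterate_succ_apply', ih]
    exact dd_smul_fun (dd_iterate_smooth hf _ _) k v

theorem kerClass_NN {p : V4 → A} (hp : ContDiff ℝ ∞ p)
    (hy : dd e3 p = dd e1 (dd e1 p) - dd e2 (dd e2 p))
    (ht : dd e4 p = (4:ℝ) • (dd e1 (dd e1 (dd e1 p)) + dd e2 (dd e2 (dd e2 p))))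
    (hb : ∀ a b, ∀ w : ℝ × ℝ, ∃ C : ℝ, ∀ z ζ : ℝ, ‖NN p a b 0 0 (z, ζ, w)‖ ≤ C) :
    KerClass (Submodule.span ℝ {h | ∃ a b, h = NN p a b 0 0}) := by
  have s1 := dd_smooth hp e1
  have s11 := dd_smooth s1 e1
  have s111 := dd_smooth s11 e1
  have s2 := dd_smooth hp e2
  have s22 := dd_smooth s2 e2
  have s222 := dd_smooth s22 e2
  have sa : ContDiff ℝ ∞ (dd e1 (dd e1 (dd e1 p)) + dd e2 (dd e2 (dd e2 p))) := s111.add s222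
  apply kerClass_span
  · rintro _ ⟨b, c, rfl⟩; exact NN_smooth hp _ _ _ _
  · rintro _ ⟨b, c, rfl⟩; rw [dd1_NN]; exact Submodule.subset_span ⟨_, _, rfl⟩
  · rintro _ ⟨b, c, rfl⟩; rw [dd2_NN hp]; exact Submodule.subset_span ⟨_, _, rfl⟩
  · rintro _ ⟨b, c, rfl⟩
    have : dd e3 (NN p b c 0 0) = NN p (b+1+1) c 0 0 - NN p b (c+1+1) 0 0 := by
      rw [← dd1_NN, ← dd1_NN, ← dd2_NN hp, ← dd2_NN hp, dd3_NN hp]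
      simp only [NN, Function.iterate_zero, id, Function.iterate_succ, Function.comp]
      rw [hy, iter_sub s11 s22, iter_sub (dd_iterate_smooth s11 _ _) (dd_iterate_smooth s22 _ _)]
      simp only [dd_iterate_comm (dd_iterate_smooth hp _ _),
        dd_iterate_comm (dd_iterate_smooth s1 _ _), dd_iterate_comm hp,
        dd_iterate_comm (dd_iterate_smooth s2 _ _), dd_iterate_comm s1, dd_iterate_comm s2]
    rw [this]
    exact Submodule.sub_mem _ (Submodule.subset_span ⟨_, _, rfl⟩) (Submodule.subset_span ⟨_, _, rfl⟩)
  · rintro _ ⟨b, c, rfl⟩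
    have : dd e4 (NN p b c 0 0) = (4:ℝ) • (NN p (b+1+1+1) c 0 0 + NN p b (c+1+1+1) 0 0) := by
      rw [← dd1_NN, ← dd1_NN, ← dd1_NN, ← dd2_NN hp, ← dd2_NN hp, ← dd2_NN hp, dd4_NN hp]
      simp only [NN, Function.iterate_zero, id, Function.iterate_succ, Function.comp]
      rw [ht, iter_smul sa, iter_smul (dd_iterate_smooth sa _ _),
        iter_add s111 s222, iter_add (dd_iterate_smooth s111 _ _) (dd_iterate_smooth s222 _ _)]
      simp only [dd_iterate_comm (dd_iterate_smooth hp _ _),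
        dd_iterate_comm (dd_iterate_smooth s1 _ _), dd_iterate_comm hp,
        dd_iterate_comm (dd_iterate_smooth s2 _ _), dd_iterate_comm s1, dd_iterate_comm s2,
        dd_iterate_comm (dd_iterate_smooth s11 _ _),
        dd_iterate_comm (dd_iterate_smooth s22 _ _), dd_iterate_comm s11, dd_iterate_comm s22]
    rw [this]
    exact Submodule.smul_mem _ _ (Submodule.add_mem _ (Submodule.subset_span ⟨_, _, rfl⟩)
      (Submodule.subset_span ⟨_, _, rfl⟩))
  · rintro _ ⟨b, c, rfl⟩; exact hb _ _
end spans
end NCKP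

namespace NCKP
open Set Topology
open scoped ContDiff ENNReal
set_option linter.unusedSectionVars false
section mats
variable {m : ℕ}

/-- Matrices with the operator norm, as a type of its own. -/
def MM (m : ℕ) : Type := Mat m

noncomputable instance : NormedRing (MM m) :=
  (Matrix.linftyOpNormedRing : NormedRing (Matrix (Fin m) (Fin m) ℂ))

noncomputable instance : NormedAlgebra ℝ (MM m) :=
  letI : SeminormedRing (Matrix (Fin m) (Fin m) ℂ) := Matrix.linftyOpSemiNormedRing
  (Matrix.linftyOpNormedAlgebra : NormedAlgebra ℝ (Matrix (Fin m) (Fin m) ℂ))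

instance : FiniteDimensional ℝ (MM m) :=
  (inferInstance : Module.Finite ℝ (Matrix (Fin m) (Fin m) ℂ))

/-- entry as a continuous linear map -/
noncomputable def ent (i j : Fin m) : MM m →L[ℝ] ℂ :=
  LinearMap.toContinuousLinearMap
    ({ toFun := fun M => M i j, map_add' := fun _ _ => rfl, map_smul' := fun _ _ => rfl } :
      MM m →ₗ[ℝ] ℂ)

/-- single-entry matrix as a continuous linear map -/
noncomputable def sgl (i j : Fin m) : ℂ →L[ℝ] MM m :=
  LinearMap.toContinuousLinearMap
    ({ toFun := fun z => (Matrix.single i j z : Mat m),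
       map_add' := fun _ _ => Matrix.single_add _ _ _ _,
       map_smul' := fun c z => (Matrix.smul_single c i j z).symm } : ℂ →ₗ[ℝ] MM m)

theorem ent_apply (i j : Fin m) (M : MM m) : ent i j M = M i j := rfl

theorem mat_sum (M : MM m) : M = ∑ i, ∑ j, sgl i j (M i j) := Matrix.matrix_eq_sum_single M

theorem mat_fun {α : Type*} (F : α → MM m) : F = fun a => ∑ i, ∑ j, sgl i j (F a i j) :=
  funext fun a => mat_sum (F a)

instance : CompleteSpace (MM m) := FiniteDimensional.complete ℝ (MM m)

theorem mat_smooth {F : V4 → MM m} (h : ∀ i j, ContDiff ℝ ∞ (fun v => F v i j)) :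
    ContDiff ℝ ∞ F := by
  rw [mat_fun F]
  exact ContDiff.sum fun i _ => ContDiff.sum fun j _ => (sgl i j).contDiff.comp (h i j)

theorem mat_int {F : ℝ → MM m} {s : Set ℝ} (h : ∀ i j, IntegrableOn (fun v => F v i j) s) :
    IntegrableOn F s := by
  rw [mat_fun F]
  exact integrable_finsetSum _ fun i _ => integrable_finsetSum _ fun j _ =>
    (sgl i j).integrable_comp (h i j)

theorem mat_lim {F : ℝ → MM m} {l : Filter ℝ} (h : ∀ i j, Tendsto (fun v => F v i j) l (𝓝 0)) :
    Tendsto F l (𝓝 0) := by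
  rw [mat_fun F]
  have : Tendsto (fun a => ∑ i, ∑ j, sgl i j (F a i j)) l
      (𝓝 (∑ i : Fin m, ∑ j : Fin m, sgl i j 0)) :=
    tendsto_finsetSum _ fun i _ => tendsto_finsetSum _ fun j _ =>
      ((sgl i j).continuous.tendsto 0).comp (h i j)
  simpa using this

theorem mat_bdd {ι : Type*} {F : ι → MM m} {C : ℝ} (h : ∀ a i j, ‖F a i j‖ ≤ C) :
    ∃ C', ∀ a, ‖F a‖ ≤ C' := by
  have hb : ∀ i j : Fin m, ∃ B, 0 < B ∧ ∀ z, ‖sgl i j z‖ ≤ B * ‖z‖ := fun i j => (sgl i j).bound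
  choose B hB0 hB using hb
  refine ⟨∑ i : Fin m, ∑ j : Fin m, B i j * C, fun a => ?_⟩
  conv_lhs => rw [mat_sum (F a)]
  refine (norm_sum_le _ _).trans (Finset.sum_le_sum fun i _ => ?_)
  refine (norm_sum_le _ _).trans (Finset.sum_le_sum fun j _ => ?_)
  exact (hB i j _).trans (mul_le_mul_of_nonneg_left (h a i j) (hB0 i j).le)

theorem mat_integral {F : ℝ → MM m} {s : Set ℝ} (h : IntegrableOn F s) (i j : Fin m) :
    (∫ x in s, F x) i j = ∫ x in s, F x i j :=
  ((ent i j).integral_comp_comm h).symm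

theorem ent_dd {F : V4 → MM m} (hF : ContDiff ℝ ∞ F) (v : V4) (i j : Fin m) :
    (fun w => dd v F w i j) = dd v (fun w => F w i j) := by
  funext w
  have := ((ent i j).hasFDerivAt.comp w (smooth_hasFDerivAt hF w)).fderiv
  exact (DFunLike.congr_fun this v).symm

theorem ent_iter {F : V4 → MM m} (hF : ContDiff ℝ ∞ F) (v : V4) (n : ℕ) (i j : Fin m) :
    (fun w => (dd v)^[n] F w i j) = (dd v)^[n] (fun w => F w i j) := by
  induction n with
  | zero => rfl
  | succ n ih =>
    rw [Function.iterate_succ_apply', Function.iterate_succ_apply', ← ih]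
    exact ent_dd (dd_iterate_smooth hF _ _) v i j

theorem ent_NN {F : V4 → MM m} (hF : ContDiff ℝ ∞ F) (b c d e : ℕ) (i j : Fin m) (w : V4) :
    NN F b c d e w i j = NN (fun w => F w i j) b c d e w := by
  unfold NN
  rw [← ent_iter hF, ← ent_iter (dd_iterate_smooth hF _ _),
    ← ent_iter (dd_iterate_smooth (dd_iterate_smooth hF _ _) _ _),
    ← ent_iter (dd_iterate_smooth (dd_iterate_smooth (dd_iterate_smooth hF _ _) _ _) _ _)]

theorem NN_iter {E : Type*} [NormedAddCommGroup E] [NormedSpace ℝ E]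
    {f : V4 → E} (hf : ContDiff ℝ ∞ f) (a b c d : ℕ) (z x y t : ℝ) :
    iteratedDeriv a (fun z => iteratedDeriv b (fun x => iteratedDeriv c (fun y =>
      iteratedDeriv d (fun t => f (z, x, y, t)) t) y) x) z = NN f a b c d (z, x, y, t) := by
  have s1 := dd_iterate_smooth hf e4 d
  have s2 := dd_iterate_smooth s1 e3 c
  have s3 := dd_iterate_smooth s2 e2 b
  simp only [iteratedDeriv_coord4 hf]
  have h3 := fun z x y => iteratedDeriv_coord3 s1 c z x y t
  simp only [h3]
  have h2 := fun z x => iteratedDeriv_coord2 s2 b z x y t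
  simp only [h2]
  exact iteratedDeriv_coord1 s3 a z x y t

end mats
end NCKP

namespace NCKP
open Set Topology
open scoped ContDiff ENNReal
set_option linter.unusedSectionVars false
section inst
variable {m : ℕ}

theorem MM_ext {a b : MM m} (h : ∀ i j, ent i j a = ent i j b) : a = b := Matrix.ext h

/-- `g` at `z = 0` -/
def rf (g : ℝ → ℝ → ℝ → ℝ → ℝ → Mat m) : V4 → MM m := fun w => g 0 w.1 w.2.1 w.2.2.1 w.2.2.2

/-- `g` with parameters packed -/
def gf (g : ℝ → ℝ → ℝ → ℝ → ℝ → Mat m) : ℝ → ℝ → (ℝ × ℝ × ℝ) → MM m :=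
  fun z ζ w => g z ζ w.1 w.2.1 w.2.2

/-- uncurried `p` -/
def pf (p : Ker4 m) : V4 → MM m := fun w => p w.1 w.2.1 w.2.2.1 w.2.2.2

theorem rf_smooth (g : ℝ → ℝ → ℝ → ℝ → ℝ → Mat m)
    (hgsmooth : ∀ i j : Fin m, ContDiff ℝ (⊤ : ℕ∞)
      (fun v : ℝ × ℝ × ℝ × ℝ × ℝ => g v.1 v.2.1 v.2.2.1 v.2.2.2.1 v.2.2.2.2 i j)) :
    ContDiff ℝ ∞ (rf g) := by
  apply mat_smooth
  intro i j
  have h : ContDiff ℝ ∞ (fun w : V4 => ((0:ℝ), w)) := contDiff_const.prodMk contDiff_id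
  exact (hgsmooth i j).comp h

theorem rf_NN (g : ℝ → ℝ → ℝ → ℝ → ℝ → Mat m) (hr : ContDiff ℝ ∞ (rf g)) (b c d e : ℕ)
    (ζ x y t : ℝ) (i j : Fin m) :
    ent i j (NN (rf g) b c d e (ζ, x, y, t)) = D5 0 b c d e g 0 ζ x y t i j := by
  have hs : ContDiff ℝ ∞ (fun w => rf g w i j) := (ent i j).contDiff.comp hr
  refine (ent_NN hr b c d e i j (ζ, x, y, t)).trans ((NN_iter hs b c d e ζ x y t).symm.trans ?_)
  simp only [D5, iteratedDeriv_zero]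
  rfl

theorem pf_NN (p : Ker4 m) (hr : ContDiff ℝ ∞ (pf p)) (a b : ℕ)
    (z ζ y t : ℝ) (i j : Fin m) :
    ent i j (NN (pf p) a b 0 0 (z, ζ, y, t)) = pder4 a b p z ζ y t i j := by
  have hs : ContDiff ℝ ∞ (fun w => pf p w i j) := (ent i j).contDiff.comp hr
  refine (ent_NN hr a b 0 0 i j (z, ζ, y, t)).trans ((NN_iter hs a b 0 0 z ζ y t).symm.trans ?_)
  simp only [iteratedDeriv_zero]
  rfl

theorem point_id (p : Ker4 m)
    (hp : IsScattering4 p) (hlin : LinearisedKP p)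
    (g : ℝ → ℝ → ℝ → ℝ → ℝ → Mat m)
    (hr : ContDiff ℝ ∞ (rf g))
    (hgdecay : ∀ (a b c d e : ℕ) (x y t : ℝ),
      KernelDecay (fun z ζ => D5 a b c d e g z ζ x y t))
    (hGLM : ∀ (x y t : ℝ), ∀ z ∈ Set.Iic (0:ℝ), ∀ ζ ∈ Set.Iic (0:ℝ),
      p (z + x) (ζ + x) y t = g z ζ x y t
        - Matrix.of (fun i j =>
            ∫ ξ in Set.Iic (0:ℝ), (g z ξ x y t * p (ξ + x) (ζ + x) y t) i j))
    (hGLMmirror : ∀ (x y t : ℝ), ∀ z ∈ Set.Iic (0:ℝ), ∀ ζ ∈ Set.Iic (0:ℝ),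
      p (z + x) (ζ + x) y t = g z ζ x y t
        - Matrix.of (fun i j =>
            ∫ ξ in Set.Iic (0:ℝ), (p (z + x) (ξ + x) y t * g ξ ζ x y t) i j)) :
    ∀ w : V4, w.1 = 0 → 3 * dd e3 (dd e3 (rf g)) w = dd e2 (dd e4 (rf g)) w
      - dd e2 (dd e2 (dd e2 (dd e2 (rf g)))) w
      + 6 * (dd e2 (dd e2 (rf g)) w * dd e2 (rf g) w + dd e2 (rf g) w * dd e2 (dd e2 (rf g)) w)
      + 6 * (dd e3 (rf g) w * dd e2 (rf g) w - dd e2 (rf g) w * dd e3 (rf g) w) := by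
  have hps : ContDiff ℝ ∞ (pf p) := mat_smooth hp.1
  have hpb : ∀ a b, ∀ w : ℝ × ℝ, ∃ C : ℝ, ∀ z ζ : ℝ, ‖NN (pf p) a b 0 0 (z, ζ, w)‖ ≤ C := by
    rintro a b ⟨y, t⟩
    obtain ⟨C, hC⟩ := (hp.2 a b y t).1
    obtain ⟨C', hC'⟩ := mat_bdd (ι := ℝ × ℝ)
      (F := fun v => NN (pf p) a b 0 0 (v.1, v.2, y, t)) (C := C) (by
        intro v i j
        have := hC v.1 v.2 i j
        beta_reduce at this
        rw [← pf_NN p hps] at this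
        exact this)
    exact ⟨C', fun z ζ => hC' (z, ζ)⟩
  have hy : dd e3 (pf p) = dd e1 (dd e1 (pf p)) - dd e2 (dd e2 (pf p)) := by
    funext ⟨z, ζ, y, t⟩
    apply MM_ext
    intro i j
    have h1 := hlin.1 z ζ y t i j
    rw [Matrix.sub_apply, ← pf_NN p hps, ← pf_NN p hps] at h1
    have hs : ContDiff ℝ ∞ (fun w => pf p w i j) := (ent i j).contDiff.comp hps
    have h2 := iteratedDeriv_coord3 hs 1 z ζ y t
    rw [iteratedDeriv_one] at h2
    have h3 := congrFun (ent_dd hps e3 i j) (z, ζ, y, t)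
    exact h3.trans (h2.symm.trans (h1.trans (map_sub (ent i j) _ _).symm))
  have ht : dd e4 (pf p) = (4:ℝ) • (dd e1 (dd e1 (dd e1 (pf p))) + dd e2 (dd e2 (dd e2 (pf p)))) := by
    funext ⟨z, ζ, y, t⟩
    apply MM_ext
    intro i j
    have h1 := hlin.2 z ζ y t i j
    rw [Matrix.add_apply, ← pf_NN p hps, ← pf_NN p hps, ← map_add] at h1
    have hs : ContDiff ℝ ∞ (fun w => pf p w i j) := (ent i j).contDiff.comp hps
    have h2 := iteratedDeriv_coord4 hs 1 z ζ y t
    rw [iteratedDeriv_one] at h2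
    have h3 := congrFun (ent_dd hps e4 i j) (z, ζ, y, t)
    refine h3.trans (h2.symm.trans (h1.trans ?_))
    have h4 := map_smul (ent i j) (4:ℝ) (NN (pf p) 3 0 0 0 (z, ζ, y, t) + NN (pf p) 0 3 0 0 (z, ζ, y, t))
    refine Eq.trans ?_ h4.symm
    rw [Complex.real_smul]
    norm_num
  have hS := rowClass_NN hr (by
      rintro b c d e ⟨x, y, t⟩
      apply mat_int
      intro i j
      have := (hgdecay 0 b c d e x y t).2.2.1 0 i j
      simp only [← rf_NN g hr] at this
      exact this) (by
      rintro b c d e ⟨x, y, t⟩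
      apply mat_lim
      intro i j
      have := (hgdecay 0 b c d e x y t).2.2.2.2 0 i j
      simp only [← rf_NN g hr] at this
      exact this)
  have hP := kerClass_NN hps hy ht hpb
  have hrS : rf g ∈ Submodule.span ℝ {h | ∃ b c d e, h = NN (rf g) b c d e} :=
    Submodule.subset_span ⟨0, 0, 0, 0, rfl⟩
  have hpS : pf p ∈ Submodule.span ℝ {h | ∃ a b, h = NN (pf p) a b 0 0} :=
    Submodule.subset_span ⟨0, 0, rfl⟩
  have hG : ∀ ζ (w : ℝ × ℝ × ℝ), IntegrableOn
      (fun z => gf g z ζ w) (Iic (0:ℝ)) := by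
    rintro ζ ⟨x, y, t⟩
    apply mat_int
    intro i j
    exact (hgdecay 0 0 0 0 0 x y t).2.1 ζ i j
  refine final_id hS hP hrS hpS hy ht ?_
    (gf g) hG ?_
  · rintro ⟨ζ, x, y, t⟩ hw
    apply MM_ext
    intro i j
    have h1 := congrFun (congrFun (hGLM x y t 0 self_mem_Iic ζ hw) i) j
    rw [zero_add, Matrix.sub_apply, Matrix.of_apply] at h1
    have h2 := mat_integral (CC_integrable hS hP hrS hpS (ζ, x, y, t)) i j
    have h3 : g 0 ζ x y t i j = p x (ζ + x) y t i j +
      ∫ ξ in Iic (0:ℝ), (g 0 ξ x y t * p (ξ + x) (ζ + x) y t) i j := by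
      rw [h1]; ring
    refine h3.trans ?_
    refine Eq.trans ?_ (map_add (ent i j) _ _).symm
    exact congrArg₂ _ rfl h2.symm
  · rintro ⟨x, y, t⟩ z hz ζ hζ
    apply MM_ext
    intro i j
    have h1 := congrFun (congrFun (hGLMmirror x y t z hz ζ hζ) i) j
    have hint : IntegrableOn (fun ξ => pf p (z + x, ξ + x, y, t) * gf g ξ ζ (x, y, t))
        (Iic (0:ℝ)) := by
      obtain ⟨C, hC⟩ := hpb 0 0 (y, t)
      have hc := hps.continuous
      refine Integrable.mono' ((hG ζ (x, y, t)).norm.const_mul C) ?_ ?_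
      · refine AEStronglyMeasurable.mul ?_ (hG ζ (x, y, t)).aestronglyMeasurable
        apply Continuous.aestronglyMeasurable; fun_prop
      · refine ae_of_all _ fun ξ => ?_
        exact (norm_mul_le _ _).trans (mul_le_mul_of_nonneg_right (hC _ _) (norm_nonneg _))
    have h2 := mat_integral hint i j
    rw [Matrix.sub_apply, Matrix.of_apply] at h1
    refine h1.trans ?_
    refine Eq.trans ?_ (map_sub (ent i j) _ _).symm
    exact congrArg₂ _ rfl h2.symm
end inst
end NCKP

namespace NCKP
open Set Topology
open scoped ContDiff ENNReal
set_option linter.unusedSectionVars false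
section fin2
variable {m : ℕ}

theorem bdd_Iic {E : Type*} [NormedAddCommGroup E] {f : ℝ → E} (hf : Continuous f)
    (hl : Tendsto f atBot (𝓝 0)) (a : ℝ) : ∃ C, ∀ x ≤ a, ‖f x‖ ≤ C := by
  have h1 : ∀ᶠ x in atBot, ‖f x‖ ≤ 1 := by
    have := hl.norm
    rw [norm_zero] at this
    exact this.eventually (eventually_le_nhds (by norm_num))
  obtain ⟨b, hb⟩ := eventually_atBot.1 h1
  obtain ⟨C, hC⟩ := (isCompact_Icc (a := b) (b := a)).exists_bound_of_continuousOn hf.continuousOn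
  refine ⟨max 1 C, fun x hx => ?_⟩
  rcases le_total x b with h | h
  · exact (hb x h).trans (le_max_left _ _)
  · exact (hC x ⟨h, hx⟩).trans (le_max_right _ _)

theorem int_mul {A : Type*} [NormedRing A] {f h : ℝ → A} (hf : Continuous f) (hh : Continuous h)
    (hl : Tendsto f atBot (𝓝 0)) {a : ℝ} (hi : IntegrableOn h (Iic a)) :
    IntegrableOn (fun x => f x * h x) (Iic a) := by
  obtain ⟨C, hC⟩ := bdd_Iic hf hl a
  refine Integrable.mono' (hi.norm.const_mul C) (hf.mul hh).aestronglyMeasurable ?_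
  refine (ae_restrict_iff' measurableSet_Iic).2 (ae_of_all _ fun x hx => ?_)
  exact (norm_mul_le _ _).trans (mul_le_mul_of_nonneg_right (hC x hx) (norm_nonneg _))

theorem ft_final {A : Type*} [NormedRing A] [NormedAlgebra ℝ A] [CompleteSpace A]
    {r : V4 → A} (hr : ContDiff ℝ ∞ r) (y t : ℝ)
    (hlim : ∀ c d e, Tendsto (fun x => NN r 0 c d e (0, x, y, t)) atBot (𝓝 0))
    (hint : ∀ c d e a, IntegrableOn (fun x => NN r 0 c d e (0, x, y, t)) (Iic a))
    (hid : ∀ w : V4, w.1 = 0 → 3 * dd e3 (dd e3 r) w = dd e2 (dd e4 r) w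
      - dd e2 (dd e2 (dd e2 (dd e2 r))) w
      + 6 * (dd e2 (dd e2 r) w * dd e2 r w + dd e2 r w * dd e2 (dd e2 r) w)
      + 6 * (dd e3 r w * dd e2 r w - dd e2 r w * dd e3 r w)) (x : ℝ) :
    IntegrableOn (fun x => NN r 0 0 1 0 (0, x, y, t) * NN r 0 1 0 0 (0, x, y, t)
        - NN r 0 1 0 0 (0, x, y, t) * NN r 0 0 1 0 (0, x, y, t)) (Iic x) ∧
    (3:ℝ) • (∫ x in Iic x, NN r 0 0 2 0 (0, x, y, t)) =
      (NN r 0 0 0 1 (0, x, y, t) - NN r 0 3 0 0 (0, x, y, t)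
      + (6:ℝ) • (NN r 0 1 0 0 (0, x, y, t) * NN r 0 1 0 0 (0, x, y, t)))
      + (6:ℝ) • ∫ x in Iic x, (NN r 0 0 1 0 (0, x, y, t) * NN r 0 1 0 0 (0, x, y, t)
        - NN r 0 1 0 0 (0, x, y, t) * NN r 0 0 1 0 (0, x, y, t)) := by
  have three : ∀ x : A, (3:ℝ) • x = 3 * x := by
    intro x; rw [Algebra.smul_def, map_ofNat]
  have six : ∀ x : A, (6:ℝ) • x = 6 * x := by
    intro x; rw [Algebra.smul_def, map_ofNat]
  have hcont : ∀ c d e, Continuous (fun x => NN r 0 c d e (0, x, y, t)) := by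
    intro c d e
    have := (NN_smooth hr 0 c d e).continuous
    fun_prop
  have hder : ∀ c d e x, HasDerivAt (fun x => NN r 0 c d e (0, x, y, t))
      (NN r 0 (c+1) d e (0, x, y, t)) x := by
    intro c d e x
    have := dd_line (NN_smooth hr 0 c d e) (0, 0, y, t) e2 x
    rw [dd2_NN hr] at this
    simpa using this
  have hcomm : IntegrableOn (fun x => NN r 0 0 1 0 (0, x, y, t) * NN r 0 1 0 0 (0, x, y, t)
        - NN r 0 1 0 0 (0, x, y, t) * NN r 0 0 1 0 (0, x, y, t)) (Iic x) :=
    (int_mul (hcont _ _ _) (hcont _ _ _) (hlim _ _ _) (hint _ _ _ x)).sub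
      (int_mul (hcont _ _ _) (hcont _ _ _) (hlim _ _ _) (hint _ _ _ x))
  refine ⟨hcomm, ?_⟩
  have hD : ∀ x' ∈ Iic x, HasDerivAt (fun x => NN r 0 0 0 1 (0, x, y, t) - NN r 0 3 0 0 (0, x, y, t)
      + (6:ℝ) • (NN r 0 1 0 0 (0, x, y, t) * NN r 0 1 0 0 (0, x, y, t)))
      ((3:ℝ) • NN r 0 0 2 0 (0, x', y, t)
        - (6:ℝ) • (NN r 0 0 1 0 (0, x', y, t) * NN r 0 1 0 0 (0, x', y, t)
        - NN r 0 1 0 0 (0, x', y, t) * NN r 0 0 1 0 (0, x', y, t))) x' := by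
    intro x' _
    have h := ((hder 0 0 1 x').sub (hder 3 0 0 x')).add
      (((hder 1 0 0 x').mul (hder 1 0 0 x')).const_smul (6:ℝ))
    have h2 : 3 * NN r 0 0 2 0 (0, x', y, t) = NN r 0 1 0 1 (0, x', y, t)
      - NN r 0 4 0 0 (0, x', y, t)
      + 6 * (NN r 0 2 0 0 (0, x', y, t) * NN r 0 1 0 0 (0, x', y, t)
        + NN r 0 1 0 0 (0, x', y, t) * NN r 0 2 0 0 (0, x', y, t))
      + 6 * (NN r 0 0 1 0 (0, x', y, t) * NN r 0 1 0 0 (0, x', y, t)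
        - NN r 0 1 0 0 (0, x', y, t) * NN r 0 0 1 0 (0, x', y, t)) := hid (0, x', y, t) rfl
    have h3 : (3:ℝ) • NN r 0 0 2 0 (0, x', y, t)
        - (6:ℝ) • (NN r 0 0 1 0 (0, x', y, t) * NN r 0 1 0 0 (0, x', y, t)
        - NN r 0 1 0 0 (0, x', y, t) * NN r 0 0 1 0 (0, x', y, t))
        = NN r 0 1 0 1 (0, x', y, t) - NN r 0 4 0 0 (0, x', y, t)
          + (6:ℝ) • (NN r 0 2 0 0 (0, x', y, t) * NN r 0 1 0 0 (0, x', y, t)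
            + NN r 0 1 0 0 (0, x', y, t) * NN r 0 2 0 0 (0, x', y, t)) := by
      simp only [three, six]
      rw [h2]
      abel
    rw [h3]
    exact h
  have hint1 : IntegrableOn (fun x' => (3:ℝ) • NN r 0 0 2 0 (0, x', y, t)) (Iic x) :=
    (hint 0 2 0 x).smul (3:ℝ)
  have hint2 : IntegrableOn (fun x' => (6:ℝ) • (NN r 0 0 1 0 (0, x', y, t) * NN r 0 1 0 0 (0, x', y, t)
        - NN r 0 1 0 0 (0, x', y, t) * NN r 0 0 1 0 (0, x', y, t))) (Iic x) :=
    Integrable.smul (6:ℝ) hcomm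
  have hl : Tendsto (fun x => NN r 0 0 0 1 (0, x, y, t) - NN r 0 3 0 0 (0, x, y, t)
      + (6:ℝ) • (NN r 0 1 0 0 (0, x, y, t) * NN r 0 1 0 0 (0, x, y, t))) atBot (𝓝 0) := by
    have := ((hlim 0 0 1).sub (hlim 3 0 0)).add (((hlim 1 0 0).mul (hlim 1 0 0)).const_smul (6:ℝ))
    simpa using this
  have h := integral_Iic_of_hasDerivAt_of_tendsto' hD (hint1.sub hint2) hl
  rw [integral_sub hint1 hint2, integral_smul, integral_smul, sub_zero] at h
  rw [← h]
  abel

theorem main_aux (p : Ker4 m)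
    (hp : IsScattering4 p) (hlin : LinearisedKP p)
    (g : ℝ → ℝ → ℝ → ℝ → ℝ → Mat m)
    (hgsmooth : ∀ i j : Fin m, ContDiff ℝ (⊤ : ℕ∞)
      (fun v : ℝ × ℝ × ℝ × ℝ × ℝ => g v.1 v.2.1 v.2.2.1 v.2.2.2.1 v.2.2.2.2 i j))
    (hgdecay : ∀ (a b c d e : ℕ) (x y t : ℝ),
      KernelDecay (fun z ζ => D5 a b c d e g z ζ x y t))
    (hGLM : ∀ (x y t : ℝ), ∀ z ∈ Set.Iic (0:ℝ), ∀ ζ ∈ Set.Iic (0:ℝ),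
      p (z + x) (ζ + x) y t = g z ζ x y t
        - Matrix.of (fun i j =>
            ∫ ξ in Set.Iic (0:ℝ), (g z ξ x y t * p (ξ + x) (ζ + x) y t) i j))
    (hGLMmirror : ∀ (x y t : ℝ), ∀ z ∈ Set.Iic (0:ℝ), ∀ ζ ∈ Set.Iic (0:ℝ),
      p (z + x) (ζ + x) y t = g z ζ x y t
        - Matrix.of (fun i j =>
            ∫ ξ in Set.Iic (0:ℝ), (p (z + x) (ξ + x) y t * g ξ ζ x y t) i j))
    (u : ℝ → ℝ → ℝ → Mat m) (hu : ∀ x y t : ℝ, u x y t = g 0 0 x y t)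
    (hudecay : ∀ (c d e : ℕ) (y t : ℝ) (i j : Fin m),
      Tendsto (fun x => D3 c d e u x y t i j) atBot (nhds 0))
    (huint : ∀ (c d e : ℕ) (y t : ℝ) (i j : Fin m) (a : ℝ),
      IntegrableOn (fun x => D3 c d e u x y t i j) (Set.Iic a)) :
    ∀ x y t : ℝ,
      (Matrix.of (fun i j => ∫ x' in Set.Iic x, D3 0 2 0 u x' y t i j) : Mat m)
      =
      ((1:ℂ)/3) • (D3 0 0 1 u x y t - D3 3 0 0 u x y t)
      + (2:ℕ) • (D3 1 0 0 u x y t * D3 1 0 0 u x y t)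
      + (2:ℕ) • (Matrix.of (fun i j => ∫ x' in Set.Iic x,
          (D3 0 1 0 u x' y t * D3 1 0 0 u x' y t
            - D3 1 0 0 u x' y t * D3 0 1 0 u x' y t) i j) : Mat m) := by
  have hr := rf_smooth g hgsmooth
  have hid := point_id p hp hlin g hr hgdecay hGLM hGLMmirror
  have hu' : u = fun x y t => g 0 0 x y t := by
    funext x y t; exact hu x y t
  have hD : ∀ c d e x y t, D3 c d e u x y t = NN (rf g) 0 c d e (0, x, y, t) := by
    intro c d e x y t
    apply Matrix.ext
    intro i j
    refine Eq.trans ?_ (rf_NN g hr 0 c d e 0 x y t i j).symm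
    rw [hu']
    simp only [D5, iteratedDeriv_zero]
    rfl
  intro x y t
  obtain ⟨hci, hfin⟩ := ft_final hr y t (by
      intro c d e
      apply mat_lim
      intro i j
      have := hudecay c d e y t i j
      simp only [hD] at this
      exact this) (by
      intro c d e a
      apply mat_int
      intro i j
      have := huint c d e y t i j a
      simp only [hD] at this
      exact this) hid x
  have hint : IntegrableOn (fun x => NN (rf g) 0 0 2 0 (0, x, y, t)) (Iic x) := by
    apply mat_int
    intro i j
    have := huint 0 2 0 y t i j x
    simp only [hD] at this
    exact this
  apply Matrix.ext
  intro i j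
  have h1 := mat_integral hint i j
  have h2 := mat_integral hci i j
  have h3 := congrArg (ent i j) hfin
  rw [map_smul, map_add, map_add, map_sub, map_smul, map_smul] at h3
  simp only [Complex.real_smul] at h3
  simp only [Matrix.add_apply, Matrix.smul_apply, Matrix.sub_apply, Matrix.of_apply, hD]
  change (∫ x' in Iic x, NN (rf g) 0 0 2 0 (0, x', y, t) i j) =
    ((1:ℂ)/3) • (ent i j (NN (rf g) 0 0 0 1 (0, x, y, t)) - ent i j (NN (rf g) 0 3 0 0 (0, x, y, t)))
    + 2 • (ent i j (NN (rf g) 0 1 0 0 (0, x, y, t) * NN (rf g) 0 1 0 0 (0, x, y, t)))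
    + 2 • ∫ x' in Iic x, (NN (rf g) 0 0 1 0 (0, x', y, t) * NN (rf g) 0 1 0 0 (0, x', y, t)
        - NN (rf g) 0 1 0 0 (0, x', y, t) * NN (rf g) 0 0 1 0 (0, x', y, t)) i j
  rw [← h1, ← h2]
  change ent i j _ = _ + _ + 2 • ent i j _
  generalize ent i j _ = X1 at h3 ⊢
  push_cast at h3
  simp only [smul_eq_mul, nsmul_eq_mul]
  push_cast
  linear_combination h3 / 3
end fin2
end NCKP

namespace NCKP

/-- **Theorem 1: direct linearisation of the non-commutative KP equation.**
If `p` is a scattering function satisfying the linearised KP constraints, and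
`g = g(z,ζ;x,y,t)` is a smooth decaying solution of the Gelfand–Levitan–Marchenko
equation and its mirror version with `Q = P`, then `u(x,y,t) := g(0,0;x,y,t)`
satisfies the non-commutative potential KP equation
`D u_y = (1/3)(u_t − u_{xxx}) + 2u_x² + 2∂_x⁻¹[u_y,u_x]` with `D = ∂_x⁻¹∂_y`. -/
theorem direct_linearisation_KP {m : ℕ} (p : Ker4 m)
    (hp : IsScattering4 p) (hlin : LinearisedKP p)
    (g : ℝ → ℝ → ℝ → ℝ → ℝ → Mat m)
    (hgsmooth : ∀ i j : Fin m, ContDiff ℝ (⊤ : ℕ∞)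
      (fun v : ℝ × ℝ × ℝ × ℝ × ℝ => g v.1 v.2.1 v.2.2.1 v.2.2.2.1 v.2.2.2.2 i j))
    (hgdecay : ∀ (a b c d e : ℕ) (x y t : ℝ),
      KernelDecay (fun z ζ => D5 a b c d e g z ζ x y t))
    (hGLM : ∀ (x y t : ℝ), ∀ z ∈ Set.Iic (0:ℝ), ∀ ζ ∈ Set.Iic (0:ℝ),
      p (z + x) (ζ + x) y t = g z ζ x y t
        - Matrix.of (fun i j =>
            ∫ ξ in Set.Iic (0:ℝ), (g z ξ x y t * p (ξ + x) (ζ + x) y t) i j))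
    (hGLMmirror : ∀ (x y t : ℝ), ∀ z ∈ Set.Iic (0:ℝ), ∀ ζ ∈ Set.Iic (0:ℝ),
      p (z + x) (ζ + x) y t = g z ζ x y t
        - Matrix.of (fun i j =>
            ∫ ξ in Set.Iic (0:ℝ), (p (z + x) (ξ + x) y t * g ξ ζ x y t) i j))
    (u : ℝ → ℝ → ℝ → Mat m) (hu : ∀ x y t : ℝ, u x y t = g 0 0 x y t)
    (hudecay : ∀ (c d e : ℕ) (y t : ℝ) (i j : Fin m),
      Tendsto (fun x => D3 c d e u x y t i j) atBot (nhds 0))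
    (huint : ∀ (c d e : ℕ) (y t : ℝ) (i j : Fin m) (a : ℝ),
      IntegrableOn (fun x => D3 c d e u x y t i j) (Set.Iic a)) :
    ∀ x y t : ℝ,
      (Matrix.of (fun i j => ∫ x' in Set.Iic x, D3 0 2 0 u x' y t i j) : Mat m)
      =
      ((1:ℂ)/3) • (D3 0 0 1 u x y t - D3 3 0 0 u x y t)
      + (2:ℕ) • (D3 1 0 0 u x y t * D3 1 0 0 u x y t)
      + (2:ℕ) • (Matrix.of (fun i j => ∫ x' in Set.Iic x,
          (D3 0 1 0 u x' y t * D3 1 0 0 u x' y t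
            - D3 1 0 0 u x' y t * D3 0 1 0 u x' y t) i j) : Mat m) := by

  exact main_aux p hp hlin g hgsmooth hgdecay hGLM hGLMmirror u hu hudecay huint

end NCKP
end

section
/- The lifted mKP constraint identity (equation (4.4)). Let p be a scattering function, x ∈ ℝ, and w₊, w₋ resolvent kernels for p. Then for all z, ζ ∈ (-∞,0]: [V](z,0)·{V P_{[1,0]} V†}(0,ζ) − {V P_{[1,0]} V†}(z,0)·[V](0,ζ) = ∂_x[V P_{[1,0]} V†](z,ζ) − [V P_{[2,0]} V](z,ζ), where ∂_x denotes the partial derivative in the parameter x. In word notation: ad_{[V]}{V P_{[1,0]} V†} = ∂_x[V P_{[1,0]} V†] − [V P_{[2,0]} V]. -/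
open MeasureTheory Filter

namespace NCKP

/-- `[V A V†] := [[V A V†]] − [[V† (−A) V]]`. -/
noncomputable def brkVAVd {m : ℕ} (wp wm A : Ker m) : Ker m :=
  vAv wp A wm - vAv wm (-A) wp

/-- `{V A V†} := [[V A V†]] + [[V† (−A) V]]`. -/
noncomputable def symVAVd {m : ℕ} (wp wm A : Ker m) : Ker m :=
  vAv wp A wm + vAv wm (-A) wp

/-- `[V A V] := [[V A V]] − [[V† (−A) V†]]`. -/
noncomputable def brkVAV {m : ℕ} (wp wm A : Ker m) : Ker m :=
  vAv wp A wp - vAv wm (-A) wm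

/-- `{V A V} := [[V A V]] + [[V† (−A) V†]]`. -/
noncomputable def symVAV {m : ℕ} (wp wm A : Ker m) : Ker m :=
  vAv wp A wp + vAv wm (-A) wm

/-- `[V A V† B V] := [[V A V† B V]] − [[V† (−A) V (−B) V†]]`. -/
noncomputable def brkVAVdBV {m : ℕ} (wp wm A B : Ker m) : Ker m :=
  vAvBv wp A wm B wp - vAvBv wm (-A) wp (-B) wm

/-- `{V A V† B V} := [[V A V† B V]] + [[V† (−A) V (−B) V†]]`. -/
noncomputable def symVAVdBV {m : ℕ} (wp wm A B : Ker m) : Ker m :=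
  vAvBv wp A wm B wp + vAvBv wm (-A) wp (-B) wm

/-- `[V A V B V] := [[V A V B V]] − [[V† (−A) V† (−B) V†]]`. -/
noncomputable def brkVAVBV {m : ℕ} (wp wm A B : Ker m) : Ker m :=
  vAvBv wp A wp B wp - vAvBv wm (-A) wm (-B) wm

/-- `[V A V B V†] := [[V A V B V†]] − [[V† (−A) V† (−B) V]]`. -/
noncomputable def brkVAVBVd {m : ℕ} (wp wm A B : Ker m) : Ker m :=
  vAvBv wp A wp B wm - vAvBv wm (-A) wm (-B) wp

/-- `[V A V† B V†] := [[V A V† B V†]] − [[V† (−A) V (−B) V]]`. -/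
noncomputable def brkVAVdBVd {m : ℕ} (wp wm A B : Ker m) : Ker m :=
  vAvBv wp A wm B wm - vAvBv wm (-A) wp (-B) wp

end NCKP

namespace NCKP

section Core

set_option linter.unusedSectionVars false

open Set Topology

variable {E : Type*} [NormedRing E] [NormedAlgebra ℝ E] [CompleteSpace E]

structure Nice (k : ℝ → ℝ → E) : Prop where
  cont : Continuous (fun v : ℝ × ℝ => k v.1 v.2)
  bdd : ∃ C, ∀ z ζ, ‖k z ζ‖ ≤ C
  int1 : ∀ ζ, IntegrableOn (fun z => k z ζ) (Iic (0:ℝ))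
  int2 : ∀ z, IntegrableOn (fun ζ => k z ζ) (Iic (0:ℝ))
  lim1 : ∀ ζ, Tendsto (fun z => k z ζ) atBot (𝓝 0)
  lim2 : ∀ z, Tendsto (fun ζ => k z ζ) atBot (𝓝 0)

def D1 (k k' : ℝ → ℝ → E) : Prop := ∀ z ζ, HasDerivAt (fun z' => k z' ζ) (k' z ζ) z
def D2 (k k' : ℝ → ℝ → E) : Prop := ∀ z ζ, HasDerivAt (fun ζ' => k z ζ') (k' z ζ) ζ

noncomputable def cv (k l : ℝ → ℝ → E) : ℝ → ℝ → E :=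
  fun z ζ => ∫ ξ in Iic (0:ℝ), k z ξ * l ξ ζ

theorem int_bdd_mul {f g : ℝ → E} {S : Set ℝ} {C : ℝ} (hf : Continuous f)
    (hC : ∀ ξ, ‖f ξ‖ ≤ C) (hg : IntegrableOn g S) : IntegrableOn (fun ξ => f ξ * g ξ) S := by
  refine Integrable.mono' (hg.norm.const_mul C)
    (hf.aestronglyMeasurable.mul hg.aestronglyMeasurable) (Eventually.of_forall fun ξ => ?_)
  exact (norm_mul_le _ _).trans (mul_le_mul_of_nonneg_right (hC ξ) (norm_nonneg _))

theorem int_mul_bdd {f g : ℝ → E} {S : Set ℝ} {C : ℝ} (hf : Continuous f)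
    (hC : ∀ ξ, ‖f ξ‖ ≤ C) (hg : IntegrableOn g S) : IntegrableOn (fun ξ => g ξ * f ξ) S := by
  refine Integrable.mono' (hg.norm.mul_const C)
    (hg.aestronglyMeasurable.mul hf.aestronglyMeasurable) (Eventually.of_forall fun ξ => ?_)
  exact (norm_mul_le _ _).trans (mul_le_mul_of_nonneg_left (hC ξ) (norm_nonneg _))

theorem int_const_mul {g : ℝ → E} {S : Set ℝ} (c : E) (hg : IntegrableOn g S) :
    ∫ ξ in S, c * g ξ = c * ∫ ξ in S, g ξ :=
  (ContinuousLinearMap.mul ℝ E c).integral_comp_comm hg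

theorem int_mul_const {g : ℝ → E} {S : Set ℝ} (c : E) (hg : IntegrableOn g S) :
    ∫ ξ in S, g ξ * c = (∫ ξ in S, g ξ) * c :=
  ((ContinuousLinearMap.mul ℝ E).flip c).integral_comp_comm hg

theorem fub {k n : ℝ → E} {l : ℝ → ℝ → E} {S T : Set ℝ} {C : ℝ}
    (hk : IntegrableOn k S) (hn : IntegrableOn n T)
    (hl : Continuous (fun v : ℝ × ℝ => l v.1 v.2)) (hC : ∀ z ζ, ‖l z ζ‖ ≤ C) :
    IntegrableOn (fun ξ => k ξ * ∫ η in T, l ξ η * n η) S ∧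
    ∫ ξ in S, k ξ * (∫ η in T, l ξ η * n η) = ∫ η in T, (∫ ξ in S, k ξ * l ξ η) * n η := by
  have hint : Integrable (Function.uncurry fun ξ η => k ξ * l ξ η * n η)
      ((volume.restrict S).prod (volume.restrict T)) := by
    have h0 := (hk.norm.mul_prod hn.norm).const_mul C
    refine h0.mono' ?_ (Eventually.of_forall fun v => ?_)
    · exact ((hk.aestronglyMeasurable.comp_fst).mul hl.aestronglyMeasurable).mul
        (hn.aestronglyMeasurable.comp_snd)
    · simp only [Function.uncurry]
      have h1 := norm_mul₃_le (a := k v.1) (b := l v.1 v.2) (c := n v.2)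
      have h2 := hC v.1 v.2
      have h3 : ‖k v.1‖ * ‖l v.1 v.2‖ * ‖n v.2‖ ≤ ‖k v.1‖ * C * ‖n v.2‖ := by gcongr
      linarith
  have e1 : ∀ ξ, k ξ * (∫ η in T, l ξ η * n η) = ∫ η in T, k ξ * l ξ η * n η := by
    intro ξ
    rw [← int_const_mul]
    · simp only [mul_assoc]
    · exact int_bdd_mul (by fun_prop) (hC ξ) hn
  have e2 : ∀ η, (∫ ξ in S, k ξ * l ξ η) * n η = ∫ ξ in S, k ξ * l ξ η * n η := by
    intro η
    rw [← int_mul_const]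
    exact int_mul_bdd (f := fun ξ => l ξ η) (by fun_prop) (fun ξ => hC ξ η) hk
  simp only [e1, e2]
  exact ⟨hint.integral_prod_left, integral_integral_swap hint⟩

theorem Nice.c1 {k : ℝ → ℝ → E} (hk : Nice k) (ζ : ℝ) : Continuous (fun z => k z ζ) :=
  hk.cont.comp (by fun_prop : Continuous fun z : ℝ => (z, ζ))

theorem Nice.c2 {k : ℝ → ℝ → E} (hk : Nice k) (z : ℝ) : Continuous (fun ζ => k z ζ) :=
  hk.cont.comp (by fun_prop : Continuous fun ζ : ℝ => (z, ζ))

theorem Nice.mulInt {k l : ℝ → ℝ → E} (hk : Nice k) (hl : Nice l) (z ζ : ℝ) :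
    IntegrableOn (fun ξ => k z ξ * l ξ ζ) (Iic 0) := by
  obtain ⟨C, hC⟩ := hk.bdd
  exact int_bdd_mul (hk.c2 z) (hC z) (hl.int1 ζ)

theorem cv_assoc {k l n : ℝ → ℝ → E} (hk : Nice k) (hl : Nice l) (hn : Nice n) (z ζ : ℝ) :
    IntegrableOn (fun ξ => k z ξ * cv l n ξ ζ) (Iic 0) ∧
      cv k (cv l n) z ζ = cv (cv k l) n z ζ := by
  obtain ⟨C, hC⟩ := hl.bdd
  exact fub (hk.int2 z) (hn.int1 ζ) hl.cont hC

theorem cv_D1 {k k' l : ℝ → ℝ → E} (hk : Nice k) (hk' : Nice k') (hl : Nice l) (h : D1 k k') :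
    D1 (cv k l) (cv k' l) := by
  intro z ζ
  obtain ⟨C, hC⟩ := hk'.bdd
  refine (hasDerivAt_integral_of_dominated_loc_of_deriv_le (s := univ) univ_mem
    (bound := fun ξ => C * ‖l ξ ζ‖) (F' := fun z ξ => k' z ξ * l ξ ζ)
    (Eventually.of_forall fun z' => (hk.mulInt hl z' ζ).aestronglyMeasurable)
    (hk.mulInt hl z ζ) (hk'.mulInt hl z ζ).aestronglyMeasurable
    (Eventually.of_forall fun ξ z' _ => ?_) ((hl.int1 ζ).norm.const_mul C)
    (Eventually.of_forall fun ξ z' _ => ?_)).2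
  · exact (norm_mul_le _ _).trans (mul_le_mul_of_nonneg_right (hC _ ξ) (norm_nonneg _))
  · exact (h z' ξ).mul_const _

theorem cv_D2 {k l l' : ℝ → ℝ → E} (hk : Nice k) (hl : Nice l) (hl' : Nice l') (h : D2 l l') :
    D2 (cv k l) (cv k l') := by
  intro z ζ
  obtain ⟨C, hC⟩ := hl'.bdd
  refine (hasDerivAt_integral_of_dominated_loc_of_deriv_le (s := univ) univ_mem
    (bound := fun ξ => ‖k z ξ‖ * C) (F := fun ζ ξ => k z ξ * l ξ ζ)
    (F' := fun ζ ξ => k z ξ * l' ξ ζ)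
    (Eventually.of_forall fun z' => (hk.mulInt hl z z').aestronglyMeasurable)
    (hk.mulInt hl z ζ) (hk.mulInt hl' z ζ).aestronglyMeasurable
    (Eventually.of_forall fun ξ z' _ => ?_) ((hk.int2 z).norm.mul_const C)
    (Eventually.of_forall fun ξ z' _ => ?_)).2
  · exact (norm_mul_le _ _).trans (mul_le_mul_of_nonneg_left (hC ξ _) (norm_nonneg _))
  · exact (h ξ z').const_mul _

theorem cv_ibp {k k' l l' : ℝ → ℝ → E} (hk : Nice k) (hk' : Nice k') (hl : Nice l)
    (hl' : Nice l') (h : D2 k k') (h' : D1 l l') (z ζ : ℝ) :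
    cv k' l z ζ = k z 0 * l 0 ζ - cv k l' z ζ := by
  have h0 := integral_Iic_of_hasDerivAt_of_tendsto' (a := (0:ℝ)) (m := (0:E))
    (f := fun ξ => k z ξ * l ξ ζ) (f' := fun ξ => k' z ξ * l ξ ζ + k z ξ * l' ξ ζ)
    (fun ξ _ => (h z ξ).mul (h' ξ ζ)) ((hk'.mulInt hl z ζ).add (hk.mulInt hl' z ζ))
    (by simpa using (hk.lim2 z).mul (hl.lim1 ζ))
  rw [integral_add (hk'.mulInt hl z ζ) (hk.mulInt hl' z ζ)] at h0
  simp only [cv]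
  rw [eq_sub_iff_add_eq, h0, sub_zero]

theorem int5 {f1 f2 f3 f4 f5 : ℝ → E} {S : Set ℝ} (h1 : IntegrableOn f1 S)
    (h2 : IntegrableOn f2 S) (h3 : IntegrableOn f3 S) (h4 : IntegrableOn f4 S)
    (h5 : IntegrableOn f5 S) :
    ∫ ξ in S, (f1 ξ - f2 ξ - f3 ξ + f4 ξ - f5 ξ) =
      (∫ ξ in S, f1 ξ) - (∫ ξ in S, f2 ξ) - (∫ ξ in S, f3 ξ) + (∫ ξ in S, f4 ξ)
        - ∫ ξ in S, f5 ξ := by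
  have j1 : IntegrableOn (fun ξ => f1 ξ - f2 ξ) S := h1.sub h2
  have j2 : IntegrableOn (fun ξ => f1 ξ - f2 ξ - f3 ξ) S := j1.sub h3
  have j3 : IntegrableOn (fun ξ => f1 ξ - f2 ξ - f3 ξ + f4 ξ) S := j2.add h4
  rw [integral_sub j3 h5, integral_add j2 h4, integral_sub j1 h3, integral_sub h1 h2]

theorem int4 {f1 f2 f3 f4 : ℝ → E} {S : Set ℝ} (h1 : IntegrableOn f1 S)
    (h2 : IntegrableOn f2 S) (h3 : IntegrableOn f3 S) (h4 : IntegrableOn f4 S) :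
    ∫ ξ in S, (-(f1 ξ) - f2 ξ - f3 ξ + f4 ξ) =
      -(∫ ξ in S, f1 ξ) - (∫ ξ in S, f2 ξ) - (∫ ξ in S, f3 ξ) + (∫ ξ in S, f4 ξ) := by
  have j0 : IntegrableOn (fun ξ => -(f1 ξ)) S := h1.neg
  have j1 : IntegrableOn (fun ξ => -(f1 ξ) - f2 ξ) S := j0.sub h2
  have j2 : IntegrableOn (fun ξ => -(f1 ξ) - f2 ξ - f3 ξ) S := j1.sub h3
  rw [integral_add j2 h4, integral_sub j1 h3, integral_sub j0 h2, integral_neg]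

/-- `V A V†` for `A = q_z - q_ζ`. -/
theorem core1 {q q1 q2 a a2 b b1 : ℝ → ℝ → E}
    (hq : Nice q) (hq1 : Nice q1) (hq2 : Nice q2) (ha : Nice a)
    (hb : Nice b) (hb1 : Nice b1)
    (dq1 : D1 q q1) (dq2 : D2 q q2) (da2 : D2 a a2) (db1 : D1 b b1)
    (ea : ∀ z ζ, a z ζ = q z ζ + cv a q z ζ)
    (eb : ∀ z ζ, b z ζ = -(q z ζ) - cv q b z ζ) (z ζ : ℝ) :
    ((q1 - q2) + cv (q1 - q2) b + cv a ((q1 - q2) + cv (q1 - q2) b)) z ζ =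
      - a2 z ζ - b1 z ζ - a z 0 * b 0 ζ ∧
    IntegrableOn (fun ξ => a z ξ * ((q1 - q2) + cv (q1 - q2) b) ξ ζ) (Iic 0) := by
  have s1 : ∀ z ζ, cv q1 b z ζ = - q1 z ζ - b1 z ζ := by
    intro z ζ
    refine (cv_D1 hq hq1 hb dq1 z ζ).unique ?_
    have := (dq1 z ζ).neg.sub (db1 z ζ)
    refine this.congr_of_eventuallyEq (Eventually.of_forall fun z' => ?_)
    have := eb z' ζ
    simp only [Pi.sub_apply, Pi.neg_apply]
    rw [this]; abel
  have s2 : ∀ z ζ, cv a q2 z ζ = a2 z ζ - q2 z ζ := by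
    intro z ζ
    refine (cv_D2 ha hq hq2 dq2 z ζ).unique ?_
    have := (da2 z ζ).sub (dq2 z ζ)
    refine this.congr_of_eventuallyEq (Eventually.of_forall fun z' => ?_)
    have := ea z z'
    simp only [Pi.sub_apply]
    rw [this]; abel
  have s3 : ∀ z ζ, (q1 - q2 + cv (q1 - q2) b) z ζ =
      - q2 z ζ - b1 z ζ - q z 0 * b 0 ζ + cv q b1 z ζ := by
    intro z ζ
    have h1 : cv (q1 - q2) b z ζ = cv q1 b z ζ - cv q2 b z ζ := by
      simp only [cv, Pi.sub_apply, sub_mul]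
      exact integral_sub (hq1.mulInt hb z ζ) (hq2.mulInt hb z ζ)
    simp only [Pi.add_apply, Pi.sub_apply]
    rw [h1, s1, cv_ibp hq hq2 hb hb1 dq2 db1]
    abel
  have s6 : IntegrableOn (fun ξ => a z ξ * ((q1 - q2) + cv (q1 - q2) b) ξ ζ) (Iic 0) := by
    have i4' : IntegrableOn (fun ξ => a z ξ * q ξ 0 * b 0 ζ) (Iic 0) :=
      (ha.mulInt hq z 0).mul_const _
    refine ((((ha.mulInt hq2 z ζ).neg.sub (ha.mulInt hb1 z ζ)).sub i4').add
      (cv_assoc ha hq hb1 z ζ).1).congr (Eventually.of_forall fun ξ => ?_)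
    beta_reduce; rw [s3]; simp only [Pi.add_apply, Pi.sub_apply, Pi.neg_apply]; noncomm_ring
  refine ⟨?_, s6⟩
  have s4 : cv a (q1 - q2 + cv (q1 - q2) b) z ζ =
      - cv a q2 z ζ - cv a b1 z ζ - (cv a q z 0) * b 0 ζ + cv (cv a q) b1 z ζ := by
    have i2 := ha.mulInt hq2 z ζ
    have i3 := ha.mulInt hb1 z ζ
    have i4 := ha.mulInt hq z 0
    have i4' : IntegrableOn (fun ξ => a z ξ * q ξ 0 * b 0 ζ) (Iic 0) := i4.mul_const _
    obtain ⟨i5, e5⟩ := cv_assoc ha hq hb1 z ζ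
    rw [← e5]
    have : cv a (q1 - q2 + cv (q1 - q2) b) z ζ = ∫ ξ in Iic (0:ℝ),
      (- (a z ξ * q2 ξ ζ) - a z ξ * b1 ξ ζ - a z ξ * q ξ 0 * b 0 ζ + a z ξ * cv q b1 ξ ζ) := by
      simp only [cv] at s3 ⊢
      congr 1; ext ξ
      rw [s3]; noncomm_ring
    rw [this, int4 i2 i3 i4' i5, int_mul_const _ i4]
    rfl
  have s5 : cv (cv a q) b1 z ζ = cv a b1 z ζ - cv q b1 z ζ := by
    have : ∀ ξ, cv a q z ξ = a z ξ - q z ξ := fun ξ => by rw [ea z ξ]; abel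
    simp only [cv] at this ⊢
    rw [← integral_sub (ha.mulInt hb1 z ζ) (hq.mulInt hb1 z ζ)]
    congr 1; ext ξ
    rw [this, sub_mul]
  rw [Pi.add_apply, Pi.add_apply, s3, s4, s5, s2]
  have : cv a q z 0 = a z 0 - q z 0 := by rw [ea z 0]; abel
  rw [this]
  noncomm_ring

/-- `V A V` for `A = q_zz - q_ζζ`. -/
theorem core2 {q q1 q2 q11 q22 a a1 a2 a11 a22 : ℝ → ℝ → E}
    (hq : Nice q) (hq1 : Nice q1) (hq2 : Nice q2) (hq11 : Nice q11) (hq22 : Nice q22)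
    (ha : Nice a) (ha1 : Nice a1) (ha11 : Nice a11)
    (dq1 : D1 q q1) (dq2 : D2 q q2) (dq11 : D1 q1 q11) (dq22 : D2 q2 q22)
    (da1 : D1 a a1) (da2 : D2 a a2) (da11 : D1 a1 a11) (da22 : D2 a2 a22)
    (ea : ∀ z ζ, a z ζ = q z ζ + cv a q z ζ)
    (ea' : ∀ z ζ, a z ζ = q z ζ + cv q a z ζ) (z ζ : ℝ) :
    ((q11 - q22) + cv (q11 - q22) a + cv a ((q11 - q22) + cv (q11 - q22) a)) z ζ =
      a11 z ζ - a22 z ζ + a z 0 * a1 0 ζ - a2 z 0 * a 0 ζ ∧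
    IntegrableOn (fun ξ => a z ξ * ((q11 - q22) + cv (q11 - q22) a) ξ ζ) (Iic 0) := by
  have s1 : ∀ z ζ, cv q1 a z ζ = a1 z ζ - q1 z ζ := by
    intro z ζ
    refine (cv_D1 hq hq1 ha dq1 z ζ).unique ?_
    refine ((da1 z ζ).sub (dq1 z ζ)).congr_of_eventuallyEq (Eventually.of_forall fun z' => ?_)
    have := ea' z' ζ
    simp only [Pi.sub_apply]
    rw [this]; abel
  have s11 : ∀ z ζ, cv q11 a z ζ = a11 z ζ - q11 z ζ := by
    intro z ζ
    refine (cv_D1 hq1 hq11 ha dq11 z ζ).unique ?_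
    refine ((da11 z ζ).sub (dq11 z ζ)).congr_of_eventuallyEq (Eventually.of_forall fun z' => ?_)
    exact s1 z' ζ
  have s2 : ∀ z ζ, cv a q2 z ζ = a2 z ζ - q2 z ζ := by
    intro z ζ
    refine (cv_D2 ha hq hq2 dq2 z ζ).unique ?_
    refine ((da2 z ζ).sub (dq2 z ζ)).congr_of_eventuallyEq (Eventually.of_forall fun z' => ?_)
    have := ea z z'
    simp only [Pi.sub_apply]
    rw [this]; abel
  have s22 : ∀ z ζ, cv a q22 z ζ = a22 z ζ - q22 z ζ := by
    intro z ζ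
    refine (cv_D2 ha hq2 hq22 dq22 z ζ).unique ?_
    refine ((da22 z ζ).sub (dq22 z ζ)).congr_of_eventuallyEq (Eventually.of_forall fun z' => ?_)
    exact s2 z z'
  have s3 : ∀ z ζ, (q11 - q22 + cv (q11 - q22) a) z ζ =
      a11 z ζ - q22 z ζ - q2 z 0 * a 0 ζ + q z 0 * a1 0 ζ - cv q a11 z ζ := by
    intro z ζ
    have h1 : cv (q11 - q22) a z ζ = cv q11 a z ζ - cv q22 a z ζ := by
      simp only [cv, Pi.sub_apply, sub_mul]
      exact integral_sub (hq11.mulInt ha z ζ) (hq22.mulInt ha z ζ)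
    simp only [Pi.add_apply, Pi.sub_apply]
    rw [h1, s11, cv_ibp hq2 hq22 ha ha1 dq22 da1, cv_ibp hq hq2 ha1 ha11 dq2 da11]
    abel
  have s6 : IntegrableOn (fun ξ => a z ξ * ((q11 - q22) + cv (q11 - q22) a) ξ ζ) (Iic 0) := by
    have i3' : IntegrableOn (fun ξ => a z ξ * q2 ξ 0 * a 0 ζ) (Iic 0) :=
      (ha.mulInt hq2 z 0).mul_const _
    have i4' : IntegrableOn (fun ξ => a z ξ * q ξ 0 * a1 0 ζ) (Iic 0) :=
      (ha.mulInt hq z 0).mul_const _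
    refine (((((ha.mulInt ha11 z ζ).sub (ha.mulInt hq22 z ζ)).sub i3').add i4').sub
      (cv_assoc ha hq ha11 z ζ).1).congr (Eventually.of_forall fun ξ => ?_)
    beta_reduce; rw [s3]; simp only [Pi.add_apply, Pi.sub_apply]; noncomm_ring
  refine ⟨?_, s6⟩
  have s4 : cv a (q11 - q22 + cv (q11 - q22) a) z ζ =
      cv a a11 z ζ - cv a q22 z ζ - cv a q2 z 0 * a 0 ζ + cv a q z 0 * a1 0 ζ
        - cv (cv a q) a11 z ζ := by
    have i1 := ha.mulInt ha11 z ζ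
    have i2 := ha.mulInt hq22 z ζ
    have i3 := ha.mulInt hq2 z 0
    have i4 := ha.mulInt hq z 0
    have i3' : IntegrableOn (fun ξ => a z ξ * q2 ξ 0 * a 0 ζ) (Iic 0) := i3.mul_const _
    have i4' : IntegrableOn (fun ξ => a z ξ * q ξ 0 * a1 0 ζ) (Iic 0) := i4.mul_const _
    obtain ⟨i5, e5⟩ := cv_assoc ha hq ha11 z ζ
    rw [← e5]
    have : cv a (q11 - q22 + cv (q11 - q22) a) z ζ = ∫ ξ in Iic (0:ℝ),
      (a z ξ * a11 ξ ζ - a z ξ * q22 ξ ζ - a z ξ * q2 ξ 0 * a 0 ζ + a z ξ * q ξ 0 * a1 0 ζ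
        - a z ξ * cv q a11 ξ ζ) := by
      simp only [cv] at s3 ⊢
      congr 1; ext ξ
      rw [s3]; noncomm_ring
    rw [this, int5 i1 i2 i3' i4' i5, int_mul_const _ i4, int_mul_const _ i3]
    rfl
  have s5 : cv (cv a q) a11 z ζ = cv a a11 z ζ - cv q a11 z ζ := by
    have : ∀ ξ, cv a q z ξ = a z ξ - q z ξ := fun ξ => by rw [ea z ξ]; abel
    simp only [cv] at this ⊢
    rw [← integral_sub (ha.mulInt ha11 z ζ) (hq.mulInt ha11 z ζ)]
    congr 1; ext ξ
    rw [this, sub_mul]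
  rw [Pi.add_apply, Pi.add_apply, s3, s4, s5, s2, s22]
  have : cv a q z 0 = a z 0 - q z 0 := by rw [ea z 0]; abel
  rw [this]
  noncomm_ring

theorem shift_int (g : ℝ → E) (x : ℝ) :
    ∫ ξ in Iic (0:ℝ), g (ξ + x) = ∫ ξ in Iic x, g ξ := by
  have := (measurePreserving_add_right (volume : Measure ℝ) x).setIntegral_preimage_emb
    (measurableEmbedding_addRight x) g (Iic x)
  simpa using this

theorem shift_intOn {g : ℝ → E} {x : ℝ} (h : IntegrableOn g (Iic 0)) :
    IntegrableOn (fun ξ => g (ξ - x)) (Iic x) := by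
  have := (measurePreserving_sub_right (volume : Measure ℝ) x).integrableOn_comp_preimage
    (measurableEmbedding_subRight x) (f := g) (s := Iic 0)
  have h2 := this.2 h
  simpa [Function.comp_def] using h2

/-- Two-parameter resolvent identity. -/
theorem two_param {p : ℝ → ℝ → E} {w : ℝ → ℝ → ℝ → E} (hpc : Continuous fun v : ℝ × ℝ => p v.1 v.2)
    (hpb : ∃ C, ∀ z ζ, ‖p z ζ‖ ≤ C) (hw : ∀ x, Nice (w x))
    (e1 : ∀ x z ζ, w x z ζ = p (z + x) (ζ + x) + cv (fun z ζ => p (z + x) (ζ + x)) (w x) z ζ)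
    (e2 : ∀ x z ζ, w x z ζ = p (z + x) (ζ + x) + cv (w x) (fun z ζ => p (z + x) (ζ + x)) z ζ)
    (x x' z ζ : ℝ) :
    w x' (z - x') (ζ - x') - w x (z - x) (ζ - x) =
      ∫ ξ in x..x', w x (z - x) (ξ - x) * w x' (ξ - x') (ζ - x') := by
  obtain ⟨C, hC⟩ := hpb
  obtain ⟨C1, hC1⟩ := (hw x).bdd
  obtain ⟨C2, hC2⟩ := (hw x').bdd
  have E1 : ∀ z ζ, w x' (z - x') (ζ - x') = p z ζ + ∫ ξ in Iic x', p z ξ * w x' (ξ - x') (ζ - x') := by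
    intro z ζ
    rw [← shift_int, e1]
    simp [cv]
  have E2 : ∀ z ζ, w x (z - x) (ζ - x) = p z ζ + ∫ ξ in Iic x, w x (z - x) (ξ - x) * p ξ ζ := by
    intro z ζ
    rw [← shift_int, e2]
    simp [cv]
  have ik : IntegrableOn (fun ξ => w x (z - x) (ξ - x)) (Iic x) := shift_intOn ((hw x).int2 _)
  have iN : IntegrableOn (fun ξ => w x' (ξ - x') (ζ - x')) (Iic x') :=
    shift_intOn (g := fun ξ => w x' ξ (ζ - x')) ((hw x').int1 _)
  have ck : Continuous (fun ξ => w x (z - x) (ξ - x)) :=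
    ((hw x).c2 _).comp (by fun_prop : Continuous fun ξ : ℝ => ξ - x)
  have cN : Continuous (fun ξ => w x' (ξ - x') (ζ - x')) :=
    ((hw x').c1 _).comp (by fun_prop : Continuous fun ξ : ℝ => ξ - x')
  have iA : IntegrableOn (fun ξ => w x (z - x) (ξ - x) * w x' (ξ - x') (ζ - x')) (Iic x) :=
    int_mul_bdd cN (fun ξ => hC2 _ _) ik
  have iB : IntegrableOn (fun ξ => w x (z - x) (ξ - x) * w x' (ξ - x') (ζ - x')) (Iic x') :=
    int_bdd_mul ck (fun ξ => hC1 _ _) iN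
  have iC : IntegrableOn (fun ξ => w x (z - x) (ξ - x) * p ξ ζ) (Iic x) :=
    int_mul_bdd (f := fun ξ => p ξ ζ) (by fun_prop) (fun ξ => hC _ _) ik
  have iD : IntegrableOn (fun ξ => p z ξ * w x' (ξ - x') (ζ - x')) (Iic x') :=
    int_bdd_mul (f := fun ξ => p z ξ) (by fun_prop) (fun ξ => hC _ _) iN
  obtain ⟨-, F⟩ := fub ik iN hpc hC
  have F1 : ∀ ξ, ∫ η in Iic x', p ξ η * w x' (η - x') (ζ - x') =
      w x' (ξ - x') (ζ - x') - p ξ ζ := fun ξ => by rw [E1 ξ ζ]; abel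
  have F2 : ∀ η, ∫ ξ in Iic x, w x (z - x) (ξ - x) * p ξ η =
      w x (z - x) (η - x) - p z η := fun η => by rw [E2 z η]; abel
  simp only [F1, F2, mul_sub, sub_mul] at F
  rw [integral_sub iA iC, integral_sub iB iD, F1, F2] at F
  rw [← intervalIntegral.integral_Iic_sub_Iic iA iB]
  rw [← sub_eq_zero] at F ⊢
  rw [← F]
  abel

theorem x_deriv {p : ℝ → ℝ → E} {w : ℝ → ℝ → ℝ → E} (hpc : Continuous fun v : ℝ × ℝ => p v.1 v.2)
    (hpb : ∃ C, ∀ z ζ, ‖p z ζ‖ ≤ C) (hw : ∀ x, Nice (w x))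
    (hc : Continuous (fun v : ℝ × ℝ × ℝ => w v.1 v.2.1 v.2.2))
    (e1 : ∀ x z ζ, w x z ζ = p (z + x) (ζ + x) + cv (fun z ζ => p (z + x) (ζ + x)) (w x) z ζ)
    (e2 : ∀ x z ζ, w x z ζ = p (z + x) (ζ + x) + cv (w x) (fun z ζ => p (z + x) (ζ + x)) z ζ)
    (x z ζ : ℝ) :
    HasDerivAt (fun x' => w x' (z - x') (ζ - x')) (w x (z - x) 0 * w x 0 (ζ - x)) x := by
  rw [hasDerivAt_iff_isLittleO, Asymptotics.isLittleO_iff]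
  intro ε hε
  set Φ : ℝ × ℝ → E := fun v => w x (z - x) (v.2 - x) * w v.1 (v.2 - v.1) (ζ - v.1) with hΦ
  have hΦc : Continuous Φ := by
    have a1 : Continuous fun v : ℝ × ℝ => w x (z - x) (v.2 - x) :=
      hc.comp (by fun_prop : Continuous fun v : ℝ × ℝ => (x, z - x, v.2 - x))
    have a2 : Continuous fun v : ℝ × ℝ => w v.1 (v.2 - v.1) (ζ - v.1) :=
      hc.comp (by fun_prop : Continuous fun v : ℝ × ℝ => (v.1, v.2 - v.1, ζ - v.1))
    exact a1.mul a2
  obtain ⟨δ, hδ, hd⟩ := Metric.continuousAt_iff.1 (hΦc.continuousAt (x := (x, x))) ε hε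
  filter_upwards [Metric.ball_mem_nhds x hδ] with x' hx'
  rw [two_param hpc hpb hw e1 e2]
  have hcon : (x' - x) • (w x (z - x) 0 * w x 0 (ζ - x)) = ∫ ξ in x..x', Φ (x, x) := by
    rw [intervalIntegral.integral_const]; simp [hΦ]
  have hi : Continuous fun ξ => Φ (x', ξ) := hΦc.comp (by fun_prop)
  rw [hcon]
  change ‖(∫ ξ in x..x', Φ (x', ξ)) - _‖ ≤ _
  rw [← intervalIntegral.integral_sub (hi.intervalIntegrable _ _)
    (continuous_const.intervalIntegrable _ _)]
  rw [Real.norm_eq_abs]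
  refine intervalIntegral.norm_integral_le_of_norm_le_const fun ξ hξ => ?_
  rw [← dist_eq_norm]
  refine (hd ?_).le
  rw [Prod.dist_eq]
  refine max_lt hx' ?_
  refine lt_of_le_of_lt ?_ hx'
  simp only [Real.dist_eq]
  rw [Set.mem_uIoc] at hξ
  rcases hξ with h | h
  · rw [abs_of_nonneg (by linarith), abs_of_nonneg (by linarith)]; linarith
  · rw [abs_of_nonpos (by linarith), abs_of_nonpos (by linarith)]; linarith

theorem Nice.neg {k : ℝ → ℝ → E} (hk : Nice k) : Nice (-k) where
  cont := hk.cont.neg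
  bdd := by
    obtain ⟨C, hC⟩ := hk.bdd
    exact ⟨C, fun z ζ => by simpa using hC z ζ⟩
  int1 ζ := (hk.int1 ζ).neg
  int2 z := (hk.int2 z).neg
  lim1 ζ := by simpa using (hk.lim1 ζ).neg
  lim2 z := by simpa using (hk.lim2 z).neg

theorem D1.neg {k k' : ℝ → ℝ → E} (h : D1 k k') : D1 (-k) (-k') := fun z ζ => (h z ζ).neg
theorem D2.neg {k k' : ℝ → ℝ → E} (h : D2 k k') : D2 (-k) (-k') := fun z ζ => (h z ζ).neg

theorem cv_neg_left (k l : ℝ → ℝ → E) : cv (-k) l = - cv k l := by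
  ext z ζ
  simp [cv, integral_neg]

theorem cv_neg_right (k l : ℝ → ℝ → E) : cv k (-l) = - cv k l := by
  ext z ζ
  simp [cv, integral_neg]

/-- `a` is the resolvent kernel of `q`. -/
structure Res (q a : ℝ → ℝ → E) : Prop where
  left : ∀ z ζ, a z ζ = q z ζ + cv q a z ζ
  right : ∀ z ζ, a z ζ = q z ζ + cv a q z ζ

/-- Directional derivative. -/
noncomputable def pd (v : ℝ × ℝ × ℝ) (f : ℝ × ℝ × ℝ → E) : ℝ × ℝ × ℝ → E :=
  fun y => fderiv ℝ f y v

abbrev ex : ℝ × ℝ × ℝ := (1, 0, 0)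
abbrev ez : ℝ × ℝ × ℝ := (0, 1, 0)
abbrev eζ : ℝ × ℝ × ℝ := (0, 0, 1)

theorem pd_smooth {f : ℝ × ℝ × ℝ → E} (hf : ContDiff ℝ (⊤ : ℕ∞) f) (v : ℝ × ℝ × ℝ) :
    ContDiff ℝ (⊤ : ℕ∞) (pd v f) :=
  (hf.fderiv_right (m := (⊤ : ℕ∞)) (by simp)).clm_apply contDiff_const

theorem pd_comm {f : ℝ × ℝ × ℝ → E} (hf : ContDiff ℝ (⊤ : ℕ∞) f) (u v y : ℝ × ℝ × ℝ) :
    pd u (pd v f) y = pd v (pd u f) y := by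
  have hd : DifferentiableAt ℝ (fderiv ℝ f) y :=
    ((hf.fderiv_right (m := (⊤ : ℕ∞)) (by simp)).differentiable (by simp)) y
  have h1 : ∀ u v : ℝ × ℝ × ℝ, pd u (pd v f) y = fderiv ℝ (fderiv ℝ f) y u v := by
    intro u v
    have : HasFDerivAt (pd v f) ((ContinuousLinearMap.apply ℝ E v).comp
        (fderiv ℝ (fderiv ℝ f) y)) y :=
      (ContinuousLinearMap.apply ℝ E v).hasFDerivAt.comp y hd.hasFDerivAt
    simp only [pd] at this ⊢
    rw [this.fderiv]; rfl
  rw [h1, h1]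
  have := (hf.contDiffAt (x := y)).isSymmSndFDerivAt
    (by rw [minSmoothness_of_isRCLikeNormedField]; exact WithTop.coe_le_coe.2 (le_top : (2 : ℕ∞) ≤ ⊤))
  exact this u v

theorem hasD_x {f : ℝ × ℝ × ℝ → E} (hf : ContDiff ℝ (⊤ : ℕ∞) f) (x z ζ : ℝ) :
    HasDerivAt (fun x' => f (x', z, ζ)) (pd ex f (x, z, ζ)) x := by
  have h := (hf.differentiable (by simp) (x, z, ζ)).hasFDerivAt
  have h2 : HasDerivAt (fun x' : ℝ => (x', z, ζ)) ex x :=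
    (hasDerivAt_id x).prodMk ((hasDerivAt_const x z).prodMk (hasDerivAt_const x ζ))
  exact h.comp_hasDerivAt x h2

theorem hasD_z {f : ℝ × ℝ × ℝ → E} (hf : ContDiff ℝ (⊤ : ℕ∞) f) (x z ζ : ℝ) :
    HasDerivAt (fun z' => f (x, z', ζ)) (pd ez f (x, z, ζ)) z := by
  have h := (hf.differentiable (by simp) (x, z, ζ)).hasFDerivAt
  have h2 : HasDerivAt (fun z' : ℝ => (x, z', ζ)) ez z :=
    (hasDerivAt_const z x).prodMk ((hasDerivAt_id z).prodMk (hasDerivAt_const z ζ))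
  exact h.comp_hasDerivAt z h2

theorem hasD_ζ {f : ℝ × ℝ × ℝ → E} (hf : ContDiff ℝ (⊤ : ℕ∞) f) (x z ζ : ℝ) :
    HasDerivAt (fun ζ' => f (x, z, ζ')) (pd eζ f (x, z, ζ)) ζ := by
  have h := (hf.differentiable (by simp) (x, z, ζ)).hasFDerivAt
  have h2 : HasDerivAt (fun ζ' : ℝ => (x, z, ζ')) eζ ζ :=
    (hasDerivAt_const ζ x).prodMk ((hasDerivAt_const ζ z).prodMk (hasDerivAt_id ζ))
  exact h.comp_hasDerivAt ζ h2

def XEq (f : ℝ × ℝ × ℝ → E) : Prop := ∀ x z ζ,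
  pd ex f (x, z, ζ) = pd ez f (x, z, ζ) + pd eζ f (x, z, ζ) + f (x, z, 0) * f (x, 0, ζ)

theorem xeq {p : ℝ → ℝ → E} {w : ℝ → ℝ → ℝ → E} (hpc : Continuous fun v : ℝ × ℝ => p v.1 v.2)
    (hpb : ∃ C, ∀ z ζ, ‖p z ζ‖ ≤ C) (hw : ∀ x, Nice (w x))
    (hc : ContDiff ℝ (⊤ : ℕ∞) (fun v : ℝ × ℝ × ℝ => w v.1 v.2.1 v.2.2))
    (hr : ∀ x, Res (fun z ζ => p (z + x) (ζ + x)) (w x)) :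
    XEq (fun v : ℝ × ℝ × ℝ => w v.1 v.2.1 v.2.2) := by
  intro x z ζ
  have h1 := x_deriv hpc hpb hw hc.continuous (fun x => (hr x).left) (fun x => (hr x).right)
    x (z + x) (ζ + x)
  have h := (hc.differentiable (by simp) (x, z + x - x, ζ + x - x)).hasFDerivAt
  have h2 : HasDerivAt (fun x' : ℝ => (x', z + x - x', ζ + x - x')) ((1, -1, -1) : ℝ × ℝ × ℝ) x :=
    (hasDerivAt_id x).prodMk (((hasDerivAt_id x).const_sub _).prodMk
      ((hasDerivAt_id x).const_sub _))
  have h4 : HasDerivAt (fun x' => w x' (z + x - x') (ζ + x - x')) _ x :=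
    HasFDerivAt.comp_hasDerivAt (f := fun x' : ℝ => (x', z + x - x', ζ + x - x'))
      (l := fun v : ℝ × ℝ × ℝ => w v.1 v.2.1 v.2.2) x h h2
  have h3 := h4.unique h1
  have e : ((1, -1, -1) : ℝ × ℝ × ℝ) = ex - ez - eζ := by simp [ex, ez, eζ]
  rw [e, map_sub, map_sub] at h3
  simp only [add_sub_cancel_right] at h3
  simp only [pd]
  rw [← h3]
  abel

theorem mixed_z {f : ℝ × ℝ × ℝ → E} (hf : ContDiff ℝ (⊤ : ℕ∞) f) (hx : XEq f) (x z ζ : ℝ) :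
    pd ex (pd ez f) (x, z, ζ) = pd ez (pd ez f) (x, z, ζ) + pd ez (pd eζ f) (x, z, ζ)
      + pd ez f (x, z, 0) * f (x, 0, ζ) := by
  rw [pd_comm hf]
  refine (hasD_z (pd_smooth hf _) x z ζ).unique ?_
  have := ((hasD_z (pd_smooth hf ez) x z ζ).add (hasD_z (pd_smooth hf eζ) x z ζ)).add
    ((hasD_z hf x z 0).mul_const (f (x, 0, ζ)))
  exact this.congr_of_eventuallyEq (Eventually.of_forall fun z' => hx x z' ζ)

theorem mixed_ζ {f : ℝ × ℝ × ℝ → E} (hf : ContDiff ℝ (⊤ : ℕ∞) f) (hx : XEq f) (x z ζ : ℝ) :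
    pd ex (pd eζ f) (x, z, ζ) = pd ez (pd eζ f) (x, z, ζ) + pd eζ (pd eζ f) (x, z, ζ)
      + f (x, z, 0) * pd eζ f (x, 0, ζ) := by
  rw [pd_comm hf, pd_comm hf ez eζ]
  refine (hasD_ζ (pd_smooth hf _) x z ζ).unique ?_
  have := ((hasD_ζ (pd_smooth hf ez) x z ζ).add (hasD_ζ (pd_smooth hf eζ) x z ζ)).add
    ((hasD_ζ hf x 0 ζ).const_mul (f (x, z, 0)))
  exact this.congr_of_eventuallyEq (Eventually.of_forall fun ζ' => hx x z ζ')

theorem final {f g : ℝ × ℝ × ℝ → E} (hf : ContDiff ℝ (⊤ : ℕ∞) f) (hg : ContDiff ℝ (⊤ : ℕ∞) g)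
    (hfx : XEq f) (hgx : XEq g) (x z ζ : ℝ) :
    HasDerivAt (fun x' =>
      (- pd eζ f (x', z, ζ) - pd ez g (x', z, ζ) - f (x', z, 0) * g (x', 0, ζ))
      - (- pd eζ g (x', z, ζ) - pd ez f (x', z, ζ) - g (x', z, 0) * f (x', 0, ζ)))
      ((f (x, z, 0) - g (x, z, 0)) *
          ((- pd eζ f (x, 0, ζ) - pd ez g (x, 0, ζ) - f (x, 0, 0) * g (x, 0, ζ))
            + (- pd eζ g (x, 0, ζ) - pd ez f (x, 0, ζ) - g (x, 0, 0) * f (x, 0, ζ)))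
        - ((- pd eζ f (x, z, 0) - pd ez g (x, z, 0) - f (x, z, 0) * g (x, 0, 0))
            + (- pd eζ g (x, z, 0) - pd ez f (x, z, 0) - g (x, z, 0) * f (x, 0, 0)))
          * (f (x, 0, ζ) - g (x, 0, ζ))
        + ((pd ez (pd ez f) (x, z, ζ) - pd eζ (pd eζ f) (x, z, ζ) + f (x, z, 0) * pd ez f (x, 0, ζ)
            - pd eζ f (x, z, 0) * f (x, 0, ζ))
          - (pd ez (pd ez g) (x, z, ζ) - pd eζ (pd eζ g) (x, z, ζ)
            + g (x, z, 0) * pd ez g (x, 0, ζ) - pd eζ g (x, z, 0) * g (x, 0, ζ)))) x := by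
  have h := (((hasD_x (pd_smooth hf eζ) x z ζ).neg.sub (hasD_x (pd_smooth hg ez) x z ζ)).sub
      ((hasD_x hf x z 0).mul (hasD_x hg x 0 ζ))).sub
    (((hasD_x (pd_smooth hg eζ) x z ζ).neg.sub (hasD_x (pd_smooth hf ez) x z ζ)).sub
      ((hasD_x hg x z 0).mul (hasD_x hf x 0 ζ)))
  refine h.congr_deriv ?_
  rw [mixed_z hf hfx, mixed_z hg hgx, mixed_ζ hf hfx, mixed_ζ hg hgx, hfx, hfx, hgx, hgx]
  noncomm_ring

end Core

end NCKP

namespace NCKP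

section MatBridge

open Set Topology

attribute [local instance] Matrix.linftyOpNormedRing Matrix.linftyOpNormedAlgebra

variable {m : ℕ}

/-- The uniformity of the operator norm on matrices. -/
@[reducible] noncomputable def matUnif : UniformSpace (Mat m) :=
  (Matrix.linftyOpNormedRing : NormedRing (Mat m)).toMetricSpace.toPseudoMetricSpace.toUniformSpace

/-- The topology of the operator norm on matrices. -/
@[reducible] noncomputable def matTop : TopologicalSpace (Mat m) :=
  (matUnif (m := m)).toTopologicalSpace

attribute [local instance] matUnif matTop

noncomputable def en (i j : Fin m) : Mat m →L[ℝ] ℂ :=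
  LinearMap.toContinuousLinearMap (Matrix.entryLinearMap ℝ ℂ i j)

noncomputable def ins (i j : Fin m) : ℂ →L[ℝ] Mat m :=
  LinearMap.toContinuousLinearMap (Matrix.singleLinearMap ℝ i j)

theorem en_apply (i j : Fin m) (A : Mat m) : en i j A = A i j := rfl

theorem rep (A : Mat m) : ∑ i, ∑ j, ins i j (A i j) = A :=
  (Matrix.matrix_eq_sum_single A).symm

theorem mat_complete : CompleteSpace (Mat m) := FiniteDimensional.complete ℝ (Mat m)

theorem mat_contDiff {F : Type*} [NormedAddCommGroup F] [NormedSpace ℝ F] {f : F → Mat m}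
    (h : ∀ i j, ContDiff ℝ (⊤ : ℕ∞) (fun v => f v i j)) : ContDiff ℝ (⊤ : ℕ∞) f := by
  have e : f = fun v => ∑ i, ∑ j, ins i j (f v i j) := by ext1 v; exact (rep _).symm
  rw [e]
  exact ContDiff.sum fun i _ => ContDiff.sum fun j _ => (ins i j).contDiff.comp (h i j)

theorem mat_hasDerivAt {f : ℝ → Mat m} {A : Mat m} {x : ℝ}
    (h : ∀ i j, HasDerivAt (fun v => f v i j) (A i j) x) : HasDerivAt f A x := by
  have e : f = fun v => ∑ i, ∑ j, ins i j (f v i j) := by ext1 v; exact (rep _).symm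
  rw [e, ← rep A]
  exact HasDerivAt.fun_sum fun i _ => HasDerivAt.fun_sum fun j _ =>
    (ins i j).hasFDerivAt.comp_hasDerivAt x (h i j)

theorem mat_integrableOn {f : ℝ → Mat m} {S : Set ℝ}
    (h : ∀ i j, IntegrableOn (fun v => f v i j) S) : IntegrableOn f S := by
  have e : f = fun v => ∑ i, ∑ j, ins i j (f v i j) := by ext1 v; exact (rep _).symm
  rw [e]
  exact integrable_finsetSum _ fun i _ => integrable_finsetSum _ fun j _ =>
    (ins i j).integrable_comp (h i j)

theorem mat_tendsto {f : ℝ → Mat m} {l : Filter ℝ}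
    (h : ∀ i j, Tendsto (fun v => f v i j) l (𝓝 0)) : Tendsto f l (𝓝 0) := by
  have e : f = fun v => ∑ i, ∑ j, ins i j (f v i j) := by ext1 v; exact (rep _).symm
  have e0 : (0 : Mat m) = ∑ i : Fin m, ∑ j : Fin m, ins i j 0 := by simp
  rw [e, e0]
  exact tendsto_finsetSum _ fun i _ => tendsto_finsetSum _ fun j _ =>
    ((ins i j).continuous.tendsto 0).comp (h i j)

theorem mat_bdd_s11 {k : Ker m} (h : ∃ C, ∀ (z ζ : ℝ) (i j : Fin m), ‖k z ζ i j‖ ≤ C) :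
    ∃ C, ∀ z ζ, ‖k z ζ‖ ≤ C := by
  obtain ⟨C, hC⟩ := h
  refine ⟨∑ i : Fin m, ∑ j : Fin m, ‖ins i j‖ * C, fun z ζ => ?_⟩
  rw [← rep (k z ζ)]
  refine norm_sum_le_of_le _ fun i _ => norm_sum_le_of_le _ fun j _ => ?_
  exact ((ins i j).le_opNorm _).trans (mul_le_mul_of_nonneg_left (hC z ζ i j) (norm_nonneg _))

theorem conv_eq {k l : Ker m} {z ζ : ℝ} (h : IntegrableOn (fun ξ => k z ξ * l ξ ζ) (Iic 0)) :
    conv k l z ζ = cv k l z ζ := by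
  have := mat_complete (m := m)
  ext i j
  exact (en i j).integral_comp_comm h

/-- Entrywise smooth kernels. -/
def Sm (k : Ker m) : Prop :=
  ∀ i j : Fin m, ContDiff ℝ (⊤ : ℕ∞) (fun v : ℝ × ℝ => k v.1 v.2 i j)

theorem smooth_snd {g : ℝ → ℝ → ℂ} (hg : ContDiff ℝ (⊤ : ℕ∞) (fun v : ℝ × ℝ => g v.1 v.2))
    (b : ℕ) : ContDiff ℝ (⊤ : ℕ∞) (fun v : ℝ × ℝ => iteratedDeriv b (g v.1) v.2) := by
  induction b with
  | zero => simpa using hg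
  | succ b ih =>
    have e : (fun v : ℝ × ℝ => iteratedDeriv (b + 1) (g v.1) v.2) =
        fun v : ℝ × ℝ => fderiv ℝ (fun v : ℝ × ℝ => iteratedDeriv b (g v.1) v.2) v (0, 1) := by
      ext1 v
      rw [iteratedDeriv_succ]
      have h := (ih.differentiable (by simp) (v.1, v.2)).hasFDerivAt
      have h2 : HasDerivAt (fun ζ : ℝ => (v.1, ζ)) ((0, 1) : ℝ × ℝ) v.2 :=
        (hasDerivAt_const v.2 v.1).prodMk (hasDerivAt_id v.2)
      have h3 : HasDerivAt (fun ζ => iteratedDeriv b (g v.1) ζ) _ v.2 := h.comp_hasDerivAt v.2 h2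
      exact h3.deriv
    rw [e]
    exact (ih.fderiv_right (m := (⊤ : ℕ∞)) (by simp)).clm_apply contDiff_const

theorem smooth_fst {g : ℝ → ℝ → ℂ} (hg : ContDiff ℝ (⊤ : ℕ∞) (fun v : ℝ × ℝ => g v.1 v.2))
    (a : ℕ) : ContDiff ℝ (⊤ : ℕ∞)
      (fun v : ℝ × ℝ => iteratedDeriv a (fun z => g z v.2) v.1) := by
  have h1 : ContDiff ℝ (⊤ : ℕ∞) (fun v : ℝ × ℝ => g v.2 v.1) :=
    hg.comp (contDiff_snd.prodMk contDiff_fst)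
  exact (smooth_snd (g := fun ζ z => g z ζ) h1 a).comp (contDiff_snd.prodMk contDiff_fst)

theorem Sm.pder {k : Ker m} (hk : Sm k) (a b : ℕ) : Sm (pder a b k) := fun i j =>
  smooth_fst (g := fun z ζ => iteratedDeriv b (fun ζ' => k z ζ' i j) ζ)
    (smooth_snd (g := fun z ζ => k z ζ i j) (hk i j) b) a

theorem pder_zero (k : Ker m) : pder 0 0 k = k := by
  ext z ζ i j
  simp [pder]

theorem pder_D1 {k : Ker m} (hk : Sm k) (a b : ℕ) : D1 (pder a b k) (pder (a + 1) b k) := by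
  intro z ζ
  refine mat_hasDerivAt fun i j => ?_
  simp only [NCKP.pder, Matrix.of_apply, iteratedDeriv_succ]
  have h : ContDiff ℝ (⊤ : ℕ∞) (fun z' => NCKP.pder a b k z' ζ i j) :=
    (hk.pder a b i j).comp (contDiff_id.prodMk contDiff_const)
  exact (h.differentiable (by simp) z).hasDerivAt

theorem pder_D2 {k : Ker m} (hk : Sm k) (b : ℕ) : D2 (pder 0 b k) (pder 0 (b + 1) k) := by
  intro z ζ
  refine mat_hasDerivAt fun i j => ?_
  have h : ContDiff ℝ (⊤ : ℕ∞) (fun ζ' => NCKP.pder 0 b k z ζ' i j) :=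
    (hk.pder 0 b i j).comp (contDiff_const.prodMk contDiff_id)
  have h2 := (h.differentiable (by simp) ζ).hasDerivAt
  simp only [NCKP.pder, Matrix.of_apply, iteratedDeriv_succ, iteratedDeriv_zero] at h2 ⊢
  exact h2

theorem Sm.cont {k : Ker m} (hk : Sm k) : Continuous (fun v : ℝ × ℝ => k v.1 v.2) :=
  (mat_contDiff (f := fun v : ℝ × ℝ => k v.1 v.2) hk).continuous

theorem nice_of {k : Ker m} (hk : Sm k) (hd : KernelDecay k) : Nice k where
  cont := hk.cont
  bdd := mat_bdd_s11 hd.1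
  int1 ζ := mat_integrableOn (hd.2.1 ζ)
  int2 z := mat_integrableOn (hd.2.2.1 z)
  lim1 ζ := mat_tendsto (hd.2.2.2.1 ζ)
  lim2 z := mat_tendsto (hd.2.2.2.2 z)

theorem shift_intOn' {g : ℝ → Mat m} (hg : Continuous g) (h : IntegrableOn g (Iic 0)) (x : ℝ) :
    IntegrableOn (fun ξ => g (ξ + x)) (Iic 0) := by
  have h1 : IntegrableOn g (Iic x) := by
    have h2 : IntegrableOn g (Icc 0 x) := hg.integrableOn_Icc
    refine (h.union h2).mono_set fun t ht => ?_
    rcases le_total t 0 with h0 | h0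
    · exact Or.inl h0
    · exact Or.inr ⟨h0, ht⟩
  have := (measurePreserving_add_right (volume : Measure ℝ) x).integrableOn_comp_preimage
    (measurableEmbedding_addRight x) (f := g) (s := Iic x)
  have h2 := this.2 h1
  simpa [Function.comp_def] using h2

theorem Nice.shift {k : Ker m} (hk : Nice k) (x : ℝ) : Nice (fun z ζ => k (z + x) (ζ + x)) where
  cont := hk.cont.comp (by fun_prop : Continuous fun v : ℝ × ℝ => (v.1 + x, v.2 + x))
  bdd := by
    obtain ⟨C, hC⟩ := hk.bdd
    exact ⟨C, fun z ζ => hC _ _⟩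
  int1 ζ := shift_intOn' (hk.c1 (ζ + x)) (hk.int1 (ζ + x)) x
  int2 z := shift_intOn' (hk.c2 (z + x)) (hk.int2 (z + x)) x
  lim1 ζ := (hk.lim1 (ζ + x)).comp (tendsto_atBot_add_const_right _ x tendsto_id)
  lim2 z := (hk.lim2 (z + x)).comp (tendsto_atBot_add_const_right _ x tendsto_id)

theorem D1.shift {k k' : Ker m} (h : D1 k k') (x : ℝ) :
    D1 (fun z ζ => k (z + x) (ζ + x)) (fun z ζ => k' (z + x) (ζ + x)) :=
  fun z ζ => (h (z + x) (ζ + x)).comp_add_const z x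

theorem D2.shift {k k' : Ker m} (h : D2 k k') (x : ℝ) :
    D2 (fun z ζ => k (z + x) (ζ + x)) (fun z ζ => k' (z + x) (ζ + x)) :=
  fun z ζ => (h (z + x) (ζ + x)).comp_add_const ζ x

theorem Nice.sub {k l : Ker m} (hk : Nice k) (hl : Nice l) : Nice (k - l) where
  cont := hk.cont.sub hl.cont
  bdd := by
    obtain ⟨C, hC⟩ := hk.bdd
    obtain ⟨C', hC'⟩ := hl.bdd
    exact ⟨C + C', fun z ζ => (norm_sub_le _ _).trans (add_le_add (hC z ζ) (hC' z ζ))⟩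
  int1 ζ := (hk.int1 ζ).sub (hl.int1 ζ)
  int2 z := (hk.int2 z).sub (hl.int2 z)
  lim1 ζ := by simpa using (hk.lim1 ζ).sub (hl.lim1 ζ)
  lim2 z := by simpa using (hk.lim2 z).sub (hl.lim2 z)

theorem conv_nice {k l : Ker m} (hk : Nice k) (hl : Nice l) : conv k l = cv k l := by
  ext1 z; ext1 ζ
  exact conv_eq (hk.mulInt hl z ζ)

/-- All data about a kernel family `q` used below. -/
structure QData (q q1 q2 q11 q22 : Ker m) : Prop where
  n : Nice q
  n1 : Nice q1
  n2 : Nice q2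
  n11 : Nice q11
  n22 : Nice q22
  d1 : D1 q q1
  d2 : D2 q q2
  d11 : D1 q1 q11
  d22 : D2 q2 q22

theorem QData.neg {q q1 q2 q11 q22 : Ker m} (h : QData q q1 q2 q11 q22) :
    QData (-q) (-q1) (-q2) (-q11) (-q22) :=
  ⟨h.n.neg, h.n1.neg, h.n2.neg, h.n11.neg, h.n22.neg, h.d1.neg, h.d2.neg, h.d11.neg, h.d22.neg⟩

theorem mat1 {q q1 q2 q11 q22 a a1 a2 a11 a22 b b1 b2 b11 b22 : Ker m}
    (hq : QData q q1 q2 q11 q22) (ha : QData a a1 a2 a11 a22) (hb : QData b b1 b2 b11 b22)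
    (ra : Res q a) (rb : Res (-q) b) (z ζ : ℝ) :
    vAv a (q1 - q2) b z ζ = - a2 z ζ - b1 z ζ - a z 0 * b 0 ζ := by
  have := mat_complete (m := m)
  have h := core1 hq.n hq.n1 hq.n2 ha.n hb.n hb.n1 hq.d1 hq.d2 ha.d2 hb.d1 ra.right
    (fun z ζ => by
      have := rb.left z ζ
      rw [cv_neg_left] at this
      rw [this]; simp [sub_eq_add_neg]) z ζ
  rw [← h.1]
  simp only [vAv, vA, aV]
  rw [conv_nice (hq.n1.sub hq.n2) hb.n]
  simp only [Pi.add_apply]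
  rw [conv_eq h.2]

theorem mat2 {q q1 q2 q11 q22 a a1 a2 a11 a22 : Ker m}
    (hq : QData q q1 q2 q11 q22) (ha : QData a a1 a2 a11 a22)
    (ra : Res q a) (z ζ : ℝ) :
    vAv a (q11 - q22) a z ζ = a11 z ζ - a22 z ζ + a z 0 * a1 0 ζ - a2 z 0 * a 0 ζ := by
  have := mat_complete (m := m)
  have h := core2 hq.n hq.n1 hq.n2 hq.n11 hq.n22 ha.n ha.n1 ha.n11 hq.d1 hq.d2 hq.d11 hq.d22
    ha.d1 ha.d2 ha.d11 ha.d22 ra.right ra.left z ζ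
  rw [← h.1]
  simp only [vAv, vA, aV]
  rw [conv_nice (hq.n11.sub hq.n22) ha.n]
  simp only [Pi.add_apply]
  rw [conv_eq h.2]

theorem qdata_of {k : Ker m} (hs : Sm k) (hd : ∀ a b, KernelDecay (pder a b k)) :
    QData k (pder 1 0 k) (pder 0 1 k) (pder 2 0 k) (pder 0 2 k) := by
  have h : ∀ a b, Nice (pder a b k) := fun a b => nice_of (hs.pder a b) (hd a b)
  have h0 := h 0 0
  have d1 := pder_D1 hs 0 0
  have d2 := pder_D2 hs 0
  rw [pder_zero] at h0 d1 d2
  exact ⟨h0, h 1 0, h 0 1, h 2 0, h 0 2, d1, d2, pder_D1 hs 1 0, pder_D2 hs 1⟩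

theorem qdata_shift {k k1 k2 k11 k22 : Ker m} (h : QData k k1 k2 k11 k22) (x : ℝ) :
    QData (fun z ζ => k (z + x) (ζ + x)) (fun z ζ => k1 (z + x) (ζ + x))
      (fun z ζ => k2 (z + x) (ζ + x)) (fun z ζ => k11 (z + x) (ζ + x))
      (fun z ζ => k22 (z + x) (ζ + x)) :=
  ⟨h.n.shift x, h.n1.shift x, h.n2.shift x, h.n11.shift x, h.n22.shift x,
    h.d1.shift x, h.d2.shift x, h.d11.shift x, h.d22.shift x⟩

theorem sm_slice {w : ℝ → Ker m}
    (h : ∀ i j : Fin m, ContDiff ℝ (⊤ : ℕ∞) (fun v : ℝ × ℝ × ℝ => w v.1 v.2.1 v.2.2 i j)) (x : ℝ) :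
    Sm (w x) := fun i j =>
  (h i j).comp (contDiff_const.prodMk (contDiff_fst.prodMk contDiff_snd) :
    ContDiff ℝ (⊤ : ℕ∞) fun v : ℝ × ℝ => (x, v.1, v.2))

/-- Everything about a family of resolvent kernels. -/
theorem family {q : Ker m} {w : ℝ → Ker m} (hqc : Continuous fun v : ℝ × ℝ => q v.1 v.2)
    (hqb : ∃ C, ∀ z ζ, ‖q z ζ‖ ≤ C)
    (h : ∀ i j : Fin m, ContDiff ℝ (⊤ : ℕ∞) (fun v : ℝ × ℝ × ℝ => w v.1 v.2.1 v.2.2 i j))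
    (hd : ∀ (n a b : ℕ) (x : ℝ), KernelDecay (pder a b (xder n w x)))
    (hr : ∀ x, Res (fun z ζ => q (z + x) (ζ + x)) (w x)) :
    ∃ f : ℝ × ℝ × ℝ → Mat m, ContDiff ℝ (⊤ : ℕ∞) f ∧ XEq f ∧ (∀ x z ζ, w x z ζ = f (x, z, ζ)) ∧
      ∀ x, QData (w x) (fun z ζ => pd ez f (x, z, ζ)) (fun z ζ => pd eζ f (x, z, ζ))
        (fun z ζ => pd ez (pd ez f) (x, z, ζ)) (fun z ζ => pd eζ (pd eζ f) (x, z, ζ)) := by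
  have := mat_complete (m := m)
  have hx0 : ∀ x, xder 0 w x = w x := by
    intro x; ext z ζ i j; simp [xder]
  have hQ : ∀ x, QData (w x) (pder 1 0 (w x)) (pder 0 1 (w x)) (pder 2 0 (w x)) (pder 0 2 (w x)) :=
    fun x => qdata_of (sm_slice h x) fun a b => by
      have := hd 0 a b x
      rwa [hx0] at this
  have hf : ContDiff ℝ (⊤ : ℕ∞) (fun v : ℝ × ℝ × ℝ => w v.1 v.2.1 v.2.2) := mat_contDiff h
  refine ⟨fun v => w v.1 v.2.1 v.2.2, hf, xeq hqc hqb (fun x => (hQ x).n) hf hr,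
    fun _ _ _ => rfl, fun x => ?_⟩
  have e1 : pder 1 0 (w x) = fun z ζ => pd ez (fun v => w v.1 v.2.1 v.2.2) (x, z, ζ) := by
    ext1 z; ext1 ζ
    exact ((hQ x).d1 z ζ).unique (hasD_z hf x z ζ)
  have e2 : pder 0 1 (w x) = fun z ζ => pd eζ (fun v => w v.1 v.2.1 v.2.2) (x, z, ζ) := by
    ext1 z; ext1 ζ
    exact ((hQ x).d2 z ζ).unique (hasD_ζ hf x z ζ)
  have e11 : pder 2 0 (w x) = fun z ζ => pd ez (pd ez (fun v => w v.1 v.2.1 v.2.2)) (x, z, ζ) := by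
    ext1 z; ext1 ζ
    have := (hQ x).d11 z ζ
    rw [e1] at this
    exact this.unique (hasD_z (pd_smooth hf ez) x z ζ)
  have e22 : pder 0 2 (w x) = fun z ζ => pd eζ (pd eζ (fun v => w v.1 v.2.1 v.2.2)) (x, z, ζ) := by
    ext1 z; ext1 ζ
    have := (hQ x).d22 z ζ
    rw [e2] at this
    exact this.unique (hasD_ζ (pd_smooth hf eζ) x z ζ)
  have := hQ x
  rwa [e1, e2, e11, e22] at this

theorem dxK_eq {K : ℝ → Ker m} {x z ζ : ℝ} {F : ℝ → Mat m} {R : Mat m}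
    (hK : ∀ x', K x' z ζ = F x') (hD : HasDerivAt F R x) : dxK K x z ζ = R := by
  ext i j
  have h1 : HasDerivAt (fun x' => F x' i j) (R i j) x :=
    (en i j).hasFDerivAt.comp_hasDerivAt x hD
  simp only [dxK, Matrix.of_apply, hK]
  exact h1.deriv

theorem main_aux_s11 (p : Ker m) (hp : IsScattering p)
    (wp wm : ℝ → Ker m) (hwp : IsResolventPlus p wp) (hwm : IsResolventMinus p wm)
    (x z ζ : ℝ) :
      ((wp x - wm x) z 0) * (symVAVd (wp x) (wm x) (pBr p x 1 0) 0 ζ)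
        - (symVAVd (wp x) (wm x) (pBr p x 1 0) z 0) * ((wp x - wm x) 0 ζ)
      =
      dxK (fun x' => brkVAVd (wp x') (wm x') (pBr p x' 1 0)) x z ζ
      - brkVAV (wp x) (wm x) (pBr p x 2 0) z ζ := by
  have := mat_complete (m := m)
  have hP := qdata_of hp.1 hp.2
  have hPs := fun x => qdata_shift hP x
  have p00 : ∀ x, pSh p x 0 0 = fun z ζ => p (z + x) (ζ + x) := by
    intro x; ext z ζ; simp [pSh, pder_zero]
  obtain ⟨wp1, wp2, wp3, wp4⟩ := hwp
  obtain ⟨wm1, wm2, wm3, wm4⟩ := hwm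
  have nice_w : ∀ (w : ℝ → Ker m)
      (h : ∀ i j : Fin m, ContDiff ℝ (⊤ : ℕ∞) (fun v : ℝ × ℝ × ℝ => w v.1 v.2.1 v.2.2 i j))
      (hd : ∀ (n a b : ℕ) (x : ℝ), KernelDecay (pder a b (xder n w x))) (x : ℝ), Nice (w x) := by
    intro w h hd x
    have hx0 : xder 0 w x = w x := by
      ext z ζ i j; simp [xder]
    have := hd 0 0 0 x
    rw [hx0, pder_zero] at this
    exact nice_of (sm_slice h x) this
  have np := nice_w wp wp1 wp2
  have nm := nice_w wm wm1 wm2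
  have rp : ∀ x, Res (fun z ζ => p (z + x) (ζ + x)) (wp x) := by
    intro x
    have a := wp3 x
    have b := wp4 x
    rw [p00, conv_nice (hPs x).n (np x)] at a
    rw [p00, conv_nice (np x) (hPs x).n] at b
    exact ⟨fun z ζ => congrFun (congrFun a z) ζ, fun z ζ => congrFun (congrFun b z) ζ⟩
  have rm : ∀ x, Res (-(fun z ζ => p (z + x) (ζ + x))) (wm x) := by
    intro x
    have a := wm3 x
    have b := wm4 x
    rw [p00, conv_nice (hPs x).n (nm x), sub_eq_add_neg, ← cv_neg_left] at a
    rw [p00, conv_nice (nm x) (hPs x).n, sub_eq_add_neg, ← cv_neg_right] at b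
    exact ⟨fun z ζ => congrFun (congrFun a z) ζ, fun z ζ => congrFun (congrFun b z) ζ⟩
  obtain ⟨f, hf, hfx, ef, Qf⟩ := family hP.n.cont hP.n.bdd wp1 wp2 rp
  obtain ⟨g, hg, hgx, eg, Qg⟩ := family (q := -p) hP.n.neg.cont hP.n.neg.bdd wm1 wm2 rm
  have v1 : ∀ x z ζ, vAv (wp x) (pBr p x 1 0) (wm x) z ζ =
      - pd eζ f (x, z, ζ) - pd ez g (x, z, ζ) - f (x, z, 0) * g (x, 0, ζ) := by
    intro x z ζ
    have := mat1 (hPs x) (Qf x) (Qg x) (rp x) (rm x) z ζ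
    rw [ef, eg] at this
    exact this
  have v2 : ∀ x z ζ, vAv (wm x) (-(pBr p x 1 0)) (wp x) z ζ =
      - pd eζ g (x, z, ζ) - pd ez f (x, z, ζ) - g (x, z, 0) * f (x, 0, ζ) := by
    intro x z ζ
    have := mat1 (hPs x).neg (Qg x) (Qf x) (rm x) (by rw [neg_neg]; exact rp x) z ζ
    rw [ef, eg, neg_sub_neg, ← neg_sub] at this
    exact this
  have v3 : vAv (wp x) (pBr p x 2 0) (wp x) z ζ =
      pd ez (pd ez f) (x, z, ζ) - pd eζ (pd eζ f) (x, z, ζ) + f (x, z, 0) * pd ez f (x, 0, ζ)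
            - pd eζ f (x, z, 0) * f (x, 0, ζ) := by
    have := mat2 (hPs x) (Qf x) (rp x) z ζ
    rw [ef, ef] at this
    exact this
  have v4 : vAv (wm x) (-(pBr p x 2 0)) (wm x) z ζ =
      pd ez (pd ez g) (x, z, ζ) - pd eζ (pd eζ g) (x, z, ζ) + g (x, z, 0) * pd ez g (x, 0, ζ)
            - pd eζ g (x, z, 0) * g (x, 0, ζ) := by
    have := mat2 (hPs x).neg (Qg x) (rm x) z ζ
    rw [eg, eg, neg_sub_neg, ← neg_sub] at this
    exact this
  have hD := final hf hg hfx hgx x z ζ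
  rw [dxK_eq (fun x' => by
    simp only [brkVAVd, Pi.sub_apply]
    rw [v1, v2]) hD]
  simp only [symVAVd, brkVAV, Pi.sub_apply, Pi.add_apply]
  rw [v1, v1, v2, v2, v3, v4, ef, ef, eg, eg]
  abel

end MatBridge

end NCKP

namespace NCKP

/-- **The lifted mKP constraint identity (equation (4.4)):**
`ad_{[V]}{V P_{[1,0]} V†} = ∂_x[V P_{[1,0]} V†] − [V P_{[2,0]} V]`
for a scattering function `p` and resolvent kernels `w₊`, `w₋` for `p`. -/
theorem lifted_mKP_constraint {m : ℕ} (p : Ker m) (hp : IsScattering p)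
    (wp wm : ℝ → Ker m) (hwp : IsResolventPlus p wp) (hwm : IsResolventMinus p wm)
    (x : ℝ) :
    ∀ z ∈ Set.Iic (0:ℝ), ∀ ζ ∈ Set.Iic (0:ℝ),
      ((wp x - wm x) z 0) * (symVAVd (wp x) (wm x) (pBr p x 1 0) 0 ζ)
        - (symVAVd (wp x) (wm x) (pBr p x 1 0) z 0) * ((wp x - wm x) 0 ζ)
      =
      dxK (fun x' => brkVAVd (wp x') (wm x') (pBr p x' 1 0)) x z ζ
      - brkVAV (wp x) (wm x) (pBr p x 2 0) z ζ := by
  intro z _ ζ _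
  exact main_aux_s11 p hp wp wm hwp hwm x z ζ

end NCKP
end
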